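/- Let m ≥ 2 be an integer and let f(t,x;τ,ξ) be a polynomial of degree m+1 in (τ,ξ) ∈ ℝ×ℝⁿ whose coefficients are real-analytic on an open set U ⊂ ℝ×ℝⁿ, with homogeneous decomposition f = Σ_{l=0}^{m+1} f_l. Let ψ be real-analytic with Σ = {(t,x)∈U : t=ψ(x)}, and assume for a nonzero constant a that 0 ≠ 1 − |∇ψ(x)|² = ((−m+1)^m·a^m/m^{m−1})·f_{m+1}(ψ(x),x;−1,∇ψ(x)) and f_m(ψ(x),x;−1,∇ψ(x)) = 0 for all relevant x. Then there exist an open neighborhood Ω of Σ and a function w(s,x), real-analytic in a neighborhood of {0}×{x}, such that u(t,x) = a·(t−ψ(x))^{(m−1)/m} + (t−ψ(x))·w((t−ψ(x))^{1/m}, x) is a real-analytic solution of u_tt − Δu = f(t,x;∂_t u,∇u) on Ω ∩ {t > ψ(x)}; consequently u(t,x) ∼ a·(t−ψ(x))^{(m−1)/m} (vanishing) and ∂_t u(t,x) ∼ a·((m−1)/m)·(t−ψ(x))^{−1/m} (blow-up) as t−ψ(x) → 0⁺, and u is analytic in ((t−ψ)^{1/m}, x) with no logarithm involved. -/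

import Mathlib

open Real Filter

/-- partial derivative in `t` of a function `u(t,x)` -/
noncomputable def ptd {n : ℕ} (u : ℝ → (Fin n → ℝ) → ℝ) (t : ℝ) (x : Fin n → ℝ) : ℝ :=
  deriv (fun s => u s x) t

/-- partial derivative in `x i` of a function `u(t,x)` -/
noncomputable def pxd {n : ℕ} (i : Fin n) (u : ℝ → (Fin n → ℝ) → ℝ) (t : ℝ)
    (x : Fin n → ℝ) : ℝ :=
  deriv (fun y => u t (Function.update x i y)) (x i)

/-- Laplacian in `x` of a function `u(t,x)` -/
noncomputable def lapx {n : ℕ} (u : ℝ → (Fin n → ℝ) → ℝ) (t : ℝ) (x : Fin n → ℝ) : ℝ :=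
  ∑ i, pxd i (pxd i u) t x

/-- gradient in `x` of a function `u(t,x)` -/
noncomputable def gradx {n : ℕ} (u : ℝ → (Fin n → ℝ) → ℝ) (t : ℝ) (x : Fin n → ℝ) :
    Fin n → ℝ :=
  fun i => pxd i u t x

/-- gradient of a function of `x` alone -/
noncomputable def gradp {n : ℕ} (ψ : (Fin n → ℝ) → ℝ) (x : Fin n → ℝ) : Fin n → ℝ :=
  fun i => deriv (fun y => ψ (Function.update x i y)) (x i)

/-- `g(t,x;τ,ξ)` is a polynomial homogeneous of degree `l` in `(τ,ξ) ∈ ℝ × ℝⁿ` whose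
coefficients are real-analytic functions of `(t,x)` on `U`. -/
def HomogPoly {n : ℕ} (l : ℕ) (U : Set (ℝ × (Fin n → ℝ)))
    (g : ℝ → (Fin n → ℝ) → ℝ → (Fin n → ℝ) → ℝ) : Prop :=
  ∃ c : (Fin l → Fin (n + 1)) → ℝ → (Fin n → ℝ) → ℝ,
    (∀ μ, AnalyticOnNhd ℝ (fun p : ℝ × (Fin n → ℝ) => c μ p.1 p.2) U) ∧
    ∀ t x τ ξ, g t x τ ξ =
      ∑ μ : Fin l → Fin (n + 1), c μ t x * ∏ k, (Fin.cons τ ξ : Fin (n + 1) → ℝ) (μ k)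

/-- `u` solves the wave equation `u_tt - Δu = Σ_{l=0}^{m+1} f_l(t,x; ∂_t u, ∇u)`
at every point of `S`. -/
def SolvesWaveSum {n : ℕ} (m : ℕ) (F : ℕ → ℝ → (Fin n → ℝ) → ℝ → (Fin n → ℝ) → ℝ)
    (u : ℝ → (Fin n → ℝ) → ℝ) (S : Set (ℝ × (Fin n → ℝ))) : Prop :=
  ∀ t x, (t, x) ∈ S →
    ptd (ptd u) t x - lapx u t x =
      ∑ l ∈ Finset.range (m + 2), F l t x (ptd u t x) (gradx u t x)

/-! In the coordinate `σ = (t - ψ x) ^ (1 / m)` the derivatives of the ansatz are `∂ₜ u = p / σ` and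
`∇ u = q / σ` with `p`, `q` analytic, so after multiplication by `σ ^ (m + 1)` the wave equation is
an analytic equation for `w`. The condition on `f (m + 1)` cancels the terms of order `σ ^ 0`, the
condition on `f m` cancels the term of order `σ` that does not involve `w`, and what is left is
`γ σ ((θ + m) (θ + m + 1) w - σ H (w)) = 0` with `θ = σ ∂_σ` and `γ = (1 - |∇ψ|²) / m ^ 2 ≠ 0`.
No nonnegative integer is a root of the indicial polynomial `(k + m) (k + m + 1)`, so this Fuchsian
equation has exactly one power series solution; it is the fixed point of a contraction in a weighted
`ℓ¹` norm of coefficients, hence converges. Uniqueness glues the local solutions along `Σ`. -/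

section MultiPow

open Finset

variable {ι R : Type*} [Fintype ι] [CommMonoid R]

/-- The multi-index power `y ^ β = ∏ i, y i ^ β i`. -/
def multiPow (y : ι → R) (β : ι →₀ ℕ) : R := ∏ i, y i ^ β i

lemma multiPow_zero_right (y : ι → R) : multiPow y 0 = 1 := by simp [multiPow]

lemma multiPow_add (y : ι → R) (β γ : ι →₀ ℕ) :
    multiPow y (β + γ) = multiPow y β * multiPow y γ := by
  simp [multiPow, pow_add, prod_mul_distrib]

lemma multiPow_single (y : ι → R) (μ : ι) : multiPow y (Finsupp.single μ 1) = y μ := by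
  rw [multiPow, prod_eq_single μ (fun i _ hi => by simp [Finsupp.single_eq_of_ne hi]) (by simp)]
  simp

lemma multiPow_sum {κ : Type*} (y : ι → R) (s : Finset κ) (β : κ → ι →₀ ℕ) :
    multiPow y (∑ j ∈ s, β j) = ∏ j ∈ s, multiPow y (β j) := by
  classical
  induction s using Finset.induction_on with
  | empty => simp [multiPow_zero_right]
  | insert j s hj ih => rw [sum_insert hj, prod_insert hj, multiPow_add, ih]

lemma multiPow_update [DecidableEq ι] (y : ι → R) (μ : ι) (t : R) (β : ι →₀ ℕ) :
    multiPow (Function.update y μ t) β = t ^ β μ * ∏ i ∈ univ.erase μ, y i ^ β i := by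
  rw [multiPow, ← mul_prod_erase _ _ (mem_univ μ), Function.update_self]
  congr 1
  exact prod_congr rfl fun i hi => by rw [Function.update_of_ne (ne_of_mem_erase hi)]

lemma multiPow_zero_left {R : Type*} [CommMonoidWithZero R] {β : ι →₀ ℕ} (hβ : β ≠ 0) :
    multiPow (0 : ι → R) β = 0 := by
  obtain ⟨μ, hμ⟩ := Finsupp.ne_iff.1 hβ
  exact prod_eq_zero (mem_univ μ) (zero_pow hμ)

lemma norm_multiPow_le {𝕜 : Type*} [NormedField 𝕜] {y : ι → 𝕜} {ρ : ℝ} (hy : ‖y‖ ≤ ρ)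
    (β : ι →₀ ℕ) : ‖multiPow y β‖ ≤ ρ ^ β.degree := by
  rw [multiPow, norm_prod, Finsupp.degree_eq_sum, ← prod_pow_eq_pow_sum]
  refine prod_le_prod (fun _ _ => norm_nonneg _) fun i _ => ?_
  rw [norm_pow]
  exact pow_le_pow_left₀ (norm_nonneg _) ((norm_le_pi_norm y i).trans hy) _

lemma hasDerivAt_multiPow_update [DecidableEq ι] {𝕜 : Type*} [NontriviallyNormedField 𝕜]
    (y : ι → 𝕜) (μ : ι) (t : 𝕜) (β : ι →₀ ℕ) :
    HasDerivAt (fun s => multiPow (Function.update y μ s) β)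
      (β μ * multiPow (Function.update y μ t) (β - Finsupp.single μ 1)) t := by
  simp only [multiPow_update]
  refine ((hasDerivAt_pow (β μ) t).mul_const (∏ i ∈ univ.erase μ, y i ^ β i)).congr_deriv ?_
  rw [mul_assoc, Finsupp.tsub_apply, Finsupp.single_eq_same]
  congr 2
  exact prod_congr rfl fun i hi => by simp [Finsupp.single_eq_of_ne (ne_of_mem_erase hi)]

end MultiPow

section PartialDeriv

variable {𝕜 ι : Type*} [NontriviallyNormedField 𝕜] [DecidableEq ι]

/-- The partial derivative of `g` in the coordinate direction `μ`. -/
noncomputable def partialDeriv (μ : ι) (g : (ι → 𝕜) → 𝕜) (y : ι → 𝕜) : 𝕜 :=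
  fderiv 𝕜 g y (Pi.single μ 1)

lemma hasDerivAt_partialDeriv [Finite ι] (μ : ι) {g : (ι → 𝕜) → 𝕜} {y : ι → 𝕜}
    (hg : DifferentiableAt 𝕜 g y) :
    HasDerivAt (fun s => g (Function.update y μ s)) (partialDeriv μ g y) (y μ) := by
  have := Fintype.ofFinite ι
  refine HasFDerivAt.comp_hasDerivAt (l := g) (y μ) ?_ (hasDerivAt_update y μ (y μ))
  rw [Function.update_eq_self]
  exact hg.hasFDerivAt

lemma analyticAt_partialDeriv [Fintype ι] [CompleteSpace 𝕜] {g : (ι → 𝕜) → 𝕜} {y : ι → 𝕜}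
    (hg : AnalyticAt 𝕜 g y) (μ : ι) : AnalyticAt 𝕜 (partialDeriv μ g) y :=
  ((ContinuousLinearMap.apply 𝕜 𝕜 (Pi.single μ (1 : 𝕜) : ι → 𝕜)).analyticAt _).comp hg.fderiv

lemma partialDeriv_eq_zero_of_update_eq [Finite ι] {μ : ι} {g : (ι → 𝕜) → 𝕜} {y : ι → 𝕜}
    (h : ∀ s, g (Function.update y μ s) = g y) : partialDeriv μ g y = 0 := by
  by_cases hg : DifferentiableAt 𝕜 g y
  · have hderiv := hasDerivAt_partialDeriv μ hg
    simp only [h] at hderiv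
    exact hderiv.unique (hasDerivAt_const _ _)
  · rw [partialDeriv, fderiv_zero_of_not_differentiableAt hg]
    rfl

end PartialDeriv

section FormalPartialDeriv

open MvPowerSeries

variable {𝕜 ι : Type*} [NormedField 𝕜]

lemma coeff_pderiv_mul (f : MvPowerSeries ι 𝕜) (μ : ι) (φ : (ι →₀ ℕ) → 𝕜) :
    (fun γ => coeff γ (pderiv 𝕜 μ f) * φ γ) =
      (fun β : ι →₀ ℕ => coeff β f * (β μ * φ (β - Finsupp.single μ 1))) ∘
        (· + Finsupp.single μ 1) := by
  funext γ
  simp [coeff_pderiv, mul_assoc]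

lemma apply_eq_zero_of_notMem_range_add_single {β : ι →₀ ℕ} {μ : ι}
    (hβ : β ∉ Set.range (· + Finsupp.single μ 1 : (ι →₀ ℕ) → ι →₀ ℕ)) : β μ = 0 :=
  of_not_not fun h => hβ ⟨_, Finsupp.sub_add_single_one_cancel h⟩

lemma hasSum_coeff_pderiv_mul_iff (f : MvPowerSeries ι 𝕜) (μ : ι) (φ : (ι →₀ ℕ) → 𝕜) {s : 𝕜} :
    HasSum (fun γ => coeff γ (pderiv 𝕜 μ f) * φ γ) s ↔
      HasSum (fun β : ι →₀ ℕ => coeff β f * (β μ * φ (β - Finsupp.single μ 1))) s := by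
  rw [coeff_pderiv_mul]
  exact (add_left_injective _).hasSum_iff fun β hβ => by
    simp [apply_eq_zero_of_notMem_range_add_single hβ]

-- `n + 1 ≤ 2 ^ n` absorbs the factor produced by the derivative into the halving of the radius.
lemma summable_norm_coeff_pderiv {𝕜 : Type*} [RCLike 𝕜] {f : MvPowerSeries ι 𝕜} {ρ : ℝ} (hρ : 0 < ρ)
    (hf : Summable fun β : ι →₀ ℕ => ‖coeff β f‖ * ρ ^ β.degree) (μ : ι) :
    Summable fun β : ι →₀ ℕ => ‖coeff β (pderiv 𝕜 μ f)‖ * (ρ / 2) ^ β.degree := by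
  have hshift := (hf.comp_injective (add_left_injective (Finsupp.single μ 1))).mul_left ρ⁻¹
  refine hshift.of_nonneg_of_le (fun β => by positivity) fun γ => ?_
  have hγ : (γ μ : ℝ) + 1 ≤ 2 ^ γ.degree := by
    exact_mod_cast (Nat.succ_le_succ (Finsupp.le_degree μ γ)).trans Nat.lt_two_pow_self
  have hcast : ‖(γ μ : 𝕜) + 1‖ = γ μ + 1 := by
    rw [← Nat.cast_succ, RCLike.norm_natCast, Nat.cast_succ]
  simp only [Function.comp_apply, coeff_pderiv, norm_mul, hcast, map_add, Finsupp.degree_single]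
  calc ‖coeff (γ + Finsupp.single μ 1) f‖ * (γ μ + 1) * (ρ / 2) ^ γ.degree
      ≤ ‖coeff (γ + Finsupp.single μ 1) f‖ * 2 ^ γ.degree * (ρ / 2) ^ γ.degree := by gcongr
    _ = ρ⁻¹ * (‖coeff (γ + Finsupp.single μ 1) f‖ * ρ ^ (γ.degree + 1)) := by
        rw [div_pow, pow_succ]
        field_simp

end FormalPartialDeriv

section MvPowerSeriesExpansion

open MvPowerSeries Topology

lemma summable_norm_coeff_mul {𝕜 ι : Type*} [NormedField 𝕜] {f f' : MvPowerSeries ι 𝕜} {ρ : ℝ}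
    (hρ : 0 ≤ ρ) (hf : Summable fun β : ι →₀ ℕ => ‖coeff β f‖ * ρ ^ β.degree)
    (hf' : Summable fun β : ι →₀ ℕ => ‖coeff β f'‖ * ρ ^ β.degree) :
    Summable fun β : ι →₀ ℕ => ‖coeff β (f * f')‖ * ρ ^ β.degree := by
  classical
  have hprod := summable_sum_mul_antidiagonal_of_summable_mul
    (f := fun β : ι →₀ ℕ => ‖coeff β f‖ * ρ ^ β.degree)
    (g := fun β : ι →₀ ℕ => ‖coeff β f'‖ * ρ ^ β.degree)
    (hf.mul_of_nonneg hf' (fun β => by positivity) fun β => by positivity)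
  refine hprod.of_nonneg_of_le (fun β => by positivity) fun β => ?_
  rw [coeff_mul]
  refine (mul_le_mul_of_nonneg_right (norm_sum_le _ _) (by positivity)).trans_eq ?_
  rw [Finset.sum_mul]
  refine Finset.sum_congr rfl fun p hp => ?_
  rw [← Finset.HasAntidiagonal.mem_antidiagonal.1 hp, norm_mul, map_add, pow_add, mul_mul_mul_comm]

variable {𝕜 ι : Type*} [RCLike 𝕜] [Fintype ι]

/-- `g` is the sum of the power series `f` centred at `b`, absolutely on the closed sup-norm ball
of radius `ρ`. -/
structure HasMvPowerSeriesOnClosedBall (g : (ι → 𝕜) → 𝕜) (f : MvPowerSeries ι 𝕜) (b : ι → 𝕜)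
    (ρ : ℝ) : Prop where
  pos : 0 < ρ
  summable : Summable fun β : ι →₀ ℕ => ‖coeff β f‖ * ρ ^ β.degree
  hasSum : ∀ y : ι → 𝕜, ‖y‖ ≤ ρ → HasSum (fun β => coeff β f * multiPow y β) (g (b + y))

/-- `g` is represented near `b` by the absolutely convergent power series `f`. This is the
commutative counterpart of `HasFPowerSeriesAt`, which gives access to single coefficients. -/
def HasMvPowerSeriesAt (g : (ι → 𝕜) → 𝕜) (f : MvPowerSeries ι 𝕜) (b : ι → 𝕜) : Prop :=
  ∃ ρ, HasMvPowerSeriesOnClosedBall g f b ρ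

variable {g g' : (ι → 𝕜) → 𝕜} {f f' : MvPowerSeries ι 𝕜} {b : ι → 𝕜} {ρ ρ' : ℝ}

namespace HasMvPowerSeriesOnClosedBall

lemma mono (h : HasMvPowerSeriesOnClosedBall g f b ρ) (hρ' : 0 < ρ') (hle : ρ' ≤ ρ) :
    HasMvPowerSeriesOnClosedBall g f b ρ' where
  pos := hρ'
  summable := h.summable.of_nonneg_of_le (fun β => by positivity) fun β => by gcongr
  hasSum y hy := h.hasSum y (hy.trans hle)

lemma summable_norm (h : HasMvPowerSeriesOnClosedBall g f b ρ) {y : ι → 𝕜} (hy : ‖y‖ ≤ ρ) :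
    Summable fun β => ‖coeff β f * multiPow y β‖ :=
  h.summable.of_nonneg_of_le (fun β => norm_nonneg _) fun β => by
    rw [norm_mul]
    exact mul_le_mul_of_nonneg_left (norm_multiPow_le hy β) (norm_nonneg _)

lemma congr (h : HasMvPowerSeriesOnClosedBall g f b ρ)
    (hg : Set.EqOn g g' (Metric.closedBall b ρ)) :
    HasMvPowerSeriesOnClosedBall g' f b ρ where
  pos := h.pos
  summable := h.summable
  hasSum y hy := hg (x := b + y) (by simpa using hy) ▸ h.hasSum y hy

lemma add (h : HasMvPowerSeriesOnClosedBall g f b ρ)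
    (h' : HasMvPowerSeriesOnClosedBall g' f' b ρ) :
    HasMvPowerSeriesOnClosedBall (g + g') (f + f') b ρ where
  pos := h.pos
  summable := by
    have hρ := h.pos
    refine (h.summable.add h'.summable).of_nonneg_of_le (fun β => by positivity) fun β => ?_
    rw [map_add, ← add_mul]
    gcongr
    exact norm_add_le _ _
  hasSum y hy := by simpa [add_mul] using (h.hasSum y hy).add (h'.hasSum y hy)

lemma mul (h : HasMvPowerSeriesOnClosedBall g f b ρ)
    (h' : HasMvPowerSeriesOnClosedBall g' f' b ρ) :
    HasMvPowerSeriesOnClosedBall (g * g') (f * f') b ρ where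
  pos := h.pos
  summable := summable_norm_coeff_mul h.pos.le h.summable h'.summable
  hasSum y hy := by
    classical
    have hsum := summable_mul_of_summable_norm (h.summable_norm hy) (h'.summable_norm hy)
    have hprod := (summable_sum_mul_antidiagonal_of_summable_mul
      (f := fun β => coeff β f * multiPow y β) (g := fun β => coeff β f' * multiPow y β)
      hsum).hasSum
    rw [← (h.hasSum y hy).summable.tsum_mul_tsum_eq_tsum_sum_antidiagonal
      (h'.hasSum y hy).summable hsum, (h.hasSum y hy).tsum_eq, (h'.hasSum y hy).tsum_eq] at hprod
    refine hprod.congr_fun fun β => ?_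
    rw [coeff_mul, Finset.sum_mul]
    refine Finset.sum_congr rfl fun p hp => ?_
    rw [← Finset.HasAntidiagonal.mem_antidiagonal.1 hp, multiPow_add, mul_mul_mul_comm]

lemma neg (h : HasMvPowerSeriesOnClosedBall g f b ρ) :
    HasMvPowerSeriesOnClosedBall (-g) (-f) b ρ where
  pos := h.pos
  summable := by simpa using h.summable
  hasSum y hy := by simpa using (h.hasSum y hy).neg

lemma const_smul (h : HasMvPowerSeriesOnClosedBall g f b ρ) (c : 𝕜) :
    HasMvPowerSeriesOnClosedBall (c • g) (c • f) b ρ where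
  pos := h.pos
  summable := (h.summable.mul_left ‖c‖).congr fun β => by rw [coeff_smul, norm_mul, mul_assoc]
  hasSum y hy := ((h.hasSum y hy).mul_left c).congr_fun fun β => by rw [coeff_smul, mul_assoc]

lemma coeff_zero (h : HasMvPowerSeriesOnClosedBall g f b ρ) : coeff 0 f = g b := by
  have hval := h.hasSum 0 (by simpa using h.pos.le)
  have hsingle := hasSum_single (f := fun β => coeff β f * multiPow (0 : ι → 𝕜) β) 0
    fun β hβ => by rw [multiPow_zero_left hβ, mul_zero]
  simpa [multiPow_zero_right] using hsingle.unique hval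

end HasMvPowerSeriesOnClosedBall

lemma exists_sum_single_eq {ι : Type*} {β : ι →₀ ℕ} {k : ℕ} (hβ : β.degree = k) :
    ∃ v : Fin k → ι, ∑ j, Finsupp.single (v j) 1 = β := by
  induction k generalizing β with
  | zero => exact ⟨Fin.elim0, by simp [(Finsupp.degree_eq_zero_iff β).1 hβ]⟩
  | succ k ih =>
    obtain ⟨μ, hμ⟩ := Finsupp.ne_iff.1
      (fun h : β = 0 => absurd (hβ.symm.trans ((Finsupp.degree_eq_zero_iff β).2 h)) k.succ_ne_zero)
    have hsub := Finsupp.sub_add_single_one_cancel hμ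
    obtain ⟨v, hv⟩ := ih (β := β - Finsupp.single μ 1) (by
      rw [← hsub, map_add, Finsupp.degree_single] at hβ
      exact Nat.succ_injective hβ)
    exact ⟨Fin.cons μ v, by simpa [Fin.sum_univ_succ, hv, add_comm] using hsub⟩

lemma exists_multilinear_eq_multiPow (β : ι →₀ ℕ) {k : ℕ} (hβ : β.degree = k) :
    ∃ M : ContinuousMultilinearMap 𝕜 (fun _ : Fin k => ι → 𝕜) 𝕜, ‖M‖ ≤ 1 ∧
      ∀ y, M (fun _ => y) = multiPow y β := by
  obtain ⟨v, rfl⟩ := exists_sum_single_eq hβ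
  refine ⟨(ContinuousMultilinearMap.mkPiAlgebra 𝕜 (Fin k) 𝕜).compContinuousLinearMap
    fun j => ContinuousLinearMap.proj (v j), ?_, fun y => ?_⟩
  · refine ContinuousMultilinearMap.opNorm_le_bound zero_le_one fun w => ?_
    simp only [ContinuousMultilinearMap.compContinuousLinearMap_apply,
      ContinuousMultilinearMap.mkPiAlgebra_apply, norm_prod, one_mul]
    exact Finset.prod_le_prod (fun _ _ => norm_nonneg _) fun j _ => norm_le_pi_norm (w j) _
  · simp [multiPow_sum, multiPow_single]

lemma HasMvPowerSeriesOnClosedBall.analyticAt (h : HasMvPowerSeriesOnClosedBall g f b ρ) :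
    AnalyticAt 𝕜 g b := by
  choose M hM_norm hM using fun k (β : {β : ι →₀ ℕ // β.degree = k}) =>
    exists_multilinear_eq_multiPow (𝕜 := 𝕜) β.1 β.2
  have (k : ℕ) : Fintype {β : ι →₀ ℕ // β.degree = k} := (Finsupp.finite_of_degree_eq k).fintype
  let p : FormalMultilinearSeries 𝕜 (ι → 𝕜) 𝕜 := fun k =>
    ∑ β : {β : ι →₀ ℕ // β.degree = k}, coeff β.1 f • M k β
  have hρ := h.pos
  refine ⟨p, ENNReal.ofReal ρ, ?_, by simpa using hρ, fun {y} hy => ?_⟩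
  · refine p.le_radius_of_bound (r := ρ.toNNReal) (∑' β : ι →₀ ℕ, ‖coeff β f‖ * ρ ^ β.degree)
      fun k => ?_
    rw [Real.coe_toNNReal _ hρ.le]
    calc ‖p k‖ * ρ ^ k ≤ (∑ β : {β : ι →₀ ℕ // β.degree = k}, ‖coeff β.1 f‖) * ρ ^ k := by
          gcongr
          refine norm_sum_le_of_le _ fun β _ => ?_
          rw [norm_smul]
          exact mul_le_of_le_one_right (norm_nonneg _) (hM_norm k β)
      _ = ∑ β : {β : ι →₀ ℕ // β.degree = k}, ‖coeff β.1 f‖ * ρ ^ β.1.degree := by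
          rw [Finset.sum_mul]
          exact Finset.sum_congr rfl fun β _ => by rw [β.2]
      _ = ∑ β ∈ Finset.univ.map (Function.Embedding.subtype fun β : ι →₀ ℕ => β.degree = k),
            ‖coeff β f‖ * ρ ^ β.degree := by
          rw [Finset.sum_map]
          rfl
      _ ≤ _ := h.summable.sum_le_tsum _ fun β _ => by positivity
  · have hyρ : ‖y‖ ≤ ρ := by
      rw [mem_eball_zero_iff, ← ofReal_norm, ENNReal.ofReal_lt_ofReal_iff hρ] at hy
      exact hy.le
    refine ((Equiv.sigmaFiberEquiv fun β : ι →₀ ℕ => β.degree).hasSum_iff.2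
      (h.hasSum y hyρ)).sigma fun k => ?_
    have hpk : p k (fun _ => y) = ∑ β : {β : ι →₀ ℕ // β.degree = k},
        coeff β.1 f * multiPow y β.1 := by simp [p, hM]
    rw [hpk]
    exact hasSum_fintype _

lemma norm_update_le [DecidableEq ι] {y : ι → 𝕜} {r : ℝ} {t : 𝕜} (hy : ‖y‖ ≤ r) (ht : ‖t‖ ≤ r)
    (μ : ι) : ‖Function.update y μ t‖ ≤ r := by
  refine (pi_norm_le_iff_of_nonneg ((norm_nonneg t).trans ht)).2 fun i => ?_
  rcases eq_or_ne i μ with rfl | hi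
  · rwa [Function.update_self]
  · rw [Function.update_of_ne hi]
    exact (norm_le_pi_norm y i).trans hy

namespace HasMvPowerSeriesOnClosedBall

lemma hasSum_partialDeriv [DecidableEq ι] (h : HasMvPowerSeriesOnClosedBall g f b ρ) (μ : ι)
    {y : ι → 𝕜} (hy : ‖y‖ < ρ / 2) (hg : DifferentiableAt 𝕜 g (b + y)) :
    HasSum (fun β => coeff β (pderiv 𝕜 μ f) * multiPow y β) (partialDeriv μ g (b + y)) := by
  have hρ := h.pos
  let term (s : 𝕜) (β : ι →₀ ℕ) : 𝕜 :=
    coeff β f * (β μ * multiPow (Function.update y μ s) (β - Finsupp.single μ 1))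
  have hbound : Summable fun β : ι →₀ ℕ =>
      ‖coeff β f * (β μ * ((ρ / 2 : ℝ) : 𝕜) ^ (β - Finsupp.single μ 1).degree)‖ := by
    refine summable_norm_iff.2 (((hasSum_coeff_pderiv_mul_iff f μ fun β =>
      ((ρ / 2 : ℝ) : 𝕜) ^ β.degree).1 (Summable.hasSum (summable_norm_iff.1 ?_))).summable)
    simpa [abs_of_pos hρ] using summable_norm_coeff_pderiv hρ h.summable μ
  have hterm (β : ι →₀ ℕ) (s : 𝕜) (hs : s ∈ Metric.ball 0 (ρ / 2)) : ‖term s β‖ ≤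
      ‖coeff β f * (β μ * ((ρ / 2 : ℝ) : 𝕜) ^ (β - Finsupp.single μ 1).degree)‖ := by
    have := norm_multiPow_le (norm_update_le hy.le (mem_ball_zero_iff.1 hs).le μ)
      (β - Finsupp.single μ 1)
    simp only [term, norm_mul, norm_pow, RCLike.norm_ofReal, abs_of_pos (half_pos hρ)]
    gcongr
  have hmem {s : 𝕜} (hs : s ∈ Metric.ball 0 (ρ / 2)) : ‖Function.update y μ s‖ ≤ ρ :=
    (norm_update_le hy.le (mem_ball_zero_iff.1 hs).le μ).trans (by linarith)
  have hyμ : y μ ∈ Metric.ball 0 (ρ / 2) :=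
    mem_ball_zero_iff.2 ((norm_le_pi_norm y μ).trans_lt hy)
  have htsum := hasDerivAt_tsum_of_isPreconnected hbound Metric.isOpen_ball
    (convex_ball (0 : 𝕜) (ρ / 2)).isPreconnected
    (fun β s _ => (hasDerivAt_multiPow_update y μ s β).const_mul _) hterm hyμ
    (h.hasSum _ (hmem hyμ)).summable hyμ
  have hg' : HasDerivAt (fun s => g (b + Function.update y μ s)) (partialDeriv μ g (b + y)) (y μ) :=
    HasFDerivAt.comp_hasDerivAt (l := g) _ (by simpa using hg.hasFDerivAt)
      ((hasDerivAt_update y μ (y μ)).const_add b)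
  have hval := hg'.unique (htsum.congr_of_eventuallyEq (by
    filter_upwards [Metric.isOpen_ball.mem_nhds hyμ] with s hs
    exact (h.hasSum _ (hmem hs)).tsum_eq.symm))
  simp only [Function.update_eq_self] at hval
  rw [hasSum_coeff_pderiv_mul_iff, hval]
  exact (Summable.of_norm_bounded hbound fun β => by
    simpa [term] using hterm β _ hyμ).hasSum

end HasMvPowerSeriesOnClosedBall

namespace HasMvPowerSeriesAt

lemma congr (h : HasMvPowerSeriesAt g f b) (hg : g =ᶠ[𝓝 b] g') : HasMvPowerSeriesAt g' f b := by
  obtain ⟨ρ, h⟩ := h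
  obtain ⟨ε, hε, hball⟩ := Metric.nhds_basis_closedBall.eventually_iff.1 hg
  exact ⟨min ρ ε, (h.mono (lt_min h.pos hε) (min_le_left _ _)).congr fun y hy =>
    hball (Metric.closedBall_subset_closedBall (min_le_right _ _) hy)⟩

lemma exists_common (h : HasMvPowerSeriesAt g f b) (h' : HasMvPowerSeriesAt g' f' b) :
    ∃ ρ, HasMvPowerSeriesOnClosedBall g f b ρ ∧ HasMvPowerSeriesOnClosedBall g' f' b ρ := by
  obtain ⟨ρ, h⟩ := h
  obtain ⟨ρ', h'⟩ := h'
  have hmin := lt_min h.pos h'.pos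
  exact ⟨min ρ ρ', h.mono hmin (min_le_left _ _), h'.mono hmin (min_le_right _ _)⟩

lemma add (h : HasMvPowerSeriesAt g f b) (h' : HasMvPowerSeriesAt g' f' b) :
    HasMvPowerSeriesAt (g + g') (f + f') b :=
  (h.exists_common h').imp fun _ hρ => hρ.1.add hρ.2

lemma mul (h : HasMvPowerSeriesAt g f b) (h' : HasMvPowerSeriesAt g' f' b) :
    HasMvPowerSeriesAt (g * g') (f * f') b :=
  (h.exists_common h').imp fun _ hρ => hρ.1.mul hρ.2

lemma neg (h : HasMvPowerSeriesAt g f b) : HasMvPowerSeriesAt (-g) (-f) b :=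
  h.imp fun _ hρ => hρ.neg

lemma const_smul (h : HasMvPowerSeriesAt g f b) (c : 𝕜) :
    HasMvPowerSeriesAt (c • g) (c • f) b :=
  h.imp fun _ hρ => hρ.const_smul c

lemma sub (h : HasMvPowerSeriesAt g f b) (h' : HasMvPowerSeriesAt g' f' b) :
    HasMvPowerSeriesAt (g - g') (f - f') b := by
  simpa only [sub_eq_add_neg] using h.add h'.neg

lemma coeff_zero (h : HasMvPowerSeriesAt g f b) : coeff 0 f = g b :=
  let ⟨_, hρ⟩ := h; hρ.coeff_zero

lemma analyticAt (h : HasMvPowerSeriesAt g f b) : AnalyticAt 𝕜 g b :=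
  let ⟨_, hρ⟩ := h; hρ.analyticAt

lemma partialDeriv [DecidableEq ι] (h : HasMvPowerSeriesAt g f b) (μ : ι) :
    HasMvPowerSeriesAt (partialDeriv μ g) (pderiv 𝕜 μ f) b := by
  obtain ⟨ε, hε, han⟩ := Metric.eventually_nhds_iff_ball.1 h.analyticAt.eventually_analyticAt
  obtain ⟨ρ, h⟩ := h
  have hρ := h.pos
  have hr : 0 < min (ρ / 4) (ε / 2) := by positivity
  refine ⟨min (ρ / 4) (ε / 2), hr, ?_, fun y hy => h.hasSum_partialDeriv μ ?_ ?_⟩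
  · refine (summable_norm_coeff_pderiv hρ h.summable μ).of_nonneg_of_le (fun β => by positivity)
      fun β => ?_
    gcongr
    exact (min_le_left _ _).trans (by linarith)
  · linarith [hy.trans (min_le_left _ _)]
  · refine (han _ ?_).differentiableAt
    rw [mem_ball_iff_norm, add_sub_cancel_left]
    linarith [hy.trans (min_le_right _ _)]

lemma eq_zero (h : HasMvPowerSeriesAt 0 f b) : f = 0 := by
  classical
  suffices ∀ (d : ℕ) (f : MvPowerSeries ι 𝕜), HasMvPowerSeriesAt 0 f b →
      ∀ β : ι →₀ ℕ, β.degree = d → coeff β f = 0 from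
    MvPowerSeries.ext fun β => this _ f h β rfl
  intro d
  induction d with
  | zero =>
    intro f hf β hβ
    rw [(Finsupp.degree_eq_zero_iff β).1 hβ, hf.coeff_zero, Pi.zero_apply]
  | succ d ih =>
    intro f hf β hβ
    obtain ⟨μ, hμ⟩ := Finsupp.ne_iff.1 (fun h : β = 0 => by simp [h] at hβ)
    have hsub := Finsupp.sub_add_single_one_cancel hμ
    have hderiv : HasMvPowerSeriesAt 0 (pderiv 𝕜 μ f) b :=
      (hf.partialDeriv μ).congr (.of_forall fun y => by simp [_root_.partialDeriv])
    have hcoeff := ih _ hderiv (β - Finsupp.single μ 1) (by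
      rw [← hsub, map_add, Finsupp.degree_single] at hβ
      exact Nat.succ_injective hβ)
    rw [coeff_pderiv, hsub] at hcoeff
    exact (mul_eq_zero.1 hcoeff).resolve_right (Nat.cast_add_one_ne_zero _)

lemma eventuallyEq (h : HasMvPowerSeriesAt g f b) (h' : HasMvPowerSeriesAt g' f b) :
    g =ᶠ[𝓝 b] g' := by
  obtain ⟨ρ, h, h'⟩ := h.exists_common h'
  filter_upwards [Metric.closedBall_mem_nhds b h.pos] with y hy
  have hyb : ‖y - b‖ ≤ ρ := mem_closedBall_iff_norm.1 hy
  rw [← add_sub_cancel b y]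
  exact (h.hasSum _ hyb).unique (h'.hasSum _ hyb)

end HasMvPowerSeriesAt

lemma hasMvPowerSeriesAt_coord_sub (μ : ι) (b : ι → 𝕜) :
    HasMvPowerSeriesAt (fun y => y μ - b μ) (X μ) b := by
  classical
  have hcoeff (β : ι →₀ ℕ) (hβ : β ≠ Finsupp.single μ 1) :
      coeff β (X μ : MvPowerSeries ι 𝕜) = 0 := by rw [coeff_X, if_neg hβ]
  refine ⟨1, one_pos, ?_, fun y _ => ?_⟩
  · exact (hasSum_single (Finsupp.single μ 1) fun β hβ => by simp [hcoeff β hβ]).summable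
  · simpa [coeff_X, multiPow_single] using hasSum_single
      (f := fun β => coeff β (X μ : MvPowerSeries ι 𝕜) * multiPow y β) (Finsupp.single μ 1)
      fun β hβ => by simp [hcoeff β hβ]

lemma hasMvPowerSeriesOnClosedBall_tsum {f : MvPowerSeries ι 𝕜} {ρ : ℝ} (hρ : 0 < ρ)
    (hf : Summable fun β : ι →₀ ℕ => ‖coeff β f‖ * ρ ^ β.degree) (b : ι → 𝕜) :
    HasMvPowerSeriesOnClosedBall (fun y => ∑' β, coeff β f * multiPow (y - b) β) f b ρ := by
  refine ⟨hρ, hf, fun y hy => ?_⟩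
  simp only [add_sub_cancel_left]
  refine (Summable.of_norm_bounded hf fun β => ?_).hasSum
  rw [norm_mul]
  exact mul_le_mul_of_nonneg_left (norm_multiPow_le hy β) (norm_nonneg _)

end MvPowerSeriesExpansion

section ExpansionOfAnalytic

open MvPowerSeries

variable {𝕜 ι : Type*} [RCLike 𝕜]

/-- Collects a family of monomials `a i * y ^ φ i` into a power series. -/
noncomputable def fiberSeries {α : Type*} (φ : α → ι →₀ ℕ) (a : α → 𝕜) : MvPowerSeries ι 𝕜 :=
  fun β => ∑' i : {i // φ i = β}, a i

lemma coeff_fiberSeries {α : Type*} (φ : α → ι →₀ ℕ) (a : α → 𝕜) (β : ι →₀ ℕ) :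
    coeff β (fiberSeries φ a) = ∑' i : {i // φ i = β}, a i := rfl

variable [Fintype ι]

lemma hasMvPowerSeriesOnClosedBall_fiberSeries {α : Type*} {φ : α → ι →₀ ℕ} {a : α → 𝕜} {ρ : ℝ}
    {g : (ι → 𝕜) → 𝕜} {b : ι → 𝕜} (hρ : 0 < ρ)
    (hsummable : Summable fun i => ‖a i‖ * ρ ^ (φ i).degree)
    (hsum : ∀ y : ι → 𝕜, ‖y‖ ≤ ρ → HasSum (fun i => a i * multiPow y (φ i)) (g (b + y))) :
    HasMvPowerSeriesOnClosedBall g (fiberSeries φ a) b ρ := by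
  have hsigma : Summable fun p : Σ β, {i // φ i = β} => ‖a p.2‖ * ρ ^ p.1.degree :=
    ((Equiv.sigmaFiberEquiv φ).summable_iff.2 hsummable).congr fun ⟨β, i, hi⟩ => by
      simp [Equiv.sigmaFiberEquiv, hi]
  obtain ⟨hfib, htot⟩ := (summable_sigma_of_nonneg fun p => by positivity).1 hsigma
  have hfiber (β : ι →₀ ℕ) : Summable fun i : {i // φ i = β} => ‖a i‖ :=
    (summable_mul_right_iff (pow_pos hρ β.degree).ne').1 (hfib β)
  refine ⟨hρ, htot.of_nonneg_of_le (fun β => by positivity) fun β => ?_, fun y hy => ?_⟩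
  · simp only [tsum_mul_right, coeff_fiberSeries]
    gcongr
    exact norm_tsum_le_tsum_norm (hfiber β)
  · refine ((Equiv.sigmaFiberEquiv φ).hasSum_iff.2 (hsum y hy)).sigma fun β => ?_
    refine ((hfiber β).of_norm.hasSum.mul_right (multiPow y β)).congr_fun fun i => ?_
    simp [Equiv.sigmaFiberEquiv, i.2]

/-- The value of the `k`-th term of `p` on the standard basis vectors spelled by a word. -/
noncomputable def wordCoeff [DecidableEq ι] (p : FormalMultilinearSeries 𝕜 (ι → 𝕜) 𝕜)
    (w : Σ k : ℕ, Fin k → ι) : 𝕜 :=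
  p w.1 fun j => Pi.single (w.2 j) 1

lemma norm_wordCoeff_le [DecidableEq ι] (p : FormalMultilinearSeries 𝕜 (ι → 𝕜) 𝕜)
    (w : Σ k : ℕ, Fin k → ι) : ‖wordCoeff p w‖ ≤ ‖p w.1‖ :=
  (p w.1).unit_le_opNorm ((pi_norm_le_iff_of_nonneg zero_le_one).2 fun j => by
    rw [Pi.norm_single, norm_one])

/-- The multi-index counting the letters of a word. -/
noncomputable def wordIndex {ι : Type*} (w : Σ k : ℕ, Fin k → ι) : ι →₀ ℕ :=
  ∑ j, Finsupp.single (w.2 j) 1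

lemma degree_wordIndex {ι : Type*} (w : Σ k : ℕ, Fin k → ι) : (wordIndex w).degree = w.1 := by
  simp [wordIndex]

lemma apply_const_eq_sum_wordCoeff [DecidableEq ι] (p : FormalMultilinearSeries 𝕜 (ι → 𝕜) 𝕜)
    (k : ℕ) (y : ι → 𝕜) :
    p k (fun _ => y) =
      ∑ v : Fin k → ι, wordCoeff p ⟨k, v⟩ * multiPow y (wordIndex ⟨k, v⟩) := by
  conv_lhs => rw [pi_eq_sum_univ' y]
  rw [ContinuousMultilinearMap.map_sum]
  refine Finset.sum_congr rfl fun v _ => ?_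
  rw [ContinuousMultilinearMap.map_smul_univ, wordIndex, multiPow_sum, smul_eq_mul, mul_comm]
  simp [wordCoeff, multiPow_single]

lemma summable_norm_wordCoeff [DecidableEq ι] {p : FormalMultilinearSeries 𝕜 (ι → 𝕜) 𝕜} {ρ : ℝ}
    (hρ : 0 ≤ ρ) (hp : Summable fun k => ‖p k‖ * (Fintype.card ι * ρ) ^ k) :
    Summable fun w => ‖wordCoeff p w‖ * ρ ^ (wordIndex w).degree := by
  rw [summable_sigma_of_nonneg fun w => by positivity]
  refine ⟨fun k => Summable.of_finite, ?_⟩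
  refine hp.of_nonneg_of_le (fun k => tsum_nonneg fun _ => by positivity) fun k => ?_
  rw [tsum_fintype]
  calc ∑ v : Fin k → ι, ‖wordCoeff p ⟨k, v⟩‖ * ρ ^ (wordIndex ⟨k, v⟩).degree
      ≤ ∑ _v : Fin k → ι, ‖p k‖ * ρ ^ k := by
        refine Finset.sum_le_sum fun v _ => ?_
        rw [degree_wordIndex]
        gcongr
        exact norm_wordCoeff_le p ⟨k, v⟩
    _ = ‖p k‖ * (Fintype.card ι * ρ) ^ k := by
        simp only [Finset.sum_const, Finset.card_univ, Fintype.card_fun, Fintype.card_fin,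
          nsmul_eq_mul, Nat.cast_pow, mul_pow]
        ring

lemma exists_hasMvPowerSeriesAt {g : (ι → 𝕜) → 𝕜} {b : ι → 𝕜} (hg : AnalyticAt 𝕜 g b) :
    ∃ f, HasMvPowerSeriesAt g f b := by
  classical
  obtain ⟨p, r, hp⟩ := hg
  obtain ⟨s, hs, hsr⟩ := ENNReal.lt_iff_exists_nnreal_btwn.1 hp.r_pos
  have hs' : (0 : ℝ) < s := by exact_mod_cast hs
  have hcard : (0 : ℝ) < Fintype.card ι + 1 := by positivity
  have hρ : 0 < (s : ℝ) / (Fintype.card ι + 1) := by positivity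
  have hsummable := summable_norm_wordCoeff hρ.le
    ((p.summable_norm_mul_pow (hsr.trans_le hp.r_le)).of_nonneg_of_le
      (fun k => mul_nonneg (norm_nonneg _) (pow_nonneg (by positivity) k)) fun k => by
        gcongr
        rw [mul_div_assoc', div_le_iff₀ hcard]
        nlinarith)
  refine ⟨_, _, hasMvPowerSeriesOnClosedBall_fiberSeries hρ hsummable fun y hy => ?_⟩
  have hys : ‖y‖ ≤ s := hy.trans (div_le_self hs'.le (by simp))
  have hyr : y ∈ Metric.eball (0 : ι → 𝕜) r := by
    rw [mem_eball_zero_iff]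
    exact (enorm_le_coe.2 hys).trans_lt hsr
  refine (hp.hasSum hyr).sigma_of_hasSum (fun k => ?_)
    (.of_norm_bounded hsummable fun w => ?_)
  · rw [apply_const_eq_sum_wordCoeff]
    exact hasSum_fintype _
  · rw [norm_mul]
    exact mul_le_mul_of_nonneg_left (norm_multiPow_le hy _) (norm_nonneg _)

end ExpansionOfAnalytic

section AdicFixedPoint

open MvPowerSeries

variable {σ A : Type*} [CommRing A] {s : σ}

lemma eq_of_forall_X_pow_dvd_sub {f g : MvPowerSeries σ A} (h : ∀ k, X s ^ k ∣ f - g) : f = g := by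
  ext β
  have hβ := X_pow_dvd_iff.1 (h (β s + 1)) β (Nat.lt_succ_self _)
  rwa [map_sub, sub_eq_zero] at hβ

lemma eq_of_fixedPoint_of_X_dvd_contracting {S : MvPowerSeries σ A → MvPowerSeries σ A}
    (hS : ∀ k f g, X s ^ k ∣ f - g → X s ^ (k + 1) ∣ S f - S g) {f g : MvPowerSeries σ A}
    (hf : S f = f) (hg : S g = g) : f = g :=
  eq_of_forall_X_pow_dvd_sub fun k => by
    induction k with
    | zero => simp
    | succ k ih => rw [← hf, ← hg]; exact hS k f g ih

lemma exists_fixedPoint_of_X_dvd_contracting {S : MvPowerSeries σ A → MvPowerSeries σ A}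
    (hS : ∀ k f g, X s ^ k ∣ f - g → X s ^ (k + 1) ∣ S f - S g) :
    ∃ f, S f = f ∧ ∀ k, X s ^ k ∣ f - S^[k] 0 := by
  have hcauchy (k i : ℕ) : X s ^ k ∣ S^[k + i] 0 - S^[k] 0 := by
    induction k with
    | zero => simp
    | succ k ih =>
      rw [Nat.add_right_comm, Function.iterate_succ_apply', Function.iterate_succ_apply']
      exact hS _ _ _ ih
  let f : MvPowerSeries σ A := fun β => coeff β (S^[β s + 1] 0)
  have hf (k : ℕ) : X s ^ k ∣ f - S^[k] 0 := by
    refine X_pow_dvd_iff.2 fun β hβ => ?_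
    obtain ⟨i, rfl⟩ := Nat.exists_eq_add_of_le (Nat.succ_le_of_lt hβ)
    have hcoeff := X_pow_dvd_iff.1 (hcauchy (β s + 1) i) β (Nat.lt_succ_self _)
    rw [map_sub, sub_eq_zero] at hcoeff
    rw [map_sub, sub_eq_zero, hcoeff]
    rfl
  refine ⟨f, eq_of_forall_X_pow_dvd_sub (s := s) fun k => ?_, hf⟩
  refine (pow_dvd_pow (X s) k.le_succ).trans ?_
  have hstep := dvd_sub (hS k _ _ (hf k)) (hf (k + 1))
  rwa [Function.iterate_succ_apply', sub_sub_sub_cancel_right] at hstep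

lemma X_pow_dvd_X_mul_pderiv {k : ℕ} (μ : σ) {f : MvPowerSeries σ A} (h : X s ^ k ∣ f) :
    X s ^ k ∣ X s * pderiv A μ f := by
  obtain ⟨g, rfl⟩ := h
  rw [Derivation.leibniz, mul_add, smul_eq_mul, smul_eq_mul]
  refine dvd_add (Dvd.intro_left (X s * pderiv A μ g) (by ring)) ?_
  cases k with
  | zero => simp
  | succ k =>
    rw [Derivation.leibniz_pow, Nat.add_sub_cancel]
    exact Dvd.intro (g * ((k + 1) • pderiv A μ (X s)))
      (by simp only [smul_eq_mul, nsmul_eq_mul, pow_succ]; ring)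

lemma X_pow_dvd_X_mul_pderiv_sub {k : ℕ} (μ : σ) {f g : MvPowerSeries σ A} (h : X s ^ k ∣ f - g) :
    X s ^ k ∣ X s * pderiv A μ f - X s * pderiv A μ g := by
  rw [← mul_sub, ← map_sub]
  exact X_pow_dvd_X_mul_pderiv μ h

lemma mvPowerSeries_X_ne_zero [Nontrivial A] : (X s : MvPowerSeries σ A) ≠ 0 := fun h => by
  simpa using congrArg (coeff (Finsupp.single s 1)) h

lemma coeff_add_single_X_mul (f : MvPowerSeries σ A) (γ : σ →₀ ℕ) :
    coeff (γ + Finsupp.single s 1) (X s * f) = coeff γ f := by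
  rw [mul_comm, X]
  simpa using coeff_add_mul_monomial γ (Finsupp.single s 1) f 1

lemma coeff_X_mul_pderiv_self (f : MvPowerSeries σ A) (β : σ →₀ ℕ) :
    coeff β (X s * pderiv A s f) = β s * coeff β f := by
  rcases eq_or_ne (β s) 0 with hβ | hβ
  · rw [hβ, Nat.cast_zero, zero_mul]
    exact X_dvd_iff.1 (dvd_mul_right _ _) β hβ
  · nth_rw 1 [← Finsupp.sub_add_single_one_cancel hβ]
    rw [coeff_add_single_X_mul, coeff_pderiv, Finsupp.sub_add_single_one_cancel hβ, mul_comm]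
    congr 1
    have hcast : (β - Finsupp.single s 1 : σ →₀ ℕ) s + 1 = β s := by
      simpa using Nat.sub_add_cancel (Nat.pos_of_ne_zero hβ)
    exact_mod_cast congrArg (Nat.cast (R := A)) hcast

end AdicFixedPoint

section WeightedNorm

open MvPowerSeries ENNReal
open Finsupp (single)

variable {n : ℕ} {r R : ℝ}

/-- The weight of the multi-index `β` in `weightedNorm`. Dividing by the binomial coefficient makes
the weight of `γ + single 0 1` small enough, compared with that of `γ + single μ 1`, for the
derivations `X 0 * ∂_μ` to cost no more than one factor `β 0 + 1`. -/
noncomputable def weight (r R : ℝ) (β : Fin (n + 1) →₀ ℕ) : ℝ≥0∞ :=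
  ENNReal.ofReal (R ^ β 0 * r ^ (β.degree - β 0) / β.degree.choose (β 0))

lemma weight_eq (r R : ℝ) {β : Fin (n + 1) →₀ ℕ} {k q : ℕ} (hk : β 0 = k)
    (hβ : β.degree = k + q) :
    weight r R β = ENNReal.ofReal (R ^ k * r ^ q / (k + q).choose k) := by
  rw [weight, hk, hβ, Nat.add_sub_cancel_left]

lemma exists_degree_eq_add (β : Fin (n + 1) →₀ ℕ) : ∃ q, β.degree = β 0 + q :=
  Nat.exists_eq_add_of_le (Finsupp.le_degree 0 β)

lemma choose_mul_choose_le_choose_add (m n k l : ℕ) :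
    m.choose k * n.choose l ≤ (m + n).choose (k + l) := by
  rw [Nat.add_choose_eq]
  exact Finset.single_le_sum (f := fun ij : ℕ × ℕ => m.choose ij.1 * n.choose ij.2)
    (fun _ _ => Nat.zero_le _) (a := (k, l)) (by simp)

lemma weight_add_le (hr : 0 < r) (hR : 0 < R) (β γ : Fin (n + 1) →₀ ℕ) :
    weight r R (β + γ) ≤ weight r R β * weight r R γ := by
  obtain ⟨q, hq⟩ := exists_degree_eq_add β
  obtain ⟨p, hp⟩ := exists_degree_eq_add γ
  rw [weight_eq r R rfl hq, weight_eq r R rfl hp,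
    weight_eq r R (k := β 0 + γ 0) (q := q + p) rfl (by rw [map_add, hq, hp]; ring),
    ← ENNReal.ofReal_mul (by positivity), div_mul_div_comm]
  refine ENNReal.ofReal_le_ofReal ?_
  have hchoose := choose_mul_choose_le_choose_add (β 0 + q) (γ 0 + p) (β 0) (γ 0)
  rw [add_add_add_comm] at hchoose
  have hpos : 0 < (β 0 + q).choose (β 0) * (γ 0 + p).choose (γ 0) :=
    Nat.mul_pos (Nat.choose_pos le_self_add) (Nat.choose_pos le_self_add)
  rw [pow_add, pow_add, mul_mul_mul_comm]
  gcongr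
  · exact_mod_cast hpos
  · exact_mod_cast hchoose

lemma weight_le (hR : 0 < R) (hRr : R ≤ r) (β : Fin (n + 1) →₀ ℕ) :
    weight r R β ≤ ENNReal.ofReal (r ^ β.degree) := by
  have hr : 0 < r := hR.trans_le hRr
  obtain ⟨q, hq⟩ := exists_degree_eq_add β
  rw [weight_eq r R rfl hq, hq, pow_add]
  refine ENNReal.ofReal_le_ofReal ((div_le_self (by positivity) ?_).trans (by gcongr))
  exact_mod_cast Nat.choose_pos (n := β 0 + q) (k := β 0) le_self_add

lemma le_weight (hR : 0 < R) (hRr : R ≤ r) (β : Fin (n + 1) →₀ ℕ) :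
    ENNReal.ofReal ((R / 2) ^ β.degree) ≤ weight r R β := by
  have hr : 0 < r := hR.trans_le hRr
  obtain ⟨q, hq⟩ := exists_degree_eq_add β
  have hpos : 0 < (β 0 + q).choose (β 0) := Nat.choose_pos le_self_add
  rw [weight_eq r R rfl hq, hq, div_pow]
  refine ENNReal.ofReal_le_ofReal ?_
  rw [pow_add R]
  gcongr
  exact_mod_cast Nat.choose_le_two_pow _ _

lemma weight_add_single_zero_le (hr : 0 < r) (hR : 0 < R) (β : Fin (n + 1) →₀ ℕ) :
    weight r R (β + single 0 1) ≤ ENNReal.ofReal R * weight r R β := by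
  rw [mul_comm]
  refine (weight_add_le hr hR _ _).trans_eq ?_
  rw [weight_eq r R (β := single 0 1) (k := 1) (q := 0) (by simp) (by simp)]
  simp

lemma mul_pow_div_choose_succ_le (hR : 0 < R) (hRr : R ≤ r) {k l q : ℕ} (hl : l ≤ q) :
    ((l : ℝ) + 1) * (R ^ (k + 1) * r ^ q / (k + q + 1).choose (k + 1)) ≤
      ((k : ℝ) + 1) * (R ^ k * r ^ (q + 1) / (k + q + 1).choose k) := by
  have hr : 0 < r := hR.trans_le hRr
  have hchoose : ((k + q + 1).choose (k + 1) : ℝ) * (k + 1) = (k + q + 1).choose k * (q + 1) := by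
    have h := Nat.choose_succ_right_eq (k + q + 1) k
    rw [show k + q + 1 - k = q + 1 by omega] at h
    exact_mod_cast h
  have hpos : (0 : ℝ) < (k + q + 1).choose (k + 1) := mod_cast Nat.choose_pos (by omega)
  have hpos' : (0 : ℝ) < (k + q + 1).choose k := mod_cast Nat.choose_pos (by omega)
  rw [mul_div_assoc', mul_div_assoc', div_le_div_iff₀ hpos hpos']
  calc ((l : ℝ) + 1) * (R ^ (k + 1) * r ^ q) * (k + q + 1).choose k
      = ((l : ℝ) + 1) * (R ^ k * (r ^ q * R)) * (k + q + 1).choose k := by ring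
    _ ≤ ((q : ℝ) + 1) * (R ^ k * (r ^ q * r)) * (k + q + 1).choose k := by gcongr
    _ = (R ^ k * r ^ (q + 1)) * ((k + q + 1).choose k * (q + 1)) := by ring
    _ = _ := by rw [← hchoose]; ring

lemma cast_add_one_eq_ofReal (k : ℕ) : (k : ℝ≥0∞) + 1 = ENNReal.ofReal ((k : ℝ) + 1) := by
  rw [ENNReal.ofReal_add (Nat.cast_nonneg k) zero_le_one, ENNReal.ofReal_natCast,
    ENNReal.ofReal_one]

lemma add_one_mul_weight_add_single_zero_le (hR : 0 < R) (hRr : R ≤ r) (μ : Fin (n + 1))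
    (γ : Fin (n + 1) →₀ ℕ) :
    ((γ μ : ℝ≥0∞) + 1) * weight r R (γ + single 0 1) ≤
      ((γ + single μ 1 : Fin (n + 1) →₀ ℕ) 0 + 1) * weight r R (γ + single μ 1) := by
  rcases eq_or_ne μ 0 with rfl | hμ
  · gcongr
    simp
  obtain ⟨q, hq⟩ := exists_degree_eq_add γ
  have hle : γ 0 + γ μ ≤ γ 0 + q := by
    rw [← hq, Finsupp.degree_eq_sum, ← Finset.sum_pair (f := γ) hμ.symm]
    exact Finset.sum_le_sum_of_subset (Finset.subset_univ _)
  have hzero : (γ + single μ 1 : Fin (n + 1) →₀ ℕ) 0 = γ 0 := by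
    simp [Finsupp.single_eq_of_ne hμ.symm]
  rw [weight_eq r R (β := γ + single 0 1) (k := γ 0 + 1) (q := q) (by simp)
      (by rw [map_add, hq, Finsupp.degree_single]; ring),
    weight_eq r R (β := γ + single μ 1) (k := γ 0) (q := q + 1) hzero
      (by rw [map_add, hq, Finsupp.degree_single]; ring), hzero,
    cast_add_one_eq_ofReal, cast_add_one_eq_ofReal, ← ENNReal.ofReal_mul (by positivity),
    ← ENNReal.ofReal_mul (by positivity), add_right_comm]
  exact ENNReal.ofReal_le_ofReal
    (mul_pow_div_choose_succ_le hR hRr (Nat.le_of_add_le_add_left hle))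

variable {𝕜 : Type*} [RCLike 𝕜]

/-- The weighted `ℓ¹` norm of the coefficients of a power series, in which `j` measures the number
of derivatives `X 0 * ∂_μ` that are controlled; it takes the value `∞` where the sum diverges. -/
noncomputable def weightedNorm (r R : ℝ) (j : ℕ) (f : MvPowerSeries (Fin (n + 1)) 𝕜) : ℝ≥0∞ :=
  ∑' β, ‖coeff β f‖ₑ * ((β 0 : ℝ≥0∞) + 1) ^ j * weight r R β

lemma weightedNorm_mono {j j' : ℕ} (h : j ≤ j') (f : MvPowerSeries (Fin (n + 1)) 𝕜) :
    weightedNorm r R j f ≤ weightedNorm r R j' f :=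
  ENNReal.tsum_le_tsum fun β => by
    gcongr
    exact le_add_self

lemma weightedNorm_add_le (r R : ℝ) (j : ℕ) (f g : MvPowerSeries (Fin (n + 1)) 𝕜) :
    weightedNorm r R j (f + g) ≤ weightedNorm r R j f + weightedNorm r R j g := by
  simp only [weightedNorm, ← ENNReal.tsum_add, ← add_mul, map_add]
  gcongr
  exact enorm_add_le _ _

lemma weightedNorm_neg (r R : ℝ) (j : ℕ) (f : MvPowerSeries (Fin (n + 1)) 𝕜) :
    weightedNorm r R j (-f) = weightedNorm r R j f := by
  simp only [weightedNorm, map_neg, enorm_neg]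

lemma tsum_mul_tsum_eq_tsum_sum_antidiagonal {A : Type*} [AddCommMonoid A]
    [Finset.HasAntidiagonal A] (u v : A → ℝ≥0∞) :
    (∑' a, u a) * ∑' a, v a =
      ∑' a, ∑ p ∈ Finset.HasAntidiagonal.antidiagonal a, u p.1 * v p.2 := by
  simp_rw [← ENNReal.tsum_mul_right, ← ENNReal.tsum_mul_left]
  rw [← ENNReal.tsum_prod (f := fun a b => u a * v b),
    ← Finset.HasAntidiagonal.sigmaAntidiagonalEquivProd.tsum_eq, ENNReal.tsum_sigma']
  refine tsum_congr fun a => ?_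
  rw [tsum_fintype]
  exact Finset.sum_coe_sort (Finset.HasAntidiagonal.antidiagonal a) fun p => u p.1 * v p.2

lemma weightedNorm_mul_le (hr : 0 < r) (hR : 0 < R) (f g : MvPowerSeries (Fin (n + 1)) 𝕜) :
    weightedNorm r R 0 (f * g) ≤ weightedNorm r R 0 f * weightedNorm r R 0 g := by
  simp only [weightedNorm, pow_zero, mul_one]
  rw [tsum_mul_tsum_eq_tsum_sum_antidiagonal]
  refine ENNReal.tsum_le_tsum fun γ => ?_
  rw [coeff_mul]
  refine (mul_le_mul_left (enorm_sum_le _ _) _).trans ?_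
  rw [Finset.sum_mul]
  refine Finset.sum_le_sum fun p hp => ?_
  rw [← Finset.HasAntidiagonal.mem_antidiagonal.1 hp, enorm_mul, mul_mul_mul_comm]
  gcongr
  exact weight_add_le hr hR _ _

lemma weightedNorm_X_zero_mul (r R : ℝ) (j : ℕ) (f : MvPowerSeries (Fin (n + 1)) 𝕜) :
    weightedNorm r R j (X 0 * f) =
      ∑' γ, ‖coeff γ f‖ₑ * ((γ 0 : ℝ≥0∞) + 2) ^ j * weight r R (γ + single 0 1) := by
  rw [weightedNorm, ← (add_left_injective (single (0 : Fin (n + 1)) 1)).tsum_eq]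
  · simp only [coeff_add_single_X_mul, Finsupp.add_apply, Finsupp.single_eq_same, Nat.cast_add,
      Nat.cast_one, add_assoc, one_add_one_eq_two]
  · refine fun β hβ => of_not_not fun hrange => hβ ?_
    simp [X_dvd_iff.1 (dvd_mul_right _ f) β (apply_eq_zero_of_notMem_range_add_single hrange)]

lemma weightedNorm_X_zero_mul_le (hr : 0 < r) (hR : 0 < R) (f : MvPowerSeries (Fin (n + 1)) 𝕜) :
    weightedNorm r R 0 (X 0 * f) ≤ ENNReal.ofReal R * weightedNorm r R 0 f := by
  rw [weightedNorm_X_zero_mul, weightedNorm, ← ENNReal.tsum_mul_left]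
  refine ENNReal.tsum_le_tsum fun β => ?_
  rw [pow_zero, pow_zero, mul_left_comm]
  gcongr
  exact weight_add_single_zero_le hr hR β

lemma enorm_natCast_add_one (k : ℕ) : ‖(k : 𝕜) + 1‖ₑ = k + 1 := by
  rw [← Nat.cast_succ, ← ofReal_norm, RCLike.norm_natCast, ENNReal.ofReal_natCast, Nat.cast_succ]

lemma weightedNorm_X_zero_mul_pderiv_le (hR : 0 < R) (hRr : R ≤ r) (j : ℕ) (μ : Fin (n + 1))
    (f : MvPowerSeries (Fin (n + 1)) 𝕜) :
    weightedNorm r R j (X 0 * pderiv 𝕜 μ f) ≤ 2 ^ j * weightedNorm r R (j + 1) f := by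
  rw [weightedNorm_X_zero_mul, weightedNorm, ← ENNReal.tsum_mul_left]
  refine le_trans ?_ (ENNReal.tsum_comp_le_tsum_of_injective (add_left_injective (single μ 1)) _)
  refine ENNReal.tsum_le_tsum fun γ => ?_
  set k := (γ + single μ 1 : Fin (n + 1) →₀ ℕ) 0 with hk
  have hfactor : (γ 0 : ℝ≥0∞) + 2 ≤ 2 * (k + 1) := by
    have : γ 0 + 2 ≤ 2 * (k + 1) := by rw [hk, Finsupp.add_apply]; omega
    exact_mod_cast this
  rw [coeff_pderiv, enorm_mul, enorm_natCast_add_one]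
  calc ‖coeff (γ + single μ 1) f‖ₑ * (γ μ + 1) * (γ 0 + 2) ^ j * weight r R (γ + single 0 1)
      ≤ ‖coeff (γ + single μ 1) f‖ₑ * (γ μ + 1) * (2 * (k + 1)) ^ j *
          weight r R (γ + single 0 1) := by gcongr
    _ = ‖coeff (γ + single μ 1) f‖ₑ * (2 * (k + 1)) ^ j *
          ((γ μ + 1) * weight r R (γ + single 0 1)) := by ring
    _ ≤ ‖coeff (γ + single μ 1) f‖ₑ * (2 * (k + 1)) ^ j *
          ((k + 1) * weight r R (γ + single μ 1)) := by
        gcongr _ * ?_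
        exact add_one_mul_weight_add_single_zero_le hR hRr μ γ
    _ = _ := by rw [mul_pow, pow_succ]; ring

lemma HasMvPowerSeriesOnClosedBall.weightedNorm_le {g : (Fin (n + 1) → 𝕜) → 𝕜}
    {f : MvPowerSeries (Fin (n + 1)) 𝕜} {b : Fin (n + 1) → 𝕜} {ρ : ℝ}
    (h : HasMvPowerSeriesOnClosedBall g f b ρ) (hR : 0 < R) (hRr : R ≤ r) (hr : r ≤ ρ) :
    weightedNorm r R 0 f ≤
      ENNReal.ofReal (∑' β : Fin (n + 1) →₀ ℕ, ‖coeff β f‖ * ρ ^ β.degree) := by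
  have hr0 : 0 < r := hR.trans_le hRr
  have hρ := h.pos
  rw [ENNReal.ofReal_tsum_of_nonneg (fun β => by positivity) h.summable]
  refine ENNReal.tsum_le_tsum fun β => ?_
  rw [pow_zero, mul_one, ENNReal.ofReal_mul (norm_nonneg _), ofReal_norm]
  gcongr
  exact (weight_le hR hRr β).trans (ENNReal.ofReal_le_ofReal (by gcongr))

lemma exists_hasMvPowerSeriesAt_of_weightedNorm_ne_top {f : MvPowerSeries (Fin (n + 1)) 𝕜}
    (hR : 0 < R) (hRr : R ≤ r) (hf : weightedNorm r R 0 f ≠ ⊤) (b : Fin (n + 1) → 𝕜) :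
    ∃ g, HasMvPowerSeriesAt g f b := by
  have hsum : Summable fun β : Fin (n + 1) →₀ ℕ => ‖coeff β f‖ * (R / 2) ^ β.degree := by
    refine (ENNReal.summable_toReal (f := fun β : Fin (n + 1) →₀ ℕ =>
      ENNReal.ofReal (‖coeff β f‖ * (R / 2) ^ β.degree)) (ne_top_of_le_ne_top hf ?_)).congr
      fun β => ENNReal.toReal_ofReal (by positivity)
    refine ENNReal.tsum_le_tsum fun β => ?_
    rw [pow_zero, mul_one, ENNReal.ofReal_mul (norm_nonneg _), ofReal_norm]
    gcongr
    exact le_weight hR hRr β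
  exact ⟨_, R / 2, hasMvPowerSeriesOnClosedBall_tsum (by positivity) hsum b⟩

end WeightedNorm

section TameOperator

open MvPowerSeries ENNReal NNReal Topology

variable {𝕜 : Type*} [RCLike 𝕜] {n : ℕ}

/-- Possibly nonlinear operators on functions of `n + 1` variables. -/
abbrev FunctionOperator (𝕜 : Type*) (n : ℕ) :=
  ((Fin (n + 1) → 𝕜) → 𝕜) → (Fin (n + 1) → 𝕜) → 𝕜

/-- The formal operator `F` describes the action of `H` on power series expansions at `b`, it does
not decrease orders of vanishing in the variable `0`, and its size is controlled by two derivatives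
of the form `y₀ ∂_μ`, uniformly on small polydiscs. -/
structure IsFormalModel (F : MvPowerSeries (Fin (n + 1)) 𝕜 → MvPowerSeries (Fin (n + 1)) 𝕜)
    (H : FunctionOperator 𝕜 n) (b : Fin (n + 1) → 𝕜) : Prop where
  X_pow_dvd_sub : ∀ k f f', X 0 ^ k ∣ f - f' → X 0 ^ k ∣ F f - F f'
  exists_weightedNorm_le : ∃ K : ℝ≥0, ∀ᶠ r in 𝓝[>] (0 : ℝ), ∀ R, 0 < R → R ≤ r →
    ∀ f, weightedNorm r R 2 f ≤ 1 → weightedNorm r R 0 (F f) ≤ K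
  hasMvPowerSeriesAt : ∀ g f, HasMvPowerSeriesAt g f b → HasMvPowerSeriesAt (H g) (F f) b

/-- The nonlinear operators of order at most two in the vector fields `y₀ ∂_μ` that are admissible
as right-hand sides of Fuchsian equations. -/
def IsTameOperator (b : Fin (n + 1) → 𝕜) (H : FunctionOperator 𝕜 n) : Prop :=
  ∃ F, IsFormalModel F H b

namespace IsTameOperator

variable {b : Fin (n + 1) → 𝕜} {G H : FunctionOperator 𝕜 n}

lemma add (hG : IsTameOperator b G) (hH : IsTameOperator b H) : IsTameOperator b (G + H) := by
  obtain ⟨g, hg, ⟨K, hK⟩, hgG⟩ := hG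
  obtain ⟨h, hh, ⟨L, hL⟩, hhH⟩ := hH
  refine ⟨fun f => g f + h f, fun k f f' hf => ?_, ⟨K + L, ?_⟩,
    fun w f hf => (hgG w f hf).add (hhH w f hf)⟩
  · rw [add_sub_add_comm]
    exact dvd_add (hg k f f' hf) (hh k f f' hf)
  · filter_upwards [hK, hL] with r hr hr' R hR hRr f hf
    exact (weightedNorm_add_le _ _ _ _ _).trans (add_le_add (hr R hR hRr f hf) (hr' R hR hRr f hf))

lemma mul (hG : IsTameOperator b G) (hH : IsTameOperator b H) : IsTameOperator b (G * H) := by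
  obtain ⟨g, hg, ⟨K, hK⟩, hgG⟩ := hG
  obtain ⟨h, hh, ⟨L, hL⟩, hhH⟩ := hH
  refine ⟨fun f => g f * h f, fun k f f' hf => ?_, ⟨K * L, ?_⟩,
    fun w f hf => (hgG w f hf).mul (hhH w f hf)⟩
  · have hsplit : g f * h f - g f' * h f' = (g f - g f') * h f + g f' * (h f - h f') := by ring
    rw [hsplit]
    exact dvd_add ((hg k f f' hf).mul_right _) ((hh k f f' hf).mul_left _)
  · filter_upwards [hK, hL] with r hr hr' R hR hRr f hf
    exact (weightedNorm_mul_le (hR.trans_le hRr) hR _ _).trans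
      (mul_le_mul' (hr R hR hRr f hf) (hr' R hR hRr f hf))

lemma neg (hG : IsTameOperator b G) : IsTameOperator b (-G) := by
  obtain ⟨g, hg, ⟨K, hK⟩, hgG⟩ := hG
  refine ⟨fun f => -g f, fun k f f' hf => ?_, ⟨K, ?_⟩, fun w f hf => (hgG w f hf).neg⟩
  · rw [neg_sub_neg, ← dvd_neg, neg_sub]
    exact hg k f f' hf
  · simpa only [weightedNorm_neg] using hK

end IsTameOperator

lemma isTameOperator_const {b : Fin (n + 1) → 𝕜} {c : (Fin (n + 1) → 𝕜) → 𝕜}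
    (hc : AnalyticAt 𝕜 c b) : IsTameOperator b fun _ => c := by
  obtain ⟨f, ρ, hf⟩ := exists_hasMvPowerSeriesAt hc
  refine ⟨fun _ => f, fun k _ _ _ => by simp, ⟨(∑' β, ‖coeff β f‖ * ρ ^ β.degree).toNNReal, ?_⟩,
    fun _ _ _ => ⟨ρ, hf⟩⟩
  filter_upwards [Ioc_mem_nhdsGT hf.pos] with r hr R hR hRr _ _
  exact hf.weightedNorm_le hR hRr hr.2

lemma isTameOperator_id (b : Fin (n + 1) → 𝕜) : IsTameOperator b fun w => w :=
  ⟨id, fun _ _ _ h => h,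
    ⟨1, .of_forall fun _ _ _ _ f hf => (weightedNorm_mono zero_le_two f).trans hf⟩,
    fun _ _ h => h⟩

/-- The tame operators at `b` form a ring, so that polynomial expressions in tame operators are
tame. -/
def tameOperators (b : Fin (n + 1) → 𝕜) : Subring (FunctionOperator 𝕜 n) where
  carrier := {H | IsTameOperator b H}
  mul_mem' := IsTameOperator.mul
  one_mem' := isTameOperator_const (c := 1) analyticAt_const
  add_mem' := IsTameOperator.add
  zero_mem' := isTameOperator_const (c := 0) analyticAt_const
  neg_mem' := IsTameOperator.neg

/-- The operator `y₀ ∂_μ`. -/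
noncomputable def scaledDeriv (μ : Fin (n + 1)) : FunctionOperator 𝕜 n :=
  fun w y => y 0 * partialDeriv μ w y

lemma HasMvPowerSeriesAt.scaledDeriv {b : Fin (n + 1) → 𝕜} (hb : b 0 = 0)
    {f : MvPowerSeries (Fin (n + 1)) 𝕜} {g : (Fin (n + 1) → 𝕜) → 𝕜} (h : HasMvPowerSeriesAt g f b)
    (μ : Fin (n + 1)) : HasMvPowerSeriesAt (scaledDeriv μ g) (X 0 * pderiv 𝕜 μ f) b := by
  refine ((hasMvPowerSeriesAt_coord_sub 0 b).mul (h.partialDeriv μ)).congr (.of_forall fun y => ?_)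
  simp [_root_.scaledDeriv, hb]

lemma isTameOperator_scaledDeriv {b : Fin (n + 1) → 𝕜} (hb : b 0 = 0) (μ : Fin (n + 1)) :
    IsTameOperator b (scaledDeriv μ) := by
  refine ⟨fun f => X 0 * pderiv 𝕜 μ f, fun k f f' h => X_pow_dvd_X_mul_pderiv_sub μ h,
    ⟨1, .of_forall fun r R hR hRr f hf => ?_⟩, fun g f h => h.scaledDeriv hb μ⟩
  refine (weightedNorm_X_zero_mul_pderiv_le hR hRr 0 μ f).trans ?_
  rw [pow_zero, one_mul]
  exact (weightedNorm_mono one_le_two f).trans hf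

lemma isTameOperator_scaledDeriv_scaledDeriv {b : Fin (n + 1) → 𝕜} (hb : b 0 = 0)
    (μ ν : Fin (n + 1)) : IsTameOperator b fun w => scaledDeriv μ (scaledDeriv ν w) := by
  refine ⟨fun f => X 0 * pderiv 𝕜 μ (X 0 * pderiv 𝕜 ν f),
    fun k f f' h => X_pow_dvd_X_mul_pderiv_sub μ (X_pow_dvd_X_mul_pderiv_sub ν h),
    ⟨2, .of_forall fun r R hR hRr f hf => ?_⟩, fun g f h => (h.scaledDeriv hb ν).scaledDeriv hb μ⟩
  calc weightedNorm r R 0 (X 0 * pderiv 𝕜 μ (X 0 * pderiv 𝕜 ν f))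
      ≤ 2 ^ 0 * weightedNorm r R 1 (X 0 * pderiv 𝕜 ν f) :=
        weightedNorm_X_zero_mul_pderiv_le hR hRr 0 μ _
    _ ≤ 2 ^ 0 * (2 ^ 1 * weightedNorm r R 2 f) := by
        gcongr
        exact weightedNorm_X_zero_mul_pderiv_le hR hRr 1 ν f
    _ ≤ 2 ^ 0 * (2 ^ 1 * 1) := by gcongr
    _ = (2 : ℝ≥0) := by simp

end TameOperator

section Fuchsian

open MvPowerSeries ENNReal NNReal Topology

variable {𝕜 : Type*} [RCLike 𝕜] {n : ℕ} {a c : 𝕜}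

/-- The operator `θ² + a θ + c`, where `θ = y₀ ∂₀`. -/
noncomputable def fuchsianOperator (a c : 𝕜) : FunctionOperator 𝕜 n := fun w y =>
  scaledDeriv 0 (scaledDeriv 0 w) y + a * scaledDeriv 0 w y + c * w y

/-- The indicial polynomial of `fuchsianOperator a c`: its value on `y₀ ^ k` is
`indicialPoly a c k * y₀ ^ k`. -/
def indicialPoly (a c : 𝕜) (k : ℕ) : 𝕜 := k ^ 2 + a * k + c

/-- The action of `fuchsianOperator a c` on power series. -/
noncomputable def formalFuchsian (a c : 𝕜) (f : MvPowerSeries (Fin (n + 1)) 𝕜) :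
    MvPowerSeries (Fin (n + 1)) 𝕜 := fun β => indicialPoly a c (β 0) * coeff β f

/-- The inverse of `formalFuchsian a c`, provided that the indicial polynomial has no root in
`ℕ`. -/
noncomputable def formalFuchsianInv (a c : 𝕜) (f : MvPowerSeries (Fin (n + 1)) 𝕜) :
    MvPowerSeries (Fin (n + 1)) 𝕜 := fun β => coeff β f / indicialPoly a c (β 0)

lemma coeff_formalFuchsian (a c : 𝕜) (f : MvPowerSeries (Fin (n + 1)) 𝕜) (β : Fin (n + 1) →₀ ℕ) :
    coeff β (formalFuchsian a c f) = indicialPoly a c (β 0) * coeff β f := rfl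

lemma coeff_formalFuchsianInv (a c : 𝕜) (f : MvPowerSeries (Fin (n + 1)) 𝕜)
    (β : Fin (n + 1) →₀ ℕ) :
    coeff β (formalFuchsianInv a c f) = coeff β f / indicialPoly a c (β 0) := rfl

lemma formalFuchsian_formalFuchsianInv (h : ∀ k, indicialPoly a c k ≠ 0)
    (f : MvPowerSeries (Fin (n + 1)) 𝕜) : formalFuchsian a c (formalFuchsianInv a c f) = f := by
  ext β
  rw [coeff_formalFuchsian, coeff_formalFuchsianInv, mul_div_cancel₀ _ (h _)]

lemma formalFuchsianInv_formalFuchsian (h : ∀ k, indicialPoly a c k ≠ 0)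
    (f : MvPowerSeries (Fin (n + 1)) 𝕜) : formalFuchsianInv a c (formalFuchsian a c f) = f := by
  ext β
  rw [coeff_formalFuchsianInv, coeff_formalFuchsian, mul_div_cancel_left₀ _ (h _)]

lemma HasMvPowerSeriesAt.fuchsianOperator {b : Fin (n + 1) → 𝕜} (hb : b 0 = 0)
    {f : MvPowerSeries (Fin (n + 1)) 𝕜} {g : (Fin (n + 1) → 𝕜) → 𝕜} (h : HasMvPowerSeriesAt g f b)
    (a c : 𝕜) : HasMvPowerSeriesAt (fuchsianOperator a c g) (formalFuchsian a c f) b := by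
  have hcoeff : formalFuchsian a c f = X 0 * pderiv 𝕜 0 (X 0 * pderiv 𝕜 0 f) +
      a • (X 0 * pderiv 𝕜 0 f) + c • f := by
    ext β
    simp only [coeff_formalFuchsian, indicialPoly, map_add, coeff_smul, coeff_X_mul_pderiv_self]
    ring
  rw [hcoeff]
  exact (((h.scaledDeriv hb 0).scaledDeriv hb 0).add ((h.scaledDeriv hb 0).const_smul a)).add
    (h.const_smul c)

lemma tendsto_indicialPoly_div_sq (a c : 𝕜) :
    Tendsto (fun k : ℕ => indicialPoly a c k / ((k : 𝕜) + 1) ^ 2) atTop (𝓝 1) := by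
  have hinv : Tendsto (fun k : ℕ => 1 / ((k : 𝕜) + 1)) atTop (𝓝 0) :=
    tendsto_one_div_add_atTop_nhds_zero_nat
  have hcont : Continuous fun x : 𝕜 => (1 - x) ^ 2 + a * (x * (1 - x)) + c * x ^ 2 := by fun_prop
  have hlim := (hcont.tendsto 0).comp hinv
  simp only [sub_zero, one_pow, zero_mul, mul_zero, add_zero, ne_eq, OfNat.ofNat_ne_zero,
    not_false_eq_true, zero_pow] at hlim
  refine hlim.congr fun k => ?_
  have hk : (k : 𝕜) + 1 ≠ 0 := k.cast_add_one_ne_zero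
  simp only [Function.comp_apply, indicialPoly]
  field_simp
  ring

lemma exists_sq_le_mul_norm_indicialPoly (h : ∀ k, indicialPoly a c k ≠ 0) :
    ∃ C : ℝ≥0, ∀ k : ℕ, ((k : ℝ) + 1) ^ 2 ≤ C * ‖indicialPoly a c k‖ := by
  have hlim := ((tendsto_indicialPoly_div_sq a c).inv₀ one_ne_zero).norm
  obtain ⟨C, hC⟩ := hlim.bddAbove_range
  refine ⟨C.toNNReal, fun k => ?_⟩
  have hk : ‖(indicialPoly a c k / ((k : 𝕜) + 1) ^ 2)⁻¹‖ ≤ C.toNNReal :=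
    (hC (Set.mem_range_self k)).trans (Real.le_coe_toNNReal C)
  rw [inv_div, norm_div, div_le_iff₀ (norm_pos_iff.2 (h k)), norm_pow] at hk
  have hnorm : ‖(k : 𝕜) + 1‖ = (k : ℝ) + 1 := by
    rw [← Nat.cast_succ, RCLike.norm_natCast, Nat.cast_succ]
  rwa [hnorm] at hk

lemma weightedNorm_formalFuchsianInv_le (h : ∀ k, indicialPoly a c k ≠ 0) {C : ℝ≥0}
    (hC : ∀ k : ℕ, ((k : ℝ) + 1) ^ 2 ≤ C * ‖indicialPoly a c k‖) (r R : ℝ)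
    (f : MvPowerSeries (Fin (n + 1)) 𝕜) :
    weightedNorm r R 2 (formalFuchsianInv a c f) ≤ C * weightedNorm r R 0 f := by
  rw [weightedNorm, weightedNorm, ← ENNReal.tsum_mul_left]
  refine ENNReal.tsum_le_tsum fun β => ?_
  rw [pow_zero, mul_one, ← mul_assoc]
  gcongr ?_ * _
  rw [coeff_formalFuchsianInv, cast_add_one_eq_ofReal, ← ofReal_norm, ← ofReal_norm,
    ← ENNReal.ofReal_pow (by positivity), ← ENNReal.ofReal_mul (by positivity),
    ← ENNReal.ofReal_coe_nnreal, ← ENNReal.ofReal_mul (by positivity), norm_div]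
  refine ENNReal.ofReal_le_ofReal ?_
  rw [div_mul_eq_mul_div, div_le_iff₀ (norm_pos_iff.2 (h _))]
  calc ‖coeff β f‖ * ((β 0 : ℝ) + 1) ^ 2 ≤ ‖coeff β f‖ * (C * ‖indicialPoly a c (β 0)‖) := by
        gcongr
        exact hC _
    _ = _ := by ring

lemma X_pow_dvd_formalFuchsianInv_X_mul_sub {k : ℕ} {f g : MvPowerSeries (Fin (n + 1)) 𝕜}
    (h : X 0 ^ k ∣ f - g) :
    X 0 ^ (k + 1) ∣ formalFuchsianInv a c (X 0 * f) - formalFuchsianInv a c (X 0 * g) := by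
  have hX : (X 0 : MvPowerSeries (Fin (n + 1)) 𝕜) ^ (k + 1) ∣ X 0 * f - X 0 * g := by
    rw [← mul_sub, pow_succ']
    exact mul_dvd_mul_left _ h
  refine X_pow_dvd_iff.2 fun β hβ => ?_
  have hβ' := X_pow_dvd_iff.1 hX β hβ
  rw [map_sub, sub_eq_zero] at hβ' ⊢
  rw [coeff_formalFuchsianInv, coeff_formalFuchsianInv, hβ']

lemma weightedNorm_le_of_X_pow_dvd_sub {r R : ℝ} {j : ℕ} {K : ℝ≥0∞}
    {f : MvPowerSeries (Fin (n + 1)) 𝕜} {q : ℕ → MvPowerSeries (Fin (n + 1)) 𝕜}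
    (hf : ∀ k, X 0 ^ k ∣ f - q k) (hq : ∀ k, weightedNorm r R j (q k) ≤ K) :
    weightedNorm r R j f ≤ K := by
  rw [weightedNorm, ENNReal.tsum_eq_iSup_sum]
  refine iSup_le fun s => le_trans ?_ (hq (s.sup (fun β => β 0) + 1))
  rw [weightedNorm]
  refine (Finset.sum_le_sum fun β hβ => ?_).trans (ENNReal.sum_le_tsum s)
  have hcoeff := X_pow_dvd_iff.1 (hf (s.sup (fun β => β 0) + 1)) β
    (Nat.lt_succ_of_le (Finset.le_sup (f := fun β : Fin (n + 1) →₀ ℕ => β 0) hβ))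
  rw [map_sub, sub_eq_zero] at hcoeff
  rw [hcoeff]

lemma exists_pos_le_ofReal_mul_le_one {r : ℝ} (hr : 0 < r) (K : ℝ≥0) :
    ∃ R, 0 < R ∧ R ≤ r ∧ ENNReal.ofReal R * K ≤ 1 := by
  refine ⟨min r (1 / (K + 1)), by positivity, min_le_left _ _, ?_⟩
  rw [← ENNReal.ofReal_coe_nnreal, ← ENNReal.ofReal_mul (by positivity), ENNReal.ofReal_le_one]
  calc min r (1 / ((K : ℝ) + 1)) * K ≤ 1 / ((K : ℝ) + 1) * (K + 1) := by
        gcongr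
        · exact min_le_right _ _
        · exact le_add_of_nonneg_right zero_le_one
    _ = 1 := one_div_mul_cancel (by positivity)

lemma exists_formalFuchsian_eq_X_mul (hac : ∀ k, indicialPoly a c k ≠ 0)
    {F : MvPowerSeries (Fin (n + 1)) 𝕜 → MvPowerSeries (Fin (n + 1)) 𝕜}
    {H : FunctionOperator 𝕜 n} {b : Fin (n + 1) → 𝕜} (hF : IsFormalModel F H b) :
    ∃ f r R, 0 < R ∧ R ≤ r ∧ weightedNorm r R 0 f ≠ ⊤ ∧ formalFuchsian a c f = X 0 * F f := by
  obtain ⟨K, hK⟩ := hF.exists_weightedNorm_le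
  obtain ⟨r, hFr, hr⟩ := (hK.and self_mem_nhdsWithin).exists
  obtain ⟨C, hC⟩ := exists_sq_le_mul_norm_indicialPoly hac
  obtain ⟨R, hR, hRr, hRK⟩ := exists_pos_le_ofReal_mul_le_one hr (C * K)
  let S f := formalFuchsianInv a c (X 0 * F f)
  have hSnorm f (hf : weightedNorm r R 2 f ≤ 1) : weightedNorm r R 2 (S f) ≤ 1 :=
    calc weightedNorm r R 2 (S f) ≤ C * weightedNorm r R 0 (X 0 * F f) :=
          weightedNorm_formalFuchsianInv_le hac hC r R _
      _ ≤ C * (ENNReal.ofReal R * weightedNorm r R 0 (F f)) := by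
          gcongr
          exact weightedNorm_X_zero_mul_le hr hR _
      _ ≤ C * (ENNReal.ofReal R * K) := by
          gcongr
          exact hFr R hR hRr f hf
      _ = ENNReal.ofReal R * (C * K : ℝ≥0) := by rw [ENNReal.coe_mul]; ring
      _ ≤ 1 := hRK
  obtain ⟨f, hSf, hf⟩ := exists_fixedPoint_of_X_dvd_contracting (S := S) (s := 0)
    fun k f f' h => X_pow_dvd_formalFuchsianInv_X_mul_sub (hF.X_pow_dvd_sub k f f' h)
  have hiter (k : ℕ) : weightedNorm r R 2 (S^[k] 0) ≤ 1 := by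
    induction k with
    | zero => simp [weightedNorm]
    | succ k ih => rw [Function.iterate_succ_apply']; exact hSnorm _ ih
  refine ⟨f, r, R, hR, hRr, ne_top_of_le_ne_top ENNReal.one_ne_top
    ((weightedNorm_mono zero_le_two f).trans (weightedNorm_le_of_X_pow_dvd_sub hf hiter)), ?_⟩
  conv_lhs => rw [← hSf]
  exact formalFuchsian_formalFuchsianInv hac _

lemma eq_of_formalFuchsian_eq_X_mul (hac : ∀ k, indicialPoly a c k ≠ 0)
    {F : MvPowerSeries (Fin (n + 1)) 𝕜 → MvPowerSeries (Fin (n + 1)) 𝕜}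
    (hF : ∀ k f f', X 0 ^ k ∣ f - f' → X 0 ^ k ∣ F f - F f')
    {f f' : MvPowerSeries (Fin (n + 1)) 𝕜}
    (hf : formalFuchsian a c f = X 0 * F f) (hf' : formalFuchsian a c f' = X 0 * F f') :
    f = f' := by
  refine eq_of_fixedPoint_of_X_dvd_contracting (s := 0)
    (S := fun f => formalFuchsianInv a c (X 0 * F f))
    (fun k f f' h => X_pow_dvd_formalFuchsianInv_X_mul_sub (hF k f f' h)) ?_ ?_
  · simp only [← hf, formalFuchsianInv_formalFuchsian hac]
  · simp only [← hf', formalFuchsianInv_formalFuchsian hac]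

theorem exists_fuchsianOperator_eq {b : Fin (n + 1) → 𝕜} (hb : b 0 = 0)
    (hac : ∀ k, indicialPoly a c k ≠ 0) {H : FunctionOperator 𝕜 n} (hH : IsTameOperator b H) :
    ∃ w, AnalyticAt 𝕜 w b ∧ fuchsianOperator a c w =ᶠ[𝓝 b] fun y => y 0 * H w y := by
  obtain ⟨F, hF⟩ := hH
  obtain ⟨f, r, R, hR, hRr, hfin, hf⟩ := exists_formalFuchsian_eq_X_mul hac hF
  obtain ⟨w, hw⟩ := exists_hasMvPowerSeriesAt_of_weightedNorm_ne_top hR hRr hfin b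
  have hQ := hw.fuchsianOperator hb a c
  rw [hf] at hQ
  have hXH := (hasMvPowerSeriesAt_coord_sub 0 b).mul (hF.hasMvPowerSeriesAt w f hw)
  refine ⟨w, hw.analyticAt, (hQ.eventuallyEq hXH).trans (.of_eq ?_)⟩
  ext y
  simp [hb]

theorem eventuallyEq_of_fuchsianOperator_eq {b : Fin (n + 1) → 𝕜} (hb : b 0 = 0)
    (hac : ∀ k, indicialPoly a c k ≠ 0) {H : FunctionOperator 𝕜 n} (hH : IsTameOperator b H)
    {w w' : (Fin (n + 1) → 𝕜) → 𝕜} (hw : AnalyticAt 𝕜 w b) (hw' : AnalyticAt 𝕜 w' b)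
    (h : ∀ᶠ y in 𝓝 b, y 0 * (fuchsianOperator a c w y - y 0 * H w y) = 0)
    (h' : ∀ᶠ y in 𝓝 b, y 0 * (fuchsianOperator a c w' y - y 0 * H w' y) = 0) : w =ᶠ[𝓝 b] w' := by
  obtain ⟨f, hf⟩ := exists_hasMvPowerSeriesAt hw
  obtain ⟨f', hf'⟩ := exists_hasMvPowerSeriesAt hw'
  obtain ⟨F, hF⟩ := hH
  have hformal {w f} (hf : HasMvPowerSeriesAt w f b)
      (h : ∀ᶠ y in 𝓝 b, y 0 * (fuchsianOperator a c w y - y 0 * H w y) = 0) :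
      formalFuchsian a c f = X 0 * F f := by
    have hX := hasMvPowerSeriesAt_coord_sub 0 b
    have hprod := hX.mul ((hf.fuchsianOperator hb a c).sub
      (hX.mul (hF.hasMvPowerSeriesAt w f hf)))
    have hzero := (hprod.congr (g' := 0) (h.mono fun y hy => by simpa [hb] using hy)).eq_zero
    exact sub_eq_zero.1 ((mul_eq_zero.1 hzero).resolve_left mvPowerSeries_X_ne_zero)
  obtain rfl := eq_of_formalFuchsian_eq_X_mul hac hF.X_pow_dvd_sub (hformal hf h) (hformal hf' h')
  exact hf.eventuallyEq hf'

end Fuchsian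

section ScaledDerivRules

variable {𝕜 : Type*} [RCLike 𝕜] {n : ℕ} {f g : (Fin (n + 1) → 𝕜) → 𝕜} {y : Fin (n + 1) → 𝕜}

lemma analyticAt_coord {ι : Type*} [Fintype ι] (μ : ι) (y : ι → 𝕜) :
    AnalyticAt 𝕜 (fun y : ι → 𝕜 => y μ) y :=
  (ContinuousLinearMap.proj (R := 𝕜) (φ := fun _ : ι => 𝕜) μ).analyticAt y

lemma analyticAt_scaledDeriv (hf : AnalyticAt 𝕜 f y) (μ : Fin (n + 1)) :
    AnalyticAt 𝕜 (scaledDeriv μ f) y :=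
  (analyticAt_coord 0 y).mul (analyticAt_partialDeriv hf μ)

lemma scaledDeriv_fun_const (μ : Fin (n + 1)) (c : 𝕜) (y : Fin (n + 1) → 𝕜) :
    scaledDeriv μ (fun _ => c) y = 0 := by
  simp [scaledDeriv, partialDeriv]

lemma scaledDeriv_fun_add (μ : Fin (n + 1)) (hf : DifferentiableAt 𝕜 f y)
    (hg : DifferentiableAt 𝕜 g y) :
    scaledDeriv μ (fun y => f y + g y) y = scaledDeriv μ f y + scaledDeriv μ g y := by
  rw [scaledDeriv, partialDeriv, fderiv_fun_add hf hg, add_apply, mul_add]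
  rfl

lemma scaledDeriv_fun_mul (μ : Fin (n + 1)) (hf : DifferentiableAt 𝕜 f y)
    (hg : DifferentiableAt 𝕜 g y) :
    scaledDeriv μ (fun y => f y * g y) y = scaledDeriv μ f y * g y + f y * scaledDeriv μ g y := by
  simp only [scaledDeriv, partialDeriv, fderiv_fun_mul hf hg, add_apply,
    smul_apply, smul_eq_mul]
  ring

lemma scaledDeriv_coord_zero_pow (μ : Fin (n + 1)) (k : ℕ) (y : Fin (n + 1) → 𝕜) :
    scaledDeriv μ (fun y => y 0 ^ k) y = if μ = 0 then k * y 0 ^ k else 0 := by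
  have hderiv := ((ContinuousLinearMap.proj (R := 𝕜) (φ := fun _ : Fin (n + 1) => 𝕜)
    0).hasFDerivAt (x := y)).pow k
  simp only [ContinuousLinearMap.proj_apply] at hderiv
  rw [scaledDeriv, partialDeriv, hderiv.fderiv]
  rcases k with _ | k
  · simp
  · by_cases hμ : μ = 0
    · subst hμ
      simp [pow_succ]
      ring
    · simp [hμ, Ne.symm hμ]

end ScaledDerivRules

section EqModSq

open Topology

variable {𝕜 : Type*} [RCLike 𝕜] {n : ℕ} {b : Fin (n + 1) → 𝕜} {G G' H H' : FunctionOperator 𝕜 n}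

/-- Multiplication by the variable `y₀`, in the ring of operators. -/
def coordZero : FunctionOperator 𝕜 n := fun _ y => y 0

/-- On germs of analytic functions at `b`, the operators `G` and `G'` agree up to `y₀²` times a
tame operator; `G'` (and hence `G`) is tame. -/
def EqModSq (b : Fin (n + 1) → 𝕜) (G G' : FunctionOperator 𝕜 n) : Prop :=
  IsTameOperator b G' ∧ ∃ K, IsTameOperator b K ∧ ∀ w, AnalyticAt 𝕜 w b →
    ∀ᶠ y in 𝓝 b, G w y = G' w y + y 0 ^ 2 * K w y

lemma isTameOperator_coordZero (b : Fin (n + 1) → 𝕜) : IsTameOperator b coordZero :=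
  isTameOperator_const (analyticAt_coord 0 b)

namespace IsTameOperator

lemma pow (hG : IsTameOperator b G) (k : ℕ) : IsTameOperator b (G ^ k) :=
  (tameOperators b).pow_mem hG k

lemma sum {ι : Type*} {s : Finset ι} {G : ι → FunctionOperator 𝕜 n}
    (hG : ∀ i ∈ s, IsTameOperator b (G i)) : IsTameOperator b (∑ i ∈ s, G i) :=
  (tameOperators b).sum_mem hG

lemma prod {ι : Type*} {s : Finset ι} {G : ι → FunctionOperator 𝕜 n}
    (hG : ∀ i ∈ s, IsTameOperator b (G i)) : IsTameOperator b (∏ i ∈ s, G i) :=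
  (tameOperators b).prod_mem hG

lemma congr (hG : IsTameOperator b G) (h : ∀ w, AnalyticAt 𝕜 w b → H w =ᶠ[𝓝 b] G w) :
    IsTameOperator b H := by
  obtain ⟨F, hF⟩ := hG
  exact ⟨F, hF.X_pow_dvd_sub, hF.exists_weightedNorm_le, fun w f hf =>
    (hF.hasMvPowerSeriesAt w f hf).congr (h w hf.analyticAt).symm⟩

end IsTameOperator

namespace EqModSq

lemma isTameOperator_left (h : EqModSq b G G') : IsTameOperator b G := by
  obtain ⟨hG', K, hK, hGK⟩ := h
  exact (hG'.add (((isTameOperator_coordZero b).pow 2).mul hK)).congr hGK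

lemma of_eventuallyEq (hG' : IsTameOperator b G')
    (h : ∀ w, AnalyticAt 𝕜 w b → G w =ᶠ[𝓝 b] G' w) : EqModSq b G G' :=
  ⟨hG', 0, (tameOperators b).zero_mem, fun w hw => by
    filter_upwards [h w hw] with y hy
    simp [hy]⟩

lemma refl (hG : IsTameOperator b G) : EqModSq b G G :=
  of_eventuallyEq hG fun _ _ => .rfl

lemma trans {G'' : FunctionOperator 𝕜 n} (h : EqModSq b G G') (h' : EqModSq b G' G'') :
    EqModSq b G G'' := by
  obtain ⟨-, K, hK, hGK⟩ := h
  obtain ⟨hG'', K', hK', hGK'⟩ := h'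
  refine ⟨hG'', K + K', hK.add hK', fun w hw => ?_⟩
  filter_upwards [hGK w hw, hGK' w hw] with y hy hy'
  simp only [hy, hy', Pi.add_apply]
  ring

lemma add (h : EqModSq b G G') (h' : EqModSq b H H') : EqModSq b (G + H) (G' + H') := by
  obtain ⟨hG', K, hK, hGK⟩ := h
  obtain ⟨hH', K', hK', hHK'⟩ := h'
  refine ⟨hG'.add hH', K + K', hK.add hK', fun w hw => ?_⟩
  filter_upwards [hGK w hw, hHK' w hw] with y hy hy'
  simp only [hy, hy', Pi.add_apply]
  ring

lemma mul (h : EqModSq b G G') (h' : EqModSq b H H') : EqModSq b (G * H) (G' * H') := by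
  obtain ⟨hG', K, hK, hGK⟩ := h
  obtain ⟨hH', K', hK', hHK'⟩ := h'
  refine ⟨hG'.mul hH', K * H' + G' * K' + coordZero ^ 2 * (K * K'),
    ((hK.mul hH').add (hG'.mul hK')).add (((isTameOperator_coordZero b).pow 2).mul (hK.mul hK')),
    fun w hw => ?_⟩
  filter_upwards [hGK w hw, hHK' w hw] with y hy hy'
  simp only [hy, hy', Pi.add_apply, Pi.mul_apply, Pi.pow_apply, coordZero]
  ring

lemma neg (h : EqModSq b G G') : EqModSq b (-G) (-G') := by
  obtain ⟨hG', K, hK, hGK⟩ := h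
  refine ⟨hG'.neg, -K, hK.neg, fun w hw => ?_⟩
  filter_upwards [hGK w hw] with y hy
  simp only [hy, Pi.neg_apply]
  ring

lemma sub (h : EqModSq b G G') (h' : EqModSq b H H') : EqModSq b (G - H) (G' - H') := by
  simpa only [sub_eq_add_neg] using h.add h'.neg

lemma sum {ι : Type*} {s : Finset ι} {G G' : ι → FunctionOperator 𝕜 n}
    (h : ∀ i ∈ s, EqModSq b (G i) (G' i)) : EqModSq b (∑ i ∈ s, G i) (∑ i ∈ s, G' i) := by
  induction s using Finset.cons_induction with
  | empty => exact refl (tameOperators b).zero_mem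
  | cons i s hi ih =>
    rw [Finset.sum_cons, Finset.sum_cons]
    exact (h i (Finset.mem_cons_self i s)).add (ih fun j hj => h j (Finset.mem_cons_of_mem hj))

lemma prod {ι : Type*} {s : Finset ι} {G G' : ι → FunctionOperator 𝕜 n}
    (h : ∀ i ∈ s, EqModSq b (G i) (G' i)) : EqModSq b (∏ i ∈ s, G i) (∏ i ∈ s, G' i) := by
  induction s using Finset.cons_induction with
  | empty => exact refl (tameOperators b).one_mem
  | cons i s hi ih =>
    rw [Finset.prod_cons, Finset.prod_cons]
    exact (h i (Finset.mem_cons_self i s)).mul (ih fun j hj => h j (Finset.mem_cons_of_mem hj))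

end EqModSq

lemma eqModSq_coordZero_pow_mul {k : ℕ} (hk : 2 ≤ k) (hG : IsTameOperator b G) :
    EqModSq b (coordZero ^ k * G) 0 := by
  refine ⟨(tameOperators b).zero_mem, coordZero ^ (k - 2) * G,
    ((isTameOperator_coordZero b).pow _).mul hG, fun w _ => .of_forall fun y => ?_⟩
  rw [← Nat.add_sub_of_le hk, Nat.add_sub_cancel_left, pow_add]
  simp [coordZero, mul_assoc]

lemma eqModSq_add_coordZero_mul_pow (hG : IsTameOperator b G) (hH : IsTameOperator b H) (k : ℕ) :
    EqModSq b ((G + coordZero * H) ^ k)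
      (G ^ k + (k : FunctionOperator 𝕜 n) * G ^ (k - 1) * (coordZero * H)) := by
  let g : tameOperators b := ⟨G, hG⟩
  let x : tameOperators b := ⟨coordZero, isTameOperator_coordZero b⟩
  let h : tameOperators b := ⟨H, hH⟩
  obtain ⟨⟨r, hrtame⟩, hr⟩ := Polynomial.powAddExpansion g (x * h) k
  have hexp : (G + coordZero * H) ^ k = G ^ k +
      (k : FunctionOperator 𝕜 n) * G ^ (k - 1) * (coordZero * H) + r * (coordZero * H) ^ 2 :=
    congrArg Subtype.val hr
  refine ⟨(g ^ k + k * g ^ (k - 1) * (x * h)).2, r * H ^ 2, hrtame.mul (hH.pow 2),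
    fun w _ => .of_forall fun y => ?_⟩
  rw [hexp]
  simp only [Pi.add_apply, Pi.mul_apply, Pi.pow_apply, coordZero]
  ring

end EqModSq

section HomogForm

variable {R ι : Type*} [CommSemiring R] [Fintype ι] {l : ℕ}

/-- The homogeneous polynomial of degree `l` in `v`, with one coefficient for each word
of length `l` in the variables, as in `HomogPoly`. -/
def homogForm (c : (Fin l → ι) → R) (v : ι → R) : R := ∑ μ, c μ * ∏ k, v (μ k)

lemma homogForm_const_mul (c : (Fin l → ι) → R) (r : R) (v : ι → R) :
    homogForm c (fun i => r * v i) = r ^ l * homogForm c v := by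
  simp only [homogForm, Finset.prod_mul_distrib, Finset.prod_const, Finset.card_univ,
    Fintype.card_fin, Finset.mul_sum]
  exact Finset.sum_congr rfl fun μ _ => mul_left_comm _ _ _

end HomogForm

section ReducedEquation

open Topology

variable {𝕜 : Type*} [RCLike 𝕜] {n m : ℕ} {A : 𝕜} {P : (Fin (n + 1) → 𝕜) → Fin n → 𝕜}
  {b y : Fin (n + 1) → 𝕜} {w : (Fin (n + 1) → 𝕜) → 𝕜}

lemma IsTameOperator.homogForm {l : ℕ} {c : (Fin l → Fin (n + 1)) → FunctionOperator 𝕜 n}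
    {V : Fin (n + 1) → FunctionOperator 𝕜 n} (hc : ∀ μ, IsTameOperator b (c μ))
    (hV : ∀ k, IsTameOperator b (V k)) : IsTameOperator b (homogForm c V) :=
  .sum fun μ _ => (hc μ).mul (.prod fun k _ => hV (μ k))

lemma EqModSq.homogForm {l : ℕ} {c c' : (Fin l → Fin (n + 1)) → FunctionOperator 𝕜 n}
    {V V' : Fin (n + 1) → FunctionOperator 𝕜 n} (hc : ∀ μ, EqModSq b (c μ) (c' μ))
    (hV : ∀ k, EqModSq b (V k) (V' k)) : EqModSq b (homogForm c V) (homogForm c' V') :=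
  .sum fun μ _ => (hc μ).mul (.prod fun k _ => hV (μ k))

lemma homogForm_apply {l : ℕ} (c : (Fin l → Fin (n + 1)) → FunctionOperator 𝕜 n)
    (V : Fin (n + 1) → FunctionOperator 𝕜 n) (w : (Fin (n + 1) → 𝕜) → 𝕜) (y : Fin (n + 1) → 𝕜) :
    homogForm c V w y = homogForm (fun μ => c μ w y) fun k => V k w y := by
  simp only [homogForm, Finset.sum_apply, Pi.mul_apply, Finset.prod_apply]

lemma homogForm_const {l : ℕ} (c : (Fin l → Fin (n + 1)) → (Fin (n + 1) → 𝕜) → 𝕜)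
    (v : Fin (n + 1) → (Fin (n + 1) → 𝕜) → 𝕜) :
    (homogForm (fun μ _ => c μ) (fun k _ => v k) : FunctionOperator 𝕜 n) =
      fun _ y => homogForm (fun μ => c μ y) fun k => v k y := by
  ext w y
  rw [homogForm_apply]

/-- With `σ = (t - ψ)^{1/m}`, `y = (σ, x)` and `A = a (m - 1) / m`, the ansatz
`u = a σ^{m-1} + σ^m w(σ, x)` has `σ ∂_t u = A + σ z`, where `z = w + θ w / m` is this operator. -/
noncomputable def ansatzCorrection (m : ℕ) : FunctionOperator 𝕜 n := fun w y =>
  w y + (m : 𝕜)⁻¹ * scaledDeriv 0 w y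

/-- The operator taking `w` to `σ ∂_t u`, where `u` is as in `ansatzCorrection`. -/
noncomputable def ansatzTime (m : ℕ) (A : 𝕜) : FunctionOperator 𝕜 n := fun w y =>
  A + y 0 * ansatzCorrection m w y

/-- The operator taking `w` to `σ ∂_{x i} u`, where `u` is as in `ansatzCorrection` and `P = ∇ψ`. -/
noncomputable def ansatzSpace (m : ℕ) (A : 𝕜) (P : (Fin (n + 1) → 𝕜) → Fin n → 𝕜) (i : Fin n) :
    FunctionOperator 𝕜 n := fun w y =>
  -P y i * ansatzTime m A w y + y 0 ^ m * scaledDeriv i.succ w y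

/-- The operators taking `w` to `σ (∂_t u, ∇u)`, where `u` is as in `ansatzCorrection`. -/
noncomputable def ansatzGrad (m : ℕ) (A : 𝕜) (P : (Fin (n + 1) → 𝕜) → Fin n → 𝕜) :
    Fin (n + 1) → FunctionOperator 𝕜 n := Fin.cons (ansatzTime m A) (ansatzSpace m A P)

/-- The operator taking `w` to `σ^{m+1} (u_tt - Δu)`, where `u` is as in `ansatzCorrection`. -/
noncomputable def ansatzWave (m : ℕ) (A : 𝕜) (P : (Fin (n + 1) → 𝕜) → Fin n → 𝕜) :
    FunctionOperator 𝕜 n := fun w y =>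
  (m : 𝕜)⁻¹ * (scaledDeriv 0 (ansatzTime m A w) y - ansatzTime m A w y) +
    ∑ i, (P y i * ((m : 𝕜)⁻¹ *
        (scaledDeriv 0 (ansatzSpace m A P i w) y - ansatzSpace m A P i w y)) -
      y 0 ^ (m - 1) * scaledDeriv i.succ (ansatzSpace m A P i w) y)

/-- The operator taking `w` to `σ^{m+1} ∑ l ≤ m+1, f_l(∂_t u, ∇u)`, where `u` is as in
`ansatzCorrection` and `f_l = homogForm (c l)`. -/
noncomputable def ansatzNonlinearity (m : ℕ) (A : 𝕜) (P : (Fin (n + 1) → 𝕜) → Fin n → 𝕜)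
    (c : (l : ℕ) → (Fin l → Fin (n + 1)) → (Fin (n + 1) → 𝕜) → 𝕜) : FunctionOperator 𝕜 n :=
  ∑ l ∈ Finset.range (m + 2),
    coordZero ^ (m + 1 - l) * homogForm (fun μ _ => c l μ) (ansatzGrad m A P)

/-- The vector `(1, -p)`. For `p = ∇ψ(x)` it is conormal to the hypersurface `t = ψ(x)`. -/
def conormal (p : Fin n → 𝕜) : Fin (n + 1) → 𝕜 := Fin.cons 1 (-p)

lemma analyticAt_ansatzCorrection (hw : AnalyticAt 𝕜 w y) :
    AnalyticAt 𝕜 (ansatzCorrection m w) y :=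
  hw.add (analyticAt_const.mul (analyticAt_scaledDeriv hw 0))

lemma analyticAt_ansatzTime (hw : AnalyticAt 𝕜 w y) : AnalyticAt 𝕜 (ansatzTime m A w) y :=
  analyticAt_const.add ((analyticAt_coord 0 y).mul (analyticAt_ansatzCorrection hw))

lemma analyticAt_ansatzSpace {i : Fin n} (hP : AnalyticAt 𝕜 (fun y => P y i) y)
    (hw : AnalyticAt 𝕜 w y) : AnalyticAt 𝕜 (ansatzSpace m A P i w) y :=
  (hP.neg.mul (analyticAt_ansatzTime hw)).add
    (((analyticAt_coord 0 y).pow m).mul (analyticAt_scaledDeriv hw i.succ))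

lemma isTameOperator_ansatzCorrection (hb : b 0 = 0) (m : ℕ) :
    IsTameOperator b (ansatzCorrection m) :=
  (isTameOperator_id b).add
    ((isTameOperator_const analyticAt_const).mul (isTameOperator_scaledDeriv hb 0))

lemma isTameOperator_ansatzTime (hb : b 0 = 0) (m : ℕ) (A : 𝕜) :
    IsTameOperator b (ansatzTime m A) :=
  (isTameOperator_const analyticAt_const).add
    ((isTameOperator_coordZero b).mul (isTameOperator_ansatzCorrection hb m))

lemma isTameOperator_ansatzSpace (hb : b 0 = 0) (m : ℕ) (A : 𝕜) {i : Fin n}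
    (hP : AnalyticAt 𝕜 (fun y => P y i) b) : IsTameOperator b (ansatzSpace m A P i) :=
  ((isTameOperator_const hP.neg).mul (isTameOperator_ansatzTime hb m A)).add
    (((isTameOperator_coordZero b).pow m).mul (isTameOperator_scaledDeriv hb i.succ))

lemma isTameOperator_ansatzGrad (hb : b 0 = 0) (m : ℕ) (A : 𝕜)
    (hP : ∀ i, AnalyticAt 𝕜 (fun y => P y i) b) (k : Fin (n + 1)) :
    IsTameOperator b (ansatzGrad m A P k) := by
  cases k using Fin.cases with
  | zero => exact isTameOperator_ansatzTime hb m A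
  | succ i => exact isTameOperator_ansatzSpace hb m A (hP i)

lemma scaledDeriv_ansatzCorrection (μ : Fin (n + 1)) (hw : AnalyticAt 𝕜 w y) :
    scaledDeriv μ (ansatzCorrection m w) y =
      scaledDeriv μ w y + (m : 𝕜)⁻¹ * scaledDeriv μ (scaledDeriv 0 w) y := by
  have hθ := (analyticAt_scaledDeriv hw 0).differentiableAt
  have hc := differentiableAt_const (𝕜 := 𝕜) (m : 𝕜)⁻¹ (x := y)
  unfold ansatzCorrection
  rw [scaledDeriv_fun_add μ hw.differentiableAt (hc.fun_mul hθ), scaledDeriv_fun_mul μ hc hθ,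
    scaledDeriv_fun_const, zero_mul, zero_add]

lemma isTameOperator_scaledDeriv_ansatzCorrection (hb : b 0 = 0) (m : ℕ) (μ : Fin (n + 1)) :
    IsTameOperator b fun w => scaledDeriv μ (ansatzCorrection m w) :=
  ((isTameOperator_scaledDeriv hb μ).add ((isTameOperator_const analyticAt_const).mul
    (isTameOperator_scaledDeriv_scaledDeriv hb μ 0))).congr fun _ hw =>
      hw.eventually_analyticAt.mono fun _ hy => scaledDeriv_ansatzCorrection μ hy

lemma scaledDeriv_ansatzTime (μ : Fin (n + 1)) (hw : AnalyticAt 𝕜 w y) :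
    scaledDeriv μ (ansatzTime m A w) y =
      y 0 * ((if μ = 0 then ansatzCorrection m w y else 0) +
        scaledDeriv μ (ansatzCorrection m w) y) := by
  have hz := (analyticAt_ansatzCorrection (m := m) hw).differentiableAt
  have hy := (analyticAt_coord 0 y).differentiableAt
  have hderiv := scaledDeriv_coord_zero_pow μ 1 y
  simp only [pow_one, Nat.cast_one, one_mul] at hderiv
  unfold ansatzTime
  rw [scaledDeriv_fun_add μ (differentiableAt_const A) (hy.fun_mul hz), scaledDeriv_fun_const,
    scaledDeriv_fun_mul μ hy hz, hderiv]
  split_ifs <;> ring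

lemma isTameOperator_scaledDeriv_zero_ansatzTime (hb : b 0 = 0) (m : ℕ) (A : 𝕜) :
    IsTameOperator b fun w => scaledDeriv 0 (ansatzTime m A w) :=
  ((isTameOperator_coordZero b).mul ((isTameOperator_ansatzCorrection hb m).add
    (isTameOperator_scaledDeriv_ansatzCorrection hb m 0))).congr fun _ hw =>
      hw.eventually_analyticAt.mono fun _ hy => scaledDeriv_ansatzTime 0 hy

lemma scaledDeriv_ansatzSpace (μ : Fin (n + 1)) {i : Fin n}
    (hP : AnalyticAt 𝕜 (fun y => P y i) y) (hw : AnalyticAt 𝕜 w y) :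
    scaledDeriv μ (ansatzSpace m A P i w) y =
      -scaledDeriv μ (fun y => P y i) y * ansatzTime m A w y -
        P y i * scaledDeriv μ (ansatzTime m A w) y +
        y 0 ^ m * ((if μ = 0 then m * scaledDeriv i.succ w y else 0) +
          scaledDeriv μ (scaledDeriv i.succ w) y) := by
  have hp := (analyticAt_ansatzTime (m := m) (A := A) hw).differentiableAt
  have hD := (analyticAt_scaledDeriv hw i.succ).differentiableAt
  have hy := (analyticAt_coord 0 y).differentiableAt.fun_pow m
  have hPneg : DifferentiableAt 𝕜 (fun y => -P y i) y := hP.neg.differentiableAt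
  have hneg : scaledDeriv μ (fun y => -P y i) y = -scaledDeriv μ (fun y => P y i) y := by
    simp [scaledDeriv, partialDeriv, fderiv_fun_neg]
  unfold ansatzSpace
  rw [scaledDeriv_fun_add μ (hPneg.fun_mul hp) (hy.fun_mul hD),
    scaledDeriv_fun_mul μ hPneg hp, hneg, scaledDeriv_fun_mul μ hy hD,
    scaledDeriv_coord_zero_pow]
  split_ifs <;> ring

lemma eqModSq_ansatzSpace (hb : b 0 = 0) (hm : 2 ≤ m) (A : 𝕜) {i : Fin n}
    (hP : AnalyticAt 𝕜 (fun y => P y i) b) :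
    EqModSq b (ansatzSpace m A P i) ((fun _ y => -P y i) * ansatzTime m A) := by
  have h := (EqModSq.refl ((isTameOperator_const hP.neg).mul
    (isTameOperator_ansatzTime hb m A))).add
      (eqModSq_coordZero_pow_mul hm (isTameOperator_scaledDeriv hb i.succ))
  rwa [add_zero] at h

lemma eqModSq_ansatzGrad (hb : b 0 = 0) (hm : 2 ≤ m) (A : 𝕜)
    (hP : ∀ i, AnalyticAt 𝕜 (fun y => P y i) b) (k : Fin (n + 1)) :
    EqModSq b (ansatzGrad m A P k) (ansatzTime m A * fun _ y => conormal (P y) k) := by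
  rw [mul_comm]
  cases k using Fin.cases with
  | zero =>
    have hone : (fun _ y => conormal (P y) 0 : FunctionOperator 𝕜 n) = 1 := rfl
    rw [hone, one_mul]
    exact .refl (isTameOperator_ansatzTime hb m A)
  | succ i => exact eqModSq_ansatzSpace hb hm A (hP i)

lemma eqModSq_scaledDeriv_zero_ansatzSpace (hb : b 0 = 0) (hm : 2 ≤ m) (A : 𝕜) {i : Fin n}
    (hP : AnalyticAt 𝕜 (fun y => P y i) b)
    (hP0 : ∀ᶠ y in 𝓝 b, partialDeriv 0 (fun y => P y i) y = 0) :
    EqModSq b (fun w => scaledDeriv 0 (ansatzSpace m A P i w))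
      ((fun _ y => -P y i) * fun w => scaledDeriv 0 (ansatzTime m A w)) := by
  have hmain := (isTameOperator_const hP.neg).mul
    (isTameOperator_scaledDeriv_zero_ansatzTime hb m A)
  have hrest := ((isTameOperator_const (b := b) (c := fun _ => (m : 𝕜)) analyticAt_const).mul
    (isTameOperator_scaledDeriv hb i.succ)).add
      (isTameOperator_scaledDeriv_scaledDeriv hb 0 i.succ)
  have h := (EqModSq.refl hmain).add (eqModSq_coordZero_pow_mul hm hrest)
  rw [add_zero] at h
  refine (EqModSq.of_eventuallyEq h.isTameOperator_left fun w hw => ?_).trans h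
  filter_upwards [hw.eventually_analyticAt, hP.eventually_analyticAt, hP0] with y hwy hPy hP0y
  rw [scaledDeriv_ansatzSpace 0 hPy hwy, scaledDeriv.eq_1 0 fun y => P y i, hP0y]
  simp [coordZero]

lemma eqModSq_coordZero_pow_mul_scaledDeriv_succ_ansatzSpace (hb : b 0 = 0) (hm : 2 ≤ m) (A : 𝕜)
    {i : Fin n} (hP : AnalyticAt 𝕜 (fun y => P y i) b) :
    EqModSq b (coordZero ^ (m - 1) * fun w => scaledDeriv i.succ (ansatzSpace m A P i w)) 0 := by
  have hX := isTameOperator_coordZero b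
  have htame := (((isTameOperator_const (analyticAt_partialDeriv hP i.succ).neg).mul
    (isTameOperator_ansatzTime hb m A)).add ((isTameOperator_const hP.neg).mul
      (isTameOperator_scaledDeriv_ansatzCorrection hb m i.succ))).add
        ((hX.pow (m - 1)).mul (isTameOperator_scaledDeriv_scaledDeriv hb i.succ i.succ))
  have h := eqModSq_coordZero_pow_mul hm htame
  refine (EqModSq.of_eventuallyEq h.isTameOperator_left fun w hw => ?_).trans h
  filter_upwards [hw.eventually_analyticAt, hP.eventually_analyticAt] with y hwy hPy
  have hsucc : y 0 ^ m = y 0 ^ (m - 1) * y 0 := by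
    rw [← pow_succ, Nat.sub_add_cancel (one_le_two.trans hm)]
  simp only [Pi.mul_apply, Pi.add_apply, Pi.pow_apply, coordZero,
    scaledDeriv_ansatzSpace i.succ hPy hwy, scaledDeriv_ansatzTime i.succ hwy,
    if_neg (Fin.succ_ne_zero i), hsucc]
  rw [scaledDeriv.eq_1 i.succ fun y => P y i]
  simp only [Pi.neg_apply]
  ring

lemma analyticAt_one_sub_sum_sq (hP : ∀ i, AnalyticAt 𝕜 (fun y => P y i) b) :
    AnalyticAt 𝕜 (fun y => 1 - ∑ i, P y i ^ 2) b :=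
  analyticAt_const.sub (Finset.analyticAt_fun_sum _ fun i _ => (hP i).pow 2)

theorem eqModSq_ansatzWave (hb : b 0 = 0) (hm : 2 ≤ m) (A : 𝕜)
    (hP : ∀ i, AnalyticAt 𝕜 (fun y => P y i) b)
    (hP0 : ∀ i, ∀ᶠ y in 𝓝 b, partialDeriv 0 (fun y => P y i) y = 0) :
    EqModSq b (ansatzWave m A P) ((fun _ y => (m : 𝕜)⁻¹ * (1 - ∑ i, P y i ^ 2)) *
      ((fun w => scaledDeriv 0 (ansatzTime m A w)) - ansatzTime m A)) := by
  set θp : FunctionOperator 𝕜 n := fun w => scaledDeriv 0 (ansatzTime m A w) with hθp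
  have hminv := EqModSq.refl (isTameOperator_const (b := b) (c := fun _ => (m : 𝕜)⁻¹)
    analyticAt_const)
  have htime : EqModSq b (θp - ansatzTime m A) (θp - ansatzTime m A) :=
    (EqModSq.refl (isTameOperator_scaledDeriv_zero_ansatzTime hb m A)).sub
      (.refl (isTameOperator_ansatzTime hb m A))
  have hspace (i : Fin n) := ((EqModSq.refl (isTameOperator_const (hP i))).mul (hminv.mul
    ((eqModSq_scaledDeriv_zero_ansatzSpace hb hm A (hP i) (hP0 i)).sub
      (eqModSq_ansatzSpace hb hm A (hP i))))).sub
        (eqModSq_coordZero_pow_mul_scaledDeriv_succ_ansatzSpace hb hm A (hP i))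
  have h := (hminv.mul htime).add (EqModSq.sum (s := Finset.univ) fun i _ => hspace i)
  refine (EqModSq.of_eventuallyEq h.isTameOperator_left fun w _ => .of_eq ?_).trans
    (h.trans (.of_eventuallyEq ((isTameOperator_const (analyticAt_const.mul
      (analyticAt_one_sub_sum_sq hP))).mul htime.1) fun w _ => .of_eq ?_))
  · ext y
    simp [ansatzWave, coordZero, hθp]
  · ext y
    simp only [Pi.add_apply, Pi.mul_apply, Pi.sub_apply, Finset.sum_apply, sub_zero,
      mul_sub, sub_mul, Finset.mul_sum, Finset.sum_mul, Finset.sum_sub_distrib, ← hθp]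
    have hsq (F : 𝕜) : ∑ i, P y i * ((m : 𝕜)⁻¹ * (-P y i * F)) =
        -∑ i, (m : 𝕜)⁻¹ * P y i ^ 2 * F := by
      rw [← Finset.sum_neg_distrib]
      exact Finset.sum_congr rfl fun i _ => by ring
    rw [hsq, hsq]
    ring

variable {c c₀ : (l : ℕ) → (Fin l → Fin (n + 1)) → (Fin (n + 1) → 𝕜) → 𝕜}

lemma eqModSq_homogForm_ansatzGrad (hb : b 0 = 0) (hm : 2 ≤ m) (A : 𝕜)
    (hP : ∀ i, AnalyticAt 𝕜 (fun y => P y i) b) {l : ℕ}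
    (hc : ∀ μ, EqModSq b (fun _ => c l μ) fun _ => c₀ l μ) :
    EqModSq b (homogForm (fun μ _ => c l μ) (ansatzGrad m A P))
      (ansatzTime m A ^ l * fun _ y => homogForm (fun μ => c₀ l μ y) (conormal (P y))) := by
  have h := EqModSq.homogForm hc (eqModSq_ansatzGrad hb hm A hP)
  rw [homogForm_const_mul] at h
  rwa [homogForm_const] at h

lemma eqModSq_sum_range_ansatzNonlinearity (hb : b 0 = 0) (m : ℕ) (A : 𝕜)
    (hP : ∀ i, AnalyticAt 𝕜 (fun y => P y i) b)
    (hc : ∀ l < m, ∀ μ, IsTameOperator b fun _ => c l μ) :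
    EqModSq b (∑ l ∈ Finset.range m,
      coordZero ^ (m + 1 - l) * homogForm (fun μ _ => c l μ) (ansatzGrad m A P)) 0 := by
  have hterm (l : ℕ) (hl : l ∈ Finset.range m) : EqModSq b
      (coordZero ^ (m + 1 - l) * homogForm (fun μ _ => c l μ) (ansatzGrad m A P)) 0 :=
    eqModSq_coordZero_pow_mul (by have := Finset.mem_range.1 hl; lia)
      (.homogForm (hc l (Finset.mem_range.1 hl)) (isTameOperator_ansatzGrad hb m A hP))
  simpa only [Finset.sum_const_zero] using EqModSq.sum hterm

lemma eqModSq_homogForm_ansatzGrad_of_eq (hb : b 0 = 0) (hm : 2 ≤ m) (hA : A ≠ 0)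
    (hP : ∀ i, AnalyticAt 𝕜 (fun y => P y i) b)
    (hc : ∀ μ, EqModSq b (fun _ => c (m + 1) μ) fun _ => c₀ (m + 1) μ)
    (hc₀ : ∀ᶠ y in 𝓝 b, homogForm (fun μ => c₀ (m + 1) μ y) (conormal (P y)) * (m * A ^ m) =
      -(1 - ∑ i, P y i ^ 2)) :
    EqModSq b (homogForm (fun μ _ => c (m + 1) μ) (ansatzGrad m A P))
      ((fun _ y => -((m : 𝕜)⁻¹ * (1 - ∑ i, P y i ^ 2))) *
        ((fun _ _ => A) + (fun _ _ => (m : 𝕜) + 1) * (coordZero * ansatzCorrection m))) := by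
  have hm0 : (m : 𝕜) ≠ 0 := Nat.cast_ne_zero.2 (by lia)
  have hA' : IsTameOperator b fun _ _ => A := isTameOperator_const analyticAt_const
  have hz := isTameOperator_ansatzCorrection (𝕜 := 𝕜) hb m
  have hform : IsTameOperator b
      fun _ y => homogForm (fun μ => c₀ (m + 1) μ y) (conormal (P y)) := by
    have hcon (k : Fin (n + 1)) : AnalyticAt 𝕜 (fun y => conormal (P y) k) b := by
      cases k using Fin.cases with
      | zero => exact analyticAt_const
      | succ i => exact (hP i).neg
    rw [← homogForm_const (fun μ => c₀ (m + 1) μ) fun k y => conormal (P y) k]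
    exact .homogForm (fun μ => (hc μ).1) fun k => isTameOperator_const (hcon k)
  have hgrad := eqModSq_homogForm_ansatzGrad hb hm A hP hc
  have hexp := (eqModSq_add_coordZero_mul_pow hA' hz (m + 1)).mul (.refl hform)
  have htame := (isTameOperator_const (analyticAt_const.mul (analyticAt_one_sub_sum_sq hP)
    (f := fun _ => (m : 𝕜)⁻¹)).neg).mul (hA'.add ((isTameOperator_const (c := fun _ => (m : 𝕜) + 1)
      analyticAt_const).mul ((isTameOperator_coordZero b).mul hz)))
  refine (hgrad.trans hexp).trans (.of_eventuallyEq htame fun w _ => ?_)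
  filter_upwards [hc₀] with y hy
  have hval : homogForm (fun μ => c₀ (m + 1) μ y) (conormal (P y)) =
      -(1 - ∑ i, P y i ^ 2) / (m * A ^ m) := by
    rw [← hy, mul_div_cancel_right₀ _ (mul_ne_zero hm0 (pow_ne_zero m hA))]
  simp only [Pi.mul_apply, Pi.add_apply, Pi.pow_apply, Pi.natCast_apply, hval, coordZero]
  field_simp
  simp
  ring

theorem eqModSq_ansatzNonlinearity (hb : b 0 = 0) (hm : 2 ≤ m) (hA : A ≠ 0)
    (hP : ∀ i, AnalyticAt 𝕜 (fun y => P y i) b)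
    (hc : ∀ l ≤ m + 1, ∀ μ, EqModSq b (fun _ => c l μ) fun _ => c₀ l μ)
    (hc₀ : ∀ᶠ y in 𝓝 b, homogForm (fun μ => c₀ m μ y) (conormal (P y)) = 0)
    (hc₀' : ∀ᶠ y in 𝓝 b, homogForm (fun μ => c₀ (m + 1) μ y) (conormal (P y)) * (m * A ^ m) =
      -(1 - ∑ i, P y i ^ 2)) :
    EqModSq b (ansatzNonlinearity m A P c)
      ((fun _ y => -((m : 𝕜)⁻¹ * (1 - ∑ i, P y i ^ 2))) *
        ((fun _ _ => A) + (fun _ _ => (m : 𝕜) + 1) * (coordZero * ansatzCorrection m))) := by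
  have hlow := eqModSq_sum_range_ansatzNonlinearity hb m A hP fun l hl μ =>
    (hc l (by lia) μ).isTameOperator_left
  have hdeg : EqModSq b (coordZero * homogForm (fun μ _ => c m μ) (ansatzGrad m A P)) 0 := by
    refine ((EqModSq.refl (isTameOperator_coordZero b)).mul
      (eqModSq_homogForm_ansatzGrad hb hm A hP (hc m (by lia)))).trans
        (.of_eventuallyEq (tameOperators b).zero_mem fun w _ => ?_)
    filter_upwards [hc₀] with y hy
    simp [hy]
  have htop := eqModSq_homogForm_ansatzGrad_of_eq hb hm hA hP (hc (m + 1) le_rfl) hc₀'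
  have h := (hlow.add hdeg).add htop
  rw [ansatzNonlinearity, Finset.sum_range_succ, Finset.sum_range_succ, Nat.add_sub_cancel_left,
    Nat.sub_self, pow_one, pow_zero, one_mul]
  simpa only [zero_add] using h

lemma indicialPoly_ne_zero (hm : m ≠ 0) (k : ℕ) :
    indicialPoly (2 * m + 1 : 𝕜) (m * (m + 1)) k ≠ 0 := by
  have hfac : indicialPoly (2 * m + 1 : 𝕜) (m * (m + 1)) k = (k + m) * (k + m + 1) := by
    unfold indicialPoly
    ring
  rw [hfac]
  exact_mod_cast (by positivity : (k + m) * (k + m + 1) ≠ 0)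

lemma fuchsianOperator_eq_scaledDeriv_ansatzCorrection (hm : m ≠ 0) (hw : AnalyticAt 𝕜 w y) :
    fuchsianOperator (2 * m + 1 : 𝕜) (m * (m + 1)) w y =
      m * (scaledDeriv 0 (ansatzCorrection m w) y + (m + 1) * ansatzCorrection m w y) := by
  have hm0 : (m : 𝕜) ≠ 0 := Nat.cast_ne_zero.2 hm
  rw [scaledDeriv_ansatzCorrection 0 hw]
  simp only [ansatzCorrection, fuchsianOperator]
  field_simp
  ring

theorem exists_ansatzWave_sub_ansatzNonlinearity_eq (hb : b 0 = 0) (hm : 2 ≤ m) (hA : A ≠ 0)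
    (hP : ∀ i, AnalyticAt 𝕜 (fun y => P y i) b)
    (hP0 : ∀ i, ∀ᶠ y in 𝓝 b, partialDeriv 0 (fun y => P y i) y = 0)
    (hS : 1 - ∑ i, P b i ^ 2 ≠ 0)
    (hc : ∀ l ≤ m + 1, ∀ μ, EqModSq b (fun _ => c l μ) fun _ => c₀ l μ)
    (hc₀ : ∀ᶠ y in 𝓝 b, homogForm (fun μ => c₀ m μ y) (conormal (P y)) = 0)
    (hc₀' : ∀ᶠ y in 𝓝 b, homogForm (fun μ => c₀ (m + 1) μ y) (conormal (P y)) * (m * A ^ m) =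
      -(1 - ∑ i, P y i ^ 2)) :
    ∃ (H : FunctionOperator 𝕜 n) (γ : (Fin (n + 1) → 𝕜) → 𝕜), IsTameOperator b H ∧
      (∀ᶠ y in 𝓝 b, γ y ≠ 0) ∧ ∀ w, AnalyticAt 𝕜 w b → ∀ᶠ y in 𝓝 b,
        ansatzWave m A P w y - ansatzNonlinearity m A P c w y = γ y *
          (y 0 * (fuchsianOperator (2 * m + 1 : 𝕜) (m * (m + 1)) w y - y 0 * H w y)) := by
  have hmne : m ≠ 0 := by lia
  have hm0 : (m : 𝕜) ≠ 0 := Nat.cast_ne_zero.2 hmne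
  set γ : (Fin (n + 1) → 𝕜) → 𝕜 := fun y => (m : 𝕜)⁻¹ * (m : 𝕜)⁻¹ * (1 - ∑ i, P y i ^ 2) with hγ
  have hγan : AnalyticAt 𝕜 γ b := analyticAt_const.mul (analyticAt_one_sub_sum_sq hP)
  have hγb : γ b ≠ 0 := mul_ne_zero (mul_ne_zero (inv_ne_zero hm0) (inv_ne_zero hm0)) hS
  have hγne : ∀ᶠ y in 𝓝 b, γ y ≠ 0 := hγan.continuousAt.eventually_ne hγb
  obtain ⟨-, K, hK, hdiff⟩ := (eqModSq_ansatzWave hb hm A hP hP0).sub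
    (eqModSq_ansatzNonlinearity hb hm hA hP hc hc₀ hc₀')
  refine ⟨(fun _ y => -(γ y)⁻¹) * K, γ, (isTameOperator_const (hγan.inv hγb).neg).mul hK, hγne,
    fun w hw => ?_⟩
  filter_upwards [hγne, hdiff w hw, hw.eventually_analyticAt] with y hγy hy hwy
  have hrest : y 0 ^ 2 * K w y = -(γ y * (y 0 * (y 0 * (-(γ y)⁻¹ * K w y)))) := by
    field_simp
  have htime := scaledDeriv_ansatzTime (m := m) (A := A) 0 hwy
  rw [if_pos rfl] at htime
  have hlead : (m : 𝕜)⁻¹ * (1 - ∑ i, P y i ^ 2) *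
      (scaledDeriv 0 (ansatzTime m A w) y - ansatzTime m A w y) -
        -((m : 𝕜)⁻¹ * (1 - ∑ i, P y i ^ 2)) * (A + (m + 1) * (y 0 * ansatzCorrection m w y)) =
      γ y * (y 0 * fuchsianOperator (2 * m + 1 : 𝕜) (m * (m + 1)) w y) := by
    rw [fuchsianOperator_eq_scaledDeriv_ansatzCorrection hmne hwy, htime]
    simp only [hγ, ansatzTime]
    field_simp
    ring
  simp only [Pi.sub_apply, Pi.mul_apply, Pi.add_apply, coordZero, hlead, hrest] at hy
  exact hy.trans (by simp only [Pi.mul_apply]; ring)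

end ReducedEquation

section CoordinateDivision

open Topology MvPowerSeries

variable {𝕜 ι : Type*} [RCLike 𝕜]

/-- The quotient of `f` by `X μ`, in which the monomials free of `X μ` are discarded. -/
noncomputable def divX (f : MvPowerSeries ι 𝕜) (μ : ι) : MvPowerSeries ι 𝕜 :=
  fun β => coeff (β + Finsupp.single μ 1) f

lemma coeff_divX (f : MvPowerSeries ι 𝕜) (μ : ι) (β : ι →₀ ℕ) :
    coeff β (divX f μ) = coeff (β + Finsupp.single μ 1) f := rfl

lemma coeff_sub_X_mul_divX (f : MvPowerSeries ι 𝕜) {μ : ι} {β : ι →₀ ℕ} (hβ : β μ ≠ 0) :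
    coeff β (f - X μ * divX f μ) = 0 := by
  rw [map_sub, ← Finsupp.sub_add_single_one_cancel hβ, coeff_add_single_X_mul, coeff_divX, sub_self]

lemma summable_norm_coeff_divX {f : MvPowerSeries ι 𝕜} {ρ : ℝ} (hρ : 0 < ρ)
    (hf : Summable fun β : ι →₀ ℕ => ‖coeff β f‖ * ρ ^ β.degree) (μ : ι) :
    Summable fun β : ι →₀ ℕ => ‖coeff β (divX f μ)‖ * ρ ^ β.degree := by
  refine ((hf.comp_injective (add_left_injective (Finsupp.single μ 1))).mul_left ρ⁻¹).congr
    fun β => ?_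
  simp only [Function.comp_def, coeff_divX, map_add, Finsupp.degree_single, pow_succ]
  field_simp

variable [Fintype ι] [DecidableEq ι]

lemma HasMvPowerSeriesAt.eventually_apply_update {g : (ι → 𝕜) → 𝕜} {f : MvPowerSeries ι 𝕜}
    {b : ι → 𝕜} {μ : ι} (h : HasMvPowerSeriesAt g f b) (hf : ∀ β, β μ ≠ 0 → coeff β f = 0) :
    ∀ᶠ y in 𝓝 b, g (Function.update y μ (b μ)) = g y := by
  obtain ⟨ρ, h⟩ := h
  filter_upwards [Metric.closedBall_mem_nhds b h.pos] with y hy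
  have hupdate : Function.update y μ (b μ) - b = Function.update (y - b) μ 0 := by
    ext i
    rcases eq_or_ne i μ with rfl | hi <;> simp [*]
  have hyb : ‖y - b‖ ≤ ρ := mem_closedBall_iff_norm.1 hy
  have hyb' : ‖Function.update y μ (b μ) - b‖ ≤ ρ := by
    rw [hupdate]
    exact norm_update_le hyb (norm_zero.trans_le h.pos.le) μ
  have hsum := h.hasSum _ hyb
  have hsum' := h.hasSum _ hyb'
  rw [add_sub_cancel] at hsum hsum'
  refine hsum'.unique (hsum.congr_fun fun β => ?_)
  rcases eq_or_ne (β μ) 0 with hβ | hβ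
  · rw [hupdate, multiPow_update, hβ, pow_zero, ← Function.update_eq_self μ (y - b),
      multiPow_update, hβ, pow_zero, Function.update_eq_self]
  · rw [hf β hβ, zero_mul, zero_mul]

theorem exists_eventually_eq_update_add_mul {g : (ι → 𝕜) → 𝕜} {b : ι → 𝕜} (hg : AnalyticAt 𝕜 g b)
    (μ : ι) :
    ∃ g₁, AnalyticAt 𝕜 g₁ b ∧
      ∀ᶠ y in 𝓝 b, g y = g (Function.update y μ (b μ)) + (y μ - b μ) * g₁ y := by
  obtain ⟨f, ρ, hf⟩ := exists_hasMvPowerSeriesAt hg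
  have hdiv : HasMvPowerSeriesAt _ (divX f μ) b :=
    ⟨ρ, hasMvPowerSeriesOnClosedBall_tsum hf.pos (summable_norm_coeff_divX hf.pos hf.summable μ) b⟩
  have hrem := HasMvPowerSeriesAt.sub ⟨ρ, hf⟩ ((hasMvPowerSeriesAt_coord_sub μ b).mul hdiv)
  refine ⟨_, hdiv.analyticAt, ?_⟩
  filter_upwards [hrem.eventually_apply_update fun β hβ => coeff_sub_X_mul_divX f hβ] with y hy
  simp only [Pi.sub_apply, Pi.mul_apply, Function.update_self, sub_self, zero_mul, sub_zero] at hy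
  rw [hy, sub_add_cancel]

end CoordinateDivision

section Gluing

open Metric Topology

variable {E F : Type*} [NormedAddCommGroup E] [NormedSpace ℝ E] [NormedAddCommGroup F]
  [NormedSpace ℝ F] [CompleteSpace F] {S : Set E} {p : E → E}

lemma apply_mem_ball_of_lipschitzWith_one {X : Type*} [PseudoMetricSpace X] {p : X → X}
    (hp : LipschitzWith 1 p) {b y : X} {r : ℝ} (hb : p b = b) (hy : y ∈ ball b r) :
    p y ∈ ball b r := by
  have := hp.mapsTo_ball one_ne_zero b r hy
  rwa [hb, NNReal.coe_one, one_mul] at this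

lemma lipschitzWith_one_update {ι : Type*} {X : ι → Type*} [Fintype ι] [DecidableEq ι]
    [∀ i, PseudoMetricSpace (X i)] (i : ι) (a : X i) :
    LipschitzWith 1 fun y : ∀ i, X i => Function.update y i a := by
  refine LipschitzWith.of_dist_le_mul fun y z => ?_
  rw [NNReal.coe_one, one_mul, dist_pi_le_iff dist_nonneg]
  intro j
  rcases eq_or_ne j i with rfl | hj
  · simp
  · simpa [hj] using dist_le_pi_dist y z j

lemma exists_eqOn_of_eqOn_inter {α β ι : Type*} [Nonempty β] {s : ι → Set α} {w : ι → α → β}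
    (h : ∀ i j, Set.EqOn (w i) (w j) (s i ∩ s j)) : ∃ v, ∀ i, Set.EqOn v (w i) (s i) := by
  have hval (y : α) : ∃ z, ∀ i, y ∈ s i → z = w i y := by
    by_cases hy : ∃ j, y ∈ s j
    · obtain ⟨j, hj⟩ := hy
      exact ⟨w j y, fun i hi => h j i ⟨hj, hi⟩⟩
    · exact ⟨Classical.arbitrary β, fun i hi => (hy ⟨i, hi⟩).elim⟩
  choose v hv using hval
  exact ⟨v, fun i y hy => hv y i hy⟩

theorem exists_analyticOnNhd_of_existsUnique_germ {Sol : (E → F) → E → Prop}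
    (hcongr : ∀ {w w' y}, w =ᶠ[𝓝 y] w' → Sol w y → Sol w' y)
    (hp : LipschitzWith 1 p) (hfix : ∀ b ∈ S, p b = b) (hS : ∀ b ∈ S, ∀ᶠ y in 𝓝 b, p y ∈ S)
    (hex : ∀ b ∈ S, ∃ w, AnalyticAt ℝ w b ∧ ∀ᶠ y in 𝓝 b, Sol w y)
    (hun : ∀ b ∈ S, ∀ w w', AnalyticAt ℝ w b → AnalyticAt ℝ w' b → (∀ᶠ y in 𝓝 b, Sol w y) →
      (∀ᶠ y in 𝓝 b, Sol w' y) → w =ᶠ[𝓝 b] w') :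
    ∃ W, IsOpen W ∧ S ⊆ W ∧ (∀ y ∈ W, p y ∈ S) ∧
      ∃ w, AnalyticOnNhd ℝ w W ∧ ∀ y ∈ W, Sol w y := by
  have hloc (b : S) : ∃ w : E → F, ∃ ε > 0,
      ∀ y ∈ ball (b : E) ε, AnalyticAt ℝ w y ∧ Sol w y ∧ p y ∈ S := by
    obtain ⟨w, hw, hSol⟩ := hex b b.2
    exact ⟨w, eventually_nhds_iff_ball.1 (hw.eventually_analyticAt.and (hSol.and (hS b b.2)))⟩
  choose w ε hε hball using hloc
  have hagree (b b' : S) : Set.EqOn (w b) (w b') (ball b (ε b) ∩ ball b' (ε b')) := by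
    intro y hy
    have hpy : p y ∈ ball (b : E) (ε b) ∩ ball (b' : E) (ε b') :=
      ⟨apply_mem_ball_of_lipschitzWith_one hp (hfix b b.2) hy.1,
        apply_mem_ball_of_lipschitzWith_one hp (hfix b' b'.2) hy.2⟩
    have hgerm : w b =ᶠ[𝓝 (p y)] w b' := by
      refine hun (p y) (hball b y hy.1).2.2 _ _ (hball b _ hpy.1).1 (hball b' _ hpy.2).1 ?_ ?_
      · exact eventually_of_mem (isOpen_ball.mem_nhds hpy.1) fun z hz => (hball b z hz).2.1
      · exact eventually_of_mem (isOpen_ball.mem_nhds hpy.2) fun z hz => (hball b' z hz).2.1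
    exact AnalyticOnNhd.eqOn_of_preconnected_of_eventuallyEq (fun z hz => (hball b z hz.1).1)
      (fun z hz => (hball b' z hz.2).1)
      ((convex_ball _ _).inter (convex_ball _ _)).isPreconnected hpy hgerm hy
  obtain ⟨v, hv⟩ := exists_eqOn_of_eqOn_inter hagree
  have hgerm (b : S) {y : E} (hy : y ∈ ball (b : E) (ε b)) : w b =ᶠ[𝓝 y] v :=
    ((hv b).eventuallyEq_of_mem (isOpen_ball.mem_nhds hy)).symm
  refine ⟨⋃ b : S, ball b (ε b), isOpen_iUnion fun _ => isOpen_ball,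
    fun b hb => Set.mem_iUnion.2 ⟨⟨b, hb⟩, mem_ball_self (hε _)⟩, fun y hy => ?_, v,
    fun y hy => ?_, fun y hy => ?_⟩ <;> obtain ⟨b, hb⟩ := Set.mem_iUnion.1 hy
  · exact (hball b y hb).2.2
  · exact (hball b y hb).1.congr (hgerm b hb)
  · exact hcongr (hgerm b hb) (hball b y hb).2.1

end Gluing

section AnsatzLocality

open Topology

variable {𝕜 : Type*} [RCLike 𝕜] {n : ℕ} {w w' : (Fin (n + 1) → 𝕜) → 𝕜} {y : Fin (n + 1) → 𝕜}

lemma scaledDeriv_congr (μ : Fin (n + 1)) (h : w =ᶠ[𝓝 y] w') :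
    scaledDeriv μ w =ᶠ[𝓝 y] scaledDeriv μ w' := by
  filter_upwards [h.fderiv (𝕜 := 𝕜)] with z hz
  rw [scaledDeriv, scaledDeriv, partialDeriv, partialDeriv, hz]

lemma ansatzTime_congr (m : ℕ) (A : 𝕜) (h : w =ᶠ[𝓝 y] w') :
    ansatzTime m A w =ᶠ[𝓝 y] ansatzTime m A w' := by
  filter_upwards [h, scaledDeriv_congr 0 h] with z hz hz'
  simp only [ansatzTime, ansatzCorrection, hz, hz']

lemma ansatzSpace_congr (m : ℕ) (A : 𝕜) (P : (Fin (n + 1) → 𝕜) → Fin n → 𝕜) (i : Fin n)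
    (h : w =ᶠ[𝓝 y] w') : ansatzSpace m A P i w =ᶠ[𝓝 y] ansatzSpace m A P i w' := by
  filter_upwards [ansatzTime_congr m A h, scaledDeriv_congr i.succ h] with z hz hz'
  simp only [ansatzSpace, hz, hz']

lemma ansatzGrad_congr (m : ℕ) (A : 𝕜) (P : (Fin (n + 1) → 𝕜) → Fin n → 𝕜) (k : Fin (n + 1))
    (h : w =ᶠ[𝓝 y] w') : ansatzGrad m A P k w =ᶠ[𝓝 y] ansatzGrad m A P k w' := by
  cases k using Fin.cases with
  | zero => exact ansatzTime_congr m A h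
  | succ i => exact ansatzSpace_congr m A P i h

lemma ansatzWave_congr (m : ℕ) (A : 𝕜) (P : (Fin (n + 1) → 𝕜) → Fin n → 𝕜) (h : w =ᶠ[𝓝 y] w') :
    ansatzWave m A P w y = ansatzWave m A P w' y := by
  have htime := ansatzTime_congr m A h
  have hspace (i : Fin n) := ansatzSpace_congr m A P i h
  simp only [ansatzWave, htime.self_of_nhds, (scaledDeriv_congr 0 htime).self_of_nhds,
    fun i => (hspace i).self_of_nhds, fun i => (scaledDeriv_congr 0 (hspace i)).self_of_nhds,
    fun i : Fin n => (scaledDeriv_congr i.succ (hspace i)).self_of_nhds]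

lemma ansatzNonlinearity_apply (m : ℕ) (A : 𝕜) (P : (Fin (n + 1) → 𝕜) → Fin n → 𝕜)
    (c : (l : ℕ) → (Fin l → Fin (n + 1)) → (Fin (n + 1) → 𝕜) → 𝕜) (w : (Fin (n + 1) → 𝕜) → 𝕜)
    (y : Fin (n + 1) → 𝕜) :
    ansatzNonlinearity m A P c w y = ∑ l ∈ Finset.range (m + 2),
      y 0 ^ (m + 1 - l) * homogForm (fun μ => c l μ y) fun k => ansatzGrad m A P k w y := by
  simp only [ansatzNonlinearity, Finset.sum_apply, Pi.mul_apply, Pi.pow_apply, coordZero,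
    homogForm_apply]

lemma ansatzNonlinearity_congr (m : ℕ) (A : 𝕜) (P : (Fin (n + 1) → 𝕜) → Fin n → 𝕜)
    (c : (l : ℕ) → (Fin l → Fin (n + 1)) → (Fin (n + 1) → 𝕜) → 𝕜) (h : w =ᶠ[𝓝 y] w') :
    ansatzNonlinearity m A P c w y = ansatzNonlinearity m A P c w' y := by
  simp only [ansatzNonlinearity_apply, fun k => (ansatzGrad_congr m A P k h).self_of_nhds]

end AnsatzLocality

section GraphCoordinates

open Matrix Topology

variable {n : ℕ}

lemma analyticAt_vecTail (y : Fin (n + 1) → ℝ) :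
    AnalyticAt ℝ (vecTail : (Fin (n + 1) → ℝ) → Fin n → ℝ) y :=
  analyticAt_pi_iff.2 fun i => analyticAt_coord i.succ y

lemma analyticAt_comp_vecTail {E : Type*} [NormedAddCommGroup E] [NormedSpace ℝ E]
    {g : (Fin n → ℝ) → E} {y : Fin (n + 1) → ℝ} (hg : AnalyticAt ℝ g (vecTail y)) :
    AnalyticAt ℝ (fun y => g (vecTail y)) y :=
  hg.comp (analyticAt_vecTail y)

lemma vecTail_update_zero (y : Fin (n + 1) → ℝ) (s : ℝ) :
    vecTail (Function.update y 0 s) = vecTail y := by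
  ext i
  simp [vecTail]

lemma gradp_eq_partialDeriv {ψ : (Fin n → ℝ) → ℝ} {x : Fin n → ℝ} (h : DifferentiableAt ℝ ψ x)
    (i : Fin n) : gradp ψ x i = partialDeriv i ψ x :=
  (hasDerivAt_partialDeriv i h).deriv

lemma analyticAt_gradp {ψ : (Fin n → ℝ) → ℝ} {x : Fin n → ℝ} (h : AnalyticAt ℝ ψ x) (i : Fin n) :
    AnalyticAt ℝ (fun x => gradp ψ x i) x :=
  (analyticAt_partialDeriv h i).congr <| h.eventually_analyticAt.mono fun _ hz =>
    (gradp_eq_partialDeriv hz.differentiableAt i).symm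

lemma eventually_graph_mem {ψ : (Fin n → ℝ) → ℝ} {U : Set (ℝ × (Fin n → ℝ))} (hU : IsOpen U)
    {b : Fin (n + 1) → ℝ} (hψ : ContinuousAt ψ (vecTail b)) (hb : (ψ (vecTail b), vecTail b) ∈ U) :
    ∀ᶠ y in 𝓝 b, (ψ (vecTail y), vecTail y) ∈ U :=
  ((hψ.prodMk continuousAt_id).comp (analyticAt_vecTail b).continuousAt).eventually_mem
    (hU.mem_nhds hb)

-- After the substitution `t - ψ(x) = σ^m` with `m ≥ 2`, coefficients may be frozen on the graph.
lemma eqModSq_comp_graph {m : ℕ} (hm : 2 ≤ m) {c : ℝ → (Fin n → ℝ) → ℝ} {ψ : (Fin n → ℝ) → ℝ}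
    {x : Fin n → ℝ} (hc : AnalyticAt ℝ (fun p : ℝ × (Fin n → ℝ) => c p.1 p.2) (ψ x, x))
    (hψ : AnalyticAt ℝ ψ x) :
    EqModSq (vecCons 0 x) (fun _ y => c (ψ (vecTail y) + y 0 ^ m) (vecTail y))
      fun _ y => c (ψ (vecTail y)) (vecTail y) := by
  set b : Fin (n + 1) → ℝ := vecCons 0 x with hb
  have htail := analyticAt_vecTail b
  have hψb : AnalyticAt ℝ (fun y => ψ (vecTail y)) b :=
    analyticAt_comp_vecTail hψ
  have hG₀ : AnalyticAt ℝ (fun y => c (ψ (vecTail y)) (vecTail y)) b :=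
    AnalyticAt.comp_of_eq (f := fun y => (ψ (vecTail y), vecTail y)) hc (hψb.prod htail) rfl
  have hG : AnalyticAt ℝ (fun y => c (ψ (vecTail y) + y 0) (vecTail y)) b :=
    AnalyticAt.comp_of_eq (f := fun y => (ψ (vecTail y) + y 0, vecTail y)) hc
      ((hψb.add (analyticAt_coord 0 b)).prod htail) (by simp [hb])
  set Φ : (Fin (n + 1) → ℝ) → Fin (n + 1) → ℝ := fun y => vecCons (y 0 ^ m) (vecTail y)
  have hm0 : m ≠ 0 := by lia
  have hΦb : Φ b = b := by simp [Φ, hb, hm0]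
  have hΦ : AnalyticAt ℝ Φ b := by
    refine analyticAt_pi_iff.2 fun k => ?_
    cases k using Fin.cases with
    | zero => exact (analyticAt_coord 0 b).pow m
    | succ i => exact analyticAt_coord i.succ b
  obtain ⟨g, hg, hsplit⟩ := exists_eventually_eq_update_add_mul hG 0
  rw [← hΦb] at hg hsplit
  refine ⟨isTameOperator_const hG₀, fun _ y => y 0 ^ (m - 2) * g (Φ y),
    isTameOperator_const (((analyticAt_coord 0 b).pow _).mul (hg.comp hΦ)), fun _ _ => ?_⟩
  filter_upwards [hΦ.continuousAt.eventually hsplit] with y hy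
  rw [← mul_assoc, ← pow_add, Nat.add_sub_cancel' hm]
  simpa [Φ, hb, hm0, vecTail_update_zero] using hy

/-- The equation for `w` at `y = (σ, x)` that expresses that `u = a σ^{m-1} + σ^m w(σ, x)`, where
`t = ψ(x) + σ^m` and `A = a (m - 1) / m`, solves the wave equation whose nonlinearity has the
coefficients `c`. -/
def SolvesAnsatzEquation (m : ℕ) (A : ℝ) (ψ : (Fin n → ℝ) → ℝ)
    (c : (l : ℕ) → (Fin l → Fin (n + 1)) → ℝ → (Fin n → ℝ) → ℝ) (w : (Fin (n + 1) → ℝ) → ℝ)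
    (y : Fin (n + 1) → ℝ) : Prop :=
  ansatzWave m A (fun y => gradp ψ (vecTail y)) w y =
    ansatzNonlinearity m A (fun y => gradp ψ (vecTail y))
      (fun l μ y => c l μ (ψ (vecTail y) + y 0 ^ m) (vecTail y)) w y

lemma SolvesAnsatzEquation.congr {m : ℕ} {A : ℝ} {ψ : (Fin n → ℝ) → ℝ}
    {c : (l : ℕ) → (Fin l → Fin (n + 1)) → ℝ → (Fin n → ℝ) → ℝ} {w w' : (Fin (n + 1) → ℝ) → ℝ}
    {y : Fin (n + 1) → ℝ} (h : w =ᶠ[𝓝 y] w') (hw : SolvesAnsatzEquation m A ψ c w y) :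
    SolvesAnsatzEquation m A ψ c w' y :=
  (ansatzWave_congr m A _ h).symm.trans (hw.trans (ansatzNonlinearity_congr m A _ _ h))

variable {m : ℕ} {A : ℝ} {ψ : (Fin n → ℝ) → ℝ} {U : Set (ℝ × (Fin n → ℝ))}
  {c : (l : ℕ) → (Fin l → Fin (n + 1)) → ℝ → (Fin n → ℝ) → ℝ}

lemma exists_solvesAnsatzEquation_iff (hm : 2 ≤ m) (hA : A ≠ 0) (hU : IsOpen U)
    (hc : ∀ l ≤ m + 1, ∀ μ, AnalyticOnNhd ℝ (fun p : ℝ × (Fin n → ℝ) => c l μ p.1 p.2) U)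
    (hψ : AnalyticOnNhd ℝ ψ {x | (ψ x, x) ∈ U})
    (hchar : ∀ x, (ψ x, x) ∈ U → 1 - ∑ i, gradp ψ x i ^ 2 ≠ 0)
    (hcm : ∀ x, (ψ x, x) ∈ U → homogForm (fun μ => c m μ (ψ x) x) (conormal (gradp ψ x)) = 0)
    (hcm' : ∀ x, (ψ x, x) ∈ U → homogForm (fun μ => c (m + 1) μ (ψ x) x) (conormal (gradp ψ x)) *
      (m * A ^ m) = -(1 - ∑ i, gradp ψ x i ^ 2)) {x : Fin n → ℝ} (hx : (ψ x, x) ∈ U) :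
    ∃ H : FunctionOperator ℝ n, IsTameOperator (vecCons 0 x) H ∧
      ∀ w, AnalyticAt ℝ w (vecCons 0 x) → ∀ᶠ y in 𝓝 (vecCons 0 x),
        (SolvesAnsatzEquation m A ψ c w y ↔
          y 0 * (fuchsianOperator (2 * m + 1 : ℝ) (m * (m + 1)) w y - y 0 * H w y) = 0) := by
  have hmem := eventually_graph_mem (b := vecCons 0 x) hU (hψ x hx).continuousAt hx
  obtain ⟨H, γ, hH, hγ, heq⟩ := exists_ansatzWave_sub_ansatzNonlinearity_eq
    (b := vecCons 0 x) rfl hm hA (P := fun y => gradp ψ (vecTail y))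
    (fun i => analyticAt_comp_vecTail (g := fun x => gradp ψ x i)
      (analyticAt_gradp (hψ x hx) i))
    (fun i => .of_forall fun y => partialDeriv_eq_zero_of_update_eq fun s => by
      rw [vecTail_update_zero])
    (hchar x hx) (fun l hl μ => eqModSq_comp_graph hm (hc l hl μ _ hx) (hψ x hx))
    (hmem.mono fun y hy => hcm _ hy) (hmem.mono fun y hy => hcm' _ hy)
  refine ⟨H, hH, fun w hw => ?_⟩
  filter_upwards [heq w hw, hγ] with y hy hγy
  rw [SolvesAnsatzEquation, ← sub_eq_zero, hy, mul_eq_zero, or_iff_right hγy]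

theorem exists_analyticOnNhd_solvesAnsatzEquation (hm : 2 ≤ m) (hA : A ≠ 0) (hU : IsOpen U)
    (hc : ∀ l ≤ m + 1, ∀ μ, AnalyticOnNhd ℝ (fun p : ℝ × (Fin n → ℝ) => c l μ p.1 p.2) U)
    (hψ : AnalyticOnNhd ℝ ψ {x | (ψ x, x) ∈ U})
    (hchar : ∀ x, (ψ x, x) ∈ U → 1 - ∑ i, gradp ψ x i ^ 2 ≠ 0)
    (hcm : ∀ x, (ψ x, x) ∈ U → homogForm (fun μ => c m μ (ψ x) x) (conormal (gradp ψ x)) = 0)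
    (hcm' : ∀ x, (ψ x, x) ∈ U → homogForm (fun μ => c (m + 1) μ (ψ x) x) (conormal (gradp ψ x)) *
      (m * A ^ m) = -(1 - ∑ i, gradp ψ x i ^ 2)) :
    ∃ W : Set (Fin (n + 1) → ℝ), IsOpen W ∧ (∀ x, (ψ x, x) ∈ U → vecCons 0 x ∈ W) ∧
      (∀ y ∈ W, (ψ (vecTail y), vecTail y) ∈ U) ∧
      ∃ w, AnalyticOnNhd ℝ w W ∧ ∀ y ∈ W, SolvesAnsatzEquation m A ψ c w y := by
  set S : Set (Fin (n + 1) → ℝ) := {b | b 0 = 0 ∧ (ψ (vecTail b), vecTail b) ∈ U}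
  set p : (Fin (n + 1) → ℝ) → Fin (n + 1) → ℝ := fun y => Function.update y 0 0
  have hp : LipschitzWith 1 p := lipschitzWith_one_update 0 0
  have hfix (b) (hb : b ∈ S) : p b = b := Function.update_eq_self_iff.2 hb.1.symm
  have hS (b) (hb : b ∈ S) : ∀ᶠ y in 𝓝 b, p y ∈ S := by
    filter_upwards [eventually_graph_mem hU (hψ _ hb.2).continuousAt hb.2] with y hy
    exact ⟨Function.update_self .., by rwa [vecTail_update_zero]⟩
  have hiff (b) (hb : b ∈ S) : ∃ H : FunctionOperator ℝ n, IsTameOperator b H ∧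
      ∀ w, AnalyticAt ℝ w b → ∀ᶠ y in 𝓝 b, (SolvesAnsatzEquation m A ψ c w y ↔
        y 0 * (fuchsianOperator (2 * m + 1 : ℝ) (m * (m + 1)) w y - y 0 * H w y) = 0) := by
    have hbcons : b = vecCons 0 (vecTail b) := by rw [← hb.1]; exact (cons_head_tail b).symm
    rw [hbcons]
    exact exists_solvesAnsatzEquation_iff hm hA hU hc hψ hchar hcm hcm' hb.2
  have hroot := indicialPoly_ne_zero (𝕜 := ℝ) (show m ≠ 0 by lia)
  have hex (b) (hb : b ∈ S) : ∃ w, AnalyticAt ℝ w b ∧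
      ∀ᶠ y in 𝓝 b, SolvesAnsatzEquation m A ψ c w y := by
    obtain ⟨H, hH, hsol⟩ := hiff b hb
    obtain ⟨w, hw, heq⟩ := exists_fuchsianOperator_eq hb.1 hroot hH
    refine ⟨w, hw, ?_⟩
    filter_upwards [hsol w hw, heq] with y hy hyeq
    rw [hy, hyeq, sub_self, mul_zero]
  have hun (b) (hb : b ∈ S) (w w' : (Fin (n + 1) → ℝ) → ℝ) (hw : AnalyticAt ℝ w b)
      (hw' : AnalyticAt ℝ w' b) (h : ∀ᶠ y in 𝓝 b, SolvesAnsatzEquation m A ψ c w y)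
      (h' : ∀ᶠ y in 𝓝 b, SolvesAnsatzEquation m A ψ c w' y) : w =ᶠ[𝓝 b] w' := by
    obtain ⟨H, hH, hsol⟩ := hiff b hb
    exact eventuallyEq_of_fuchsianOperator_eq hb.1 hroot hH hw hw'
      (by filter_upwards [hsol w hw, h] with y hy using hy.1)
      (by filter_upwards [hsol w' hw', h'] with y hy using hy.1)
  obtain ⟨W, hW, hSW, hWS, hw⟩ :=
    exists_analyticOnNhd_of_existsUnique_germ (fun h hw => hw.congr h) hp hfix hS hex hun
  exact ⟨W, hW, fun x hx => hSW ⟨rfl, hx⟩,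
    fun y hy => by simpa only [vecTail_update_zero, p] using (hWS y hy).2, hw⟩

end GraphCoordinates

section RootCoordinates

open Matrix Topology

variable {n m : ℕ} {ψ : (Fin n → ℝ) → ℝ} {t : ℝ} {x : Fin n → ℝ} {g : (Fin (n + 1) → ℝ) → ℝ}

/-- The coordinates `y = (σ, x)` with `σ = (t - ψ(x))^{1/m}`; they are meaningful for `ψ(x) ≤ t`. -/
noncomputable def rootCoord (m : ℕ) (ψ : (Fin n → ℝ) → ℝ) (t : ℝ) (x : Fin n → ℝ) :
    Fin (n + 1) → ℝ :=
  vecCons ((t - ψ x) ^ ((1 : ℝ) / m)) x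

lemma vecTail_rootCoord (m : ℕ) (ψ : (Fin n → ℝ) → ℝ) (t : ℝ) (x : Fin n → ℝ) :
    vecTail (rootCoord m ψ t x) = x := rfl

lemma rootCoord_zero_pos (m : ℕ) (ht : ψ x < t) : 0 < rootCoord m ψ t x 0 :=
  rpow_pos_of_pos (sub_pos.2 ht) _

lemma rootCoord_zero_pow (hm : m ≠ 0) (ht : ψ x ≤ t) : rootCoord m ψ t x 0 ^ m = t - ψ x := by
  simpa [rootCoord] using rpow_inv_natCast_pow (sub_nonneg.2 ht) hm

lemma rootCoord_zero_pow_pred (hm : m ≠ 0) (ht : ψ x ≤ t) :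
    rootCoord m ψ t x 0 ^ (m - 1) = (t - ψ x) ^ (((m : ℝ) - 1) / m) := by
  rw [rootCoord, cons_val_zero, ← rpow_natCast, ← rpow_mul (sub_nonneg.2 ht),
    Nat.cast_pred (Nat.pos_of_ne_zero hm), one_div_mul_eq_div]

lemma rootCoord_zero_inv (ht : ψ x ≤ t) :
    (rootCoord m ψ t x 0)⁻¹ = (t - ψ x) ^ (-(1 : ℝ) / m) := by
  rw [rootCoord, cons_val_zero, ← rpow_neg (sub_nonneg.2 ht), neg_div]

lemma rootCoord_graph (hm : m ≠ 0) (ψ : (Fin n → ℝ) → ℝ) (x : Fin n → ℝ) :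
    rootCoord m ψ (ψ x) x = vecCons 0 x := by
  simp [rootCoord, hm]

lemma continuousAt_rootCoord (m : ℕ) (hψ : ContinuousAt ψ x) :
    ContinuousAt (fun p : ℝ × (Fin n → ℝ) => rootCoord m ψ p.1 p.2) (t, x) := by
  have hsub : ContinuousAt (fun p : ℝ × (Fin n → ℝ) => p.1 - ψ p.2) (t, x) :=
    continuousAt_fst.sub (hψ.comp (f := Prod.snd) continuousAt_snd)
  exact (hsub.rpow_const (.inr (by positivity))).finCons continuousAt_snd

lemma tendsto_rootCoord (hm : m ≠ 0) (ψ : (Fin n → ℝ) → ℝ) (x : Fin n → ℝ) :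
    Tendsto (fun t => rootCoord m ψ t x) (𝓝[>] ψ x) (𝓝 (vecCons 0 x)) := by
  have hroot : ContinuousAt (fun t => rootCoord m ψ t x) (ψ x) :=
    ((continuousAt_id.sub continuousAt_const).rpow_const (.inr (by positivity))).finCons
      continuousAt_const
  rw [← rootCoord_graph hm ψ x]
  exact hroot.tendsto.mono_left nhdsWithin_le_nhds

lemma analyticAt_vecCons {E : Type*} [NormedAddCommGroup E] [NormedSpace ℝ E] {f : E → ℝ}
    {h : E → Fin n → ℝ} {e : E} (hf : AnalyticAt ℝ f e) (hh : AnalyticAt ℝ h e) :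
    AnalyticAt ℝ (fun e => vecCons (f e) (h e)) e := by
  refine analyticAt_pi_iff.2 fun k => ?_
  cases k using Fin.cases with
  | zero => exact hf
  | succ i => exact analyticAt_pi_iff.1 hh i

lemma analyticAt_sub_rpow (hψ : AnalyticAt ℝ ψ x) (ht : ψ x < t) (r : ℝ) :
    AnalyticAt ℝ (fun p : ℝ × (Fin n → ℝ) => (p.1 - ψ p.2) ^ r) (t, x) :=
  (contDiffAt_rpow_const_of_ne (sub_ne_zero.2 ht.ne')).analyticAt.comp_of_eq
    (f := fun p : ℝ × (Fin n → ℝ) => p.1 - ψ p.2)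
    (analyticAt_fst.sub (hψ.comp_of_eq analyticAt_snd rfl)) rfl

lemma analyticAt_rootCoord (m : ℕ) (hψ : AnalyticAt ℝ ψ x) (ht : ψ x < t) :
    AnalyticAt ℝ (fun p : ℝ × (Fin n → ℝ) => rootCoord m ψ p.1 p.2) (t, x) :=
  analyticAt_vecCons (analyticAt_sub_rpow hψ ht _) analyticAt_snd

lemma hasDerivAt_rpow_one_div (hm : m ≠ 0) {h : ℝ → ℝ} {h' s : ℝ} (hh : HasDerivAt h h' s)
    (hpos : 0 < h s) : HasDerivAt (fun r => h r ^ ((1 : ℝ) / m))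
      (h' * (m : ℝ)⁻¹ * (h s ^ ((1 : ℝ) / m) / (h s ^ ((1 : ℝ) / m)) ^ m)) s := by
  have hpow : (h s ^ ((1 : ℝ) / m)) ^ m = h s := by
    rw [one_div, rpow_inv_natCast_pow hpos.le hm]
  rw [hpow, ← rpow_sub_one hpos.ne', ← one_div]
  exact hh.rpow_const (.inl hpos.ne')

lemma fderiv_apply_eq_sum_partialDeriv {ι : Type*} [Fintype ι] [DecidableEq ι] (g : (ι → ℝ) → ℝ)
    (y v : ι → ℝ) : fderiv ℝ g y v = ∑ k, v k * partialDeriv k g y := by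
  conv_lhs => rw [pi_eq_sum_univ' v]
  simp only [map_sum, map_smul, smul_eq_mul, partialDeriv]

lemma hasDerivAt_comp_vecCons_rpow (hm : m ≠ 0) {h : ℝ → ℝ} {ξ : ℝ → Fin n → ℝ} {h' s : ℝ}
    {ξ' : Fin n → ℝ} (hh : HasDerivAt h h' s) (hξ : HasDerivAt ξ ξ' s) (hpos : 0 < h s)
    {y : Fin (n + 1) → ℝ} (hy : vecCons (h s ^ ((1 : ℝ) / m)) (ξ s) = y)
    (hg : DifferentiableAt ℝ g y) :
    HasDerivAt (fun r => g (vecCons (h r ^ ((1 : ℝ) / m)) (ξ r)))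
      (h' * ((m : ℝ)⁻¹ * scaledDeriv 0 g y / y 0 ^ m) + ∑ i, ξ' i * partialDeriv i.succ g y) s := by
  subst hy
  have hcurve := (hasDerivAt_rpow_one_div hm hh hpos).finCons (F' := fun _ => ℝ) hξ
  convert! hg.hasFDerivAt.comp_hasDerivAt s hcurve using 1
  rw [fderiv_apply_eq_sum_partialDeriv, Fin.sum_univ_succ]
  simp only [Fin.cons_zero, Fin.cons_succ, scaledDeriv, cons_val_zero]
  congr 1
  ring

lemma hasDerivAt_comp_rootCoord_time (hm : m ≠ 0) (ht : ψ x < t)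
    (hg : DifferentiableAt ℝ g (rootCoord m ψ t x)) :
    HasDerivAt (fun s => g (rootCoord m ψ s x))
      ((m : ℝ)⁻¹ * scaledDeriv 0 g (rootCoord m ψ t x) / rootCoord m ψ t x 0 ^ m) t := by
  convert! hasDerivAt_comp_vecCons_rpow hm ((hasDerivAt_id t).sub_const (ψ x))
    (hasDerivAt_const t x) (sub_pos.2 ht) rfl hg using 1
  simp [rootCoord]

lemma hasDerivAt_comp_rootCoord_space (hm : m ≠ 0) (ht : ψ x < t) (hψ : DifferentiableAt ℝ ψ x)
    (hg : DifferentiableAt ℝ g (rootCoord m ψ t x)) (i : Fin n) :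
    HasDerivAt (fun s => g (rootCoord m ψ t (Function.update x i s)))
      (partialDeriv i.succ g (rootCoord m ψ t x) - gradp ψ x i *
        ((m : ℝ)⁻¹ * scaledDeriv 0 g (rootCoord m ψ t x) / rootCoord m ψ t x 0 ^ m)) (x i) := by
  have hψ' := (hasDerivAt_partialDeriv i hψ).const_sub t
  convert! hasDerivAt_comp_vecCons_rpow hm hψ' (hasDerivAt_update x i (x i)) (by simpa using ht)
    (by rw [Function.update_eq_self, rootCoord]) hg using 1
  simp [gradp_eq_partialDeriv hψ, Pi.single_apply]
  ring

lemma ptd_eq_of_eventuallyEq_comp_rootCoord {u : ℝ → (Fin n → ℝ) → ℝ}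
    (hu : ∀ᶠ p in 𝓝 (t, x), u p.1 p.2 = g (rootCoord m ψ p.1 p.2)) (hm : m ≠ 0) (ht : ψ x < t)
    (hg : DifferentiableAt ℝ g (rootCoord m ψ t x)) :
    ptd u t x = (m : ℝ)⁻¹ * scaledDeriv 0 g (rootCoord m ψ t x) / rootCoord m ψ t x 0 ^ m := by
  have hline : (fun s => u s x) =ᶠ[𝓝 t] fun s => g (rootCoord m ψ s x) :=
    (Continuous.prodMk_left x).continuousAt.eventually hu
  exact hline.deriv_eq.trans (hasDerivAt_comp_rootCoord_time hm ht hg).deriv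

lemma pxd_eq_of_eventuallyEq_comp_rootCoord {u : ℝ → (Fin n → ℝ) → ℝ}
    (hu : ∀ᶠ p in 𝓝 (t, x), u p.1 p.2 = g (rootCoord m ψ p.1 p.2)) (hm : m ≠ 0) (ht : ψ x < t)
    (hψ : DifferentiableAt ℝ ψ x) (hg : DifferentiableAt ℝ g (rootCoord m ψ t x)) (i : Fin n) :
    pxd i u t x = partialDeriv i.succ g (rootCoord m ψ t x) - gradp ψ x i *
      ((m : ℝ)⁻¹ * scaledDeriv 0 g (rootCoord m ψ t x) / rootCoord m ψ t x 0 ^ m) := by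
  have hcont : Continuous fun s : ℝ => (t, Function.update x i s) := by fun_prop
  have hline : (fun s => u t (Function.update x i s)) =ᶠ[𝓝 (x i)]
      fun s => g (rootCoord m ψ t (Function.update x i s)) :=
    (hcont.tendsto' _ (t, x) (by simp)).eventually hu
  exact hline.deriv_eq.trans (hasDerivAt_comp_rootCoord_space hm ht hψ hg i).deriv

end RootCoordinates

section InvMul

open Topology

variable {𝕜 : Type*} [RCLike 𝕜] {n : ℕ} {p : (Fin (n + 1) → 𝕜) → 𝕜} {y : Fin (n + 1) → 𝕜}

lemma differentiableAt_inv_mul (hp : DifferentiableAt 𝕜 p y) (hy : y 0 ≠ 0) :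
    DifferentiableAt 𝕜 (fun y => (y 0)⁻¹ * p y) y := by
  fun_prop (disch := exact hy)

lemma scaledDeriv_inv_mul (hp : DifferentiableAt 𝕜 p y) (hy : y 0 ≠ 0) (μ : Fin (n + 1)) :
    scaledDeriv μ (fun y => (y 0)⁻¹ * p y) y =
      (y 0)⁻¹ * (scaledDeriv μ p y - if μ = 0 then p y else 0) := by
  have hcoord : ContinuousAt (fun y : Fin (n + 1) → 𝕜 => y 0) y := continuousAt_apply 0 y
  have hfactor : p =ᶠ[𝓝 y] fun y => y 0 ^ 1 * ((y 0)⁻¹ * p y) := by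
    filter_upwards [hcoord.eventually_ne hy] with z hz
    field_simp
  rw [(scaledDeriv_congr μ hfactor).self_of_nhds, scaledDeriv_fun_mul μ (by fun_prop)
    (differentiableAt_inv_mul hp hy), scaledDeriv_coord_zero_pow]
  split_ifs with hμ <;> field_simp <;> simp

end InvMul

section RootCoordinatesInvMul

open Topology

variable {n m : ℕ} {ψ : (Fin n → ℝ) → ℝ} {t : ℝ} {x : Fin n → ℝ}

lemma ptd_inv_mul {u : ℝ → (Fin n → ℝ) → ℝ} {p : (Fin (n + 1) → ℝ) → ℝ}
    (hu : ∀ᶠ q in 𝓝 (t, x),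
      u q.1 q.2 = (rootCoord m ψ q.1 q.2 0)⁻¹ * p (rootCoord m ψ q.1 q.2))
    (hm : m ≠ 0) (ht : ψ x < t) (hp : DifferentiableAt ℝ p (rootCoord m ψ t x)) :
    ptd u t x = (m : ℝ)⁻¹ * (scaledDeriv 0 p (rootCoord m ψ t x) - p (rootCoord m ψ t x)) /
      rootCoord m ψ t x 0 ^ (m + 1) := by
  have hσ := (rootCoord_zero_pos m ht).ne'
  rw [ptd_eq_of_eventuallyEq_comp_rootCoord hu hm ht (differentiableAt_inv_mul hp hσ),
    scaledDeriv_inv_mul hp hσ, if_pos rfl]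
  field_simp
  ring

lemma pxd_inv_mul {u : ℝ → (Fin n → ℝ) → ℝ} {p : (Fin (n + 1) → ℝ) → ℝ}
    (hu : ∀ᶠ q in 𝓝 (t, x),
      u q.1 q.2 = (rootCoord m ψ q.1 q.2 0)⁻¹ * p (rootCoord m ψ q.1 q.2))
    (hm : m ≠ 0) (ht : ψ x < t) (hψ : DifferentiableAt ℝ ψ x)
    (hp : DifferentiableAt ℝ p (rootCoord m ψ t x)) (i : Fin n) :
    pxd i u t x = scaledDeriv i.succ p (rootCoord m ψ t x) / rootCoord m ψ t x 0 ^ 2 -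
      gradp ψ x i * ((m : ℝ)⁻¹ * (scaledDeriv 0 p (rootCoord m ψ t x) - p (rootCoord m ψ t x)) /
        rootCoord m ψ t x 0 ^ (m + 1)) := by
  have hσ := (rootCoord_zero_pos m ht).ne'
  have hsucc := scaledDeriv_inv_mul hp hσ i.succ
  rw [if_neg i.succ_ne_zero, scaledDeriv, mul_comm, ← eq_div_iff hσ] at hsucc
  rw [pxd_eq_of_eventuallyEq_comp_rootCoord hu hm ht hψ (differentiableAt_inv_mul hp hσ),
    scaledDeriv_inv_mul hp hσ, hsucc, if_pos rfl]
  field_simp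
  ring

end RootCoordinatesInvMul

section AnsatzProfile

variable {n m : ℕ} {w : (Fin (n + 1) → ℝ) → ℝ} {y : Fin (n + 1) → ℝ}

/-- The ansatz `u = a σ^{m-1} + σ^m w(σ, x)` as a function of `y = (σ, x)`. -/
noncomputable def ansatzProfile (m : ℕ) (a : ℝ) (w : (Fin (n + 1) → ℝ) → ℝ)
    (y : Fin (n + 1) → ℝ) : ℝ :=
  a * y 0 ^ (m - 1) + y 0 ^ m * w y

lemma differentiableAt_ansatzProfile (m : ℕ) (a : ℝ) (hw : DifferentiableAt ℝ w y) :
    DifferentiableAt ℝ (ansatzProfile m a w) y := by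
  unfold ansatzProfile
  fun_prop

lemma scaledDeriv_zero_ansatzProfile (hm : m ≠ 0) (a : ℝ) (hw : DifferentiableAt ℝ w y) :
    scaledDeriv 0 (ansatzProfile m a w) y =
      m * y 0 ^ (m - 1) * ansatzTime m (a * (((m : ℝ) - 1) / m)) w y := by
  obtain ⟨k, rfl⟩ := Nat.exists_eq_succ_of_ne_zero hm
  unfold ansatzProfile ansatzTime ansatzCorrection
  rw [scaledDeriv_fun_add _ (by fun_prop) (by fun_prop), scaledDeriv_fun_mul _ (by fun_prop)
    (by fun_prop), scaledDeriv_fun_mul _ (by fun_prop) hw, scaledDeriv_fun_const,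
    scaledDeriv_coord_zero_pow, scaledDeriv_coord_zero_pow, if_pos rfl, if_pos rfl]
  simp only [Nat.succ_eq_add_one, Nat.add_sub_cancel]
  push_cast
  field_simp
  ring

lemma scaledDeriv_succ_ansatzProfile (m : ℕ) (a : ℝ) (hw : DifferentiableAt ℝ w y) (i : Fin n) :
    scaledDeriv i.succ (ansatzProfile m a w) y = y 0 ^ m * scaledDeriv i.succ w y := by
  unfold ansatzProfile
  rw [scaledDeriv_fun_add _ (by fun_prop) (by fun_prop), scaledDeriv_fun_mul _ (by fun_prop)
    (by fun_prop), scaledDeriv_fun_mul _ (by fun_prop) hw, scaledDeriv_fun_const,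
    scaledDeriv_coord_zero_pow, scaledDeriv_coord_zero_pow, if_neg i.succ_ne_zero,
    if_neg i.succ_ne_zero]
  ring

end AnsatzProfile

section AnsatzSolution

open Matrix Topology

variable {n m : ℕ} {a : ℝ} {ψ : (Fin n → ℝ) → ℝ} {t : ℝ} {x : Fin n → ℝ}
  {w : (Fin (n + 1) → ℝ) → ℝ}

/-- The function `u = a (t - ψ)^{(m-1)/m} + (t - ψ) w((t - ψ)^{1/m}, x)`, where `w` is regarded as a
function of one variable `y = (σ, x)`. -/
noncomputable def ansatzSolution (m : ℕ) (a : ℝ) (ψ : (Fin n → ℝ) → ℝ)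
    (w : (Fin (n + 1) → ℝ) → ℝ) (t : ℝ) (x : Fin n → ℝ) : ℝ :=
  a * (t - ψ x) ^ (((m : ℝ) - 1) / m) + (t - ψ x) * w (vecCons ((t - ψ x) ^ ((1 : ℝ) / m)) x)

lemma ansatzSolution_eq_ansatzProfile (hm : m ≠ 0) (a : ℝ) (w : (Fin (n + 1) → ℝ) → ℝ)
    (ht : ψ x ≤ t) : ansatzSolution m a ψ w t x = ansatzProfile m a w (rootCoord m ψ t x) := by
  rw [ansatzProfile, rootCoord_zero_pow hm ht, rootCoord_zero_pow_pred hm ht, ansatzSolution,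
    rootCoord]

lemma eventually_graph_lt (hψ : ContinuousAt ψ x) (ht : ψ x < t) :
    ∀ᶠ p : ℝ × (Fin n → ℝ) in 𝓝 (t, x), ψ p.2 < p.1 :=
  (hψ.comp (f := Prod.snd) (x := (t, x)) continuousAt_snd).eventually_lt continuousAt_fst ht

lemma eventually_ansatzSolution_eq_ansatzProfile (hm : m ≠ 0) (a : ℝ) (w : (Fin (n + 1) → ℝ) → ℝ)
    (hψ : ContinuousAt ψ x) (ht : ψ x < t) : ∀ᶠ p : ℝ × (Fin n → ℝ) in 𝓝 (t, x),
      ansatzSolution m a ψ w p.1 p.2 = ansatzProfile m a w (rootCoord m ψ p.1 p.2) :=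
  (eventually_graph_lt hψ ht).mono fun _ hp => ansatzSolution_eq_ansatzProfile hm a w hp.le

lemma analyticAt_ansatzSolution (m : ℕ) (a : ℝ) (hψ : AnalyticAt ℝ ψ x) (ht : ψ x < t)
    (hw : AnalyticAt ℝ w (rootCoord m ψ t x)) :
    AnalyticAt ℝ (fun p : ℝ × (Fin n → ℝ) => ansatzSolution m a ψ w p.1 p.2) (t, x) :=
  (analyticAt_const.mul (analyticAt_sub_rpow hψ ht _)).add <|
    (analyticAt_fst.sub (hψ.comp_of_eq analyticAt_snd rfl)).mul
      (hw.comp_of_eq (analyticAt_rootCoord m hψ ht) rfl)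

lemma ptd_ansatzSolution (hm : m ≠ 0) (hψ : ContinuousAt ψ x) (ht : ψ x < t)
    (hw : DifferentiableAt ℝ w (rootCoord m ψ t x)) :
    ptd (ansatzSolution m a ψ w) t x = (rootCoord m ψ t x 0)⁻¹ *
      ansatzTime m (a * (((m : ℝ) - 1) / m)) w (rootCoord m ψ t x) := by
  have hσ := (rootCoord_zero_pos m ht).ne'
  rw [ptd_eq_of_eventuallyEq_comp_rootCoord
    (eventually_ansatzSolution_eq_ansatzProfile hm a w hψ ht) hm ht
    (differentiableAt_ansatzProfile m a hw), scaledDeriv_zero_ansatzProfile hm a hw,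
    ← mul_pow_sub_one hm (rootCoord m ψ t x 0)]
  field_simp

lemma pxd_ansatzSolution (hm : m ≠ 0) (hψ : DifferentiableAt ℝ ψ x) (ht : ψ x < t)
    (hw : DifferentiableAt ℝ w (rootCoord m ψ t x)) (i : Fin n) :
    pxd i (ansatzSolution m a ψ w) t x = (rootCoord m ψ t x 0)⁻¹ *
      ansatzSpace m (a * (((m : ℝ) - 1) / m)) (fun y => gradp ψ (vecTail y)) i w
        (rootCoord m ψ t x) := by
  have hσ := (rootCoord_zero_pos m ht).ne'
  have hsucc := scaledDeriv_succ_ansatzProfile m a hw i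
  rw [scaledDeriv, mul_comm, ← eq_div_iff hσ] at hsucc
  rw [pxd_eq_of_eventuallyEq_comp_rootCoord
    (eventually_ansatzSolution_eq_ansatzProfile hm a w hψ.continuousAt ht) hm ht hψ
    (differentiableAt_ansatzProfile m a hw), scaledDeriv_zero_ansatzProfile hm a hw, hsucc,
    ansatzSpace, vecTail_rootCoord, ← mul_pow_sub_one hm (rootCoord m ψ t x 0)]
  field_simp
  ring

lemma cons_ptd_gradx_ansatzSolution (hm : m ≠ 0) (hψ : DifferentiableAt ℝ ψ x) (ht : ψ x < t)
    (hw : DifferentiableAt ℝ w (rootCoord m ψ t x)) :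
    (Fin.cons (ptd (ansatzSolution m a ψ w) t x) (gradx (ansatzSolution m a ψ w) t x) :
      Fin (n + 1) → ℝ) = fun k => (rootCoord m ψ t x 0)⁻¹ *
        ansatzGrad m (a * (((m : ℝ) - 1) / m)) (fun y => gradp ψ (vecTail y)) k w
          (rootCoord m ψ t x) := by
  ext k
  cases k using Fin.cases with
  | zero => exact ptd_ansatzSolution hm hψ.continuousAt ht hw
  | succ i => exact pxd_ansatzSolution hm hψ ht hw i

theorem ptd_ptd_sub_lapx_ansatzSolution_mul_pow (hm : m ≠ 0) (hψ : AnalyticAt ℝ ψ x)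
    (ht : ψ x < t) (hw : AnalyticAt ℝ w (rootCoord m ψ t x)) :
    (ptd (ptd (ansatzSolution m a ψ w)) t x - lapx (ansatzSolution m a ψ w) t x) *
        rootCoord m ψ t x 0 ^ (m + 1) =
      ansatzWave m (a * (((m : ℝ) - 1) / m)) (fun y => gradp ψ (vecTail y)) w
        (rootCoord m ψ t x) := by
  have hσ := (rootCoord_zero_pos m ht).ne'
  have hlt := eventually_graph_lt hψ.continuousAt ht
  have hψ' : ∀ᶠ p : ℝ × (Fin n → ℝ) in 𝓝 (t, x), AnalyticAt ℝ ψ p.2 :=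
    continuousAt_snd.eventually hψ.eventually_analyticAt
  have hw' := (continuousAt_rootCoord m hψ.continuousAt).eventually hw.eventually_analyticAt
  have hP (i : Fin n) : AnalyticAt ℝ (fun y => gradp ψ (vecTail y) i) (rootCoord m ψ t x) :=
    analyticAt_comp_vecTail (g := fun x => gradp ψ x i) (analyticAt_gradp hψ i)
  have htt := ptd_inv_mul (by
    filter_upwards [hlt, hψ', hw'] with p hp hψp hwp using
      ptd_ansatzSolution (a := a) hm hψp.continuousAt hp hwp.differentiableAt) hm ht
    (analyticAt_ansatzTime hw).differentiableAt
  have hxx (i : Fin n) := pxd_inv_mul (by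
    filter_upwards [hlt, hψ', hw'] with p hp hψp hwp using
      pxd_ansatzSolution (a := a) hm hψp.differentiableAt hp hwp.differentiableAt i) hm ht
    hψ.differentiableAt (analyticAt_ansatzSpace (hP i) hw).differentiableAt i
  have hpow : rootCoord m ψ t x 0 ^ (m + 1) =
      rootCoord m ψ t x 0 ^ (m - 1) * rootCoord m ψ t x 0 ^ 2 := by
    rw [← pow_add]
    congr 1
    lia
  rw [htt, lapx, ansatzWave, sub_mul, Finset.sum_mul, sub_eq_add_neg, ← Finset.sum_neg_distrib]
  congr 1
  · field_simp
  · refine Finset.sum_congr rfl fun i _ => ?_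
    rw [hxx, vecTail_rootCoord, sub_mul, div_mul_eq_mul_div, hpow]
    field_simp
    ring

lemma tendsto_ansatzSolution_div (hm : m ≠ 0) (ha : a ≠ 0) (hw : ContinuousAt w (vecCons 0 x)) :
    Tendsto (fun t => ansatzSolution m a ψ w t x / (a * (t - ψ x) ^ (((m : ℝ) - 1) / m)))
      (𝓝[>] ψ x) (𝓝 1) := by
  have hroot := tendsto_rootCoord hm ψ x
  have hlim : Tendsto (fun t => 1 + rootCoord m ψ t x 0 * w (rootCoord m ψ t x) / a)
      (𝓝[>] ψ x) (𝓝 1) := by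
    simpa using (((hroot.apply_nhds 0).mul (hw.tendsto.comp hroot)).div_const a).const_add 1
  refine hlim.congr' ?_
  filter_upwards [self_mem_nhdsWithin] with t ht
  have hσ := (rootCoord_zero_pos m ht).ne'
  rw [ansatzSolution_eq_ansatzProfile hm a w (le_of_lt ht), ansatzProfile,
    ← rootCoord_zero_pow_pred hm (le_of_lt ht), ← mul_pow_sub_one hm (rootCoord m ψ t x 0)]
  field_simp

lemma tendsto_ptd_ansatzSolution_div (hm : m ≠ 0) (ha : a * (((m : ℝ) - 1) / m) ≠ 0)
    (hψ : ContinuousAt ψ x) (hw : AnalyticAt ℝ w (vecCons 0 x)) :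
    Tendsto (fun t => ptd (ansatzSolution m a ψ w) t x /
      (a * (((m : ℝ) - 1) / m) * (t - ψ x) ^ (-(1 : ℝ) / m))) (𝓝[>] ψ x) (𝓝 1) := by
  have hroot := tendsto_rootCoord hm ψ x
  have hlim : Tendsto (fun t => ansatzTime m (a * (((m : ℝ) - 1) / m)) w (rootCoord m ψ t x) /
      (a * (((m : ℝ) - 1) / m))) (𝓝[>] ψ x) (𝓝 1) := by
    have htime := (analyticAt_ansatzTime (m := m) (A := a * (((m : ℝ) - 1) / m))
      hw).continuousAt.tendsto.comp hroot
    simpa [ansatzTime, div_self ha] using htime.div_const (a * (((m : ℝ) - 1) / m))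
  refine hlim.congr' ?_
  filter_upwards [self_mem_nhdsWithin, hroot.eventually hw.eventually_analyticAt] with t ht hwt
  have hσ := (rootCoord_zero_pos m ht).ne'
  rw [ptd_ansatzSolution hm hψ ht hwt.differentiableAt, ← rootCoord_zero_inv (le_of_lt ht)]
  field_simp

end AnsatzSolution

section WaveEquation

open Matrix Topology

variable {n m : ℕ} {U : Set (ℝ × (Fin n → ℝ))}
  {F : ℕ → ℝ → (Fin n → ℝ) → ℝ → (Fin n → ℝ) → ℝ} {ψ : (Fin n → ℝ) → ℝ}

lemma exists_coeff_of_homogPoly {N : ℕ} (hF : ∀ l ≤ N, HomogPoly l U (F l)) :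
    ∃ c : (l : ℕ) → (Fin l → Fin (n + 1)) → ℝ → (Fin n → ℝ) → ℝ,
      (∀ l ≤ N, ∀ μ, AnalyticOnNhd ℝ (fun p : ℝ × (Fin n → ℝ) => c l μ p.1 p.2) U) ∧
      ∀ l ≤ N, ∀ t x τ ξ, F l t x τ ξ = homogForm (fun μ => c l μ t x) (Fin.cons τ ξ) := by
  choose! c hc hFc using hF
  exact ⟨c, hc, hFc⟩

lemma homogForm_conormal {l : ℕ} (c : (Fin l → Fin (n + 1)) → ℝ) (p : Fin n → ℝ) :
    homogForm c (conormal p) = (-1) ^ l * homogForm c (Fin.cons (-1) p) := by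
  rw [← homogForm_const_mul]
  congr 1
  ext k
  cases k using Fin.cases <;> simp [conormal]

lemma neg_one_pow_mul_ansatz_coeff (hm : m ≠ 0) (a z : ℝ) :
    (-1) ^ (m + 1) * z * (m * (a * (((m : ℝ) - 1) / m)) ^ m) =
      -((-(m : ℝ) + 1) ^ m * a ^ m / (m : ℝ) ^ (m - 1) * z) := by
  have hsign : (-(m : ℝ) + 1) ^ m = (-1) ^ m * ((m : ℝ) - 1) ^ m := by
    rw [← mul_pow]
    ring
  rw [hsign, mul_pow, div_pow, ← mul_pow_sub_one hm (m : ℝ)]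
  field_simp
  ring

theorem solvesWaveSum_ansatzSolution {c : (l : ℕ) → (Fin l → Fin (n + 1)) → ℝ → (Fin n → ℝ) → ℝ}
    {a : ℝ} {w : (Fin (n + 1) → ℝ) → ℝ} {S : Set (ℝ × (Fin n → ℝ))} (hm : m ≠ 0)
    (hFc : ∀ l ≤ m + 1, ∀ t x τ ξ, F l t x τ ξ = homogForm (fun μ => c l μ t x) (Fin.cons τ ξ))
    (hψ : ∀ p ∈ S, AnalyticAt ℝ ψ p.2) (ht : ∀ p ∈ S, ψ p.2 < p.1)
    (hw : ∀ p ∈ S, AnalyticAt ℝ w (rootCoord m ψ p.1 p.2))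
    (heq : ∀ p ∈ S,
      SolvesAnsatzEquation m (a * (((m : ℝ) - 1) / m)) ψ c w (rootCoord m ψ p.1 p.2)) :
    SolvesWaveSum m F (ansatzSolution m a ψ w) S := by
  intro t x hp
  have hσ := (rootCoord_zero_pos m (ht _ hp)).ne'
  have htime : ψ x + rootCoord m ψ t x 0 ^ m = t := by
    rw [rootCoord_zero_pow hm (ht _ hp).le, add_sub_cancel]
  refine mul_right_cancel₀ (pow_ne_zero (m + 1) hσ) ?_
  rw [ptd_ptd_sub_lapx_ansatzSolution_mul_pow hm (hψ _ hp) (ht _ hp) (hw _ hp),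
    show ansatzWave _ _ _ _ _ = _ from heq _ hp, ansatzNonlinearity_apply, Finset.sum_mul]
  refine Finset.sum_congr rfl fun l hl => ?_
  have hl : l ≤ m + 1 := Nat.lt_succ_iff.1 (Finset.mem_range.1 hl)
  rw [hFc l hl, cons_ptd_gradx_ansatzSolution hm (hψ _ hp).differentiableAt (ht _ hp)
    (hw _ hp).differentiableAt, homogForm_const_mul, vecTail_rootCoord, htime,
    ← pow_sub_mul_pow _ hl, inv_pow]
  field_simp

lemma isOpen_setOf_rootCoord_mem {W : Set (Fin (n + 1) → ℝ)} (hU : IsOpen U) (hW : IsOpen W)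
    (hψ : ∀ p ∈ U, rootCoord m ψ p.1 p.2 ∈ W → ContinuousAt ψ p.2) :
    IsOpen {p ∈ U | rootCoord m ψ p.1 p.2 ∈ W} :=
  isOpen_iff_mem_nhds.2 fun p hp => inter_mem (hU.mem_nhds hp.1) <|
    (continuousAt_rootCoord m (hψ p hp.1 hp.2)).eventually_mem (hW.mem_nhds hp.2)

end WaveEquation

/-- Solutions with fractional-power singularities for wave equations with nonlinearity of
degree `m+1` in the derivatives: `u = a(t-ψ)^{(m-1)/m} + (t-ψ)·w((t-ψ)^{1/m}, x)` with `w`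
analytic, `u` vanishes and `∂_t u` blows up along `Σ = {t = ψ(x)}`. -/
theorem stmt3 {n : ℕ} (m : ℕ) (hm : 2 ≤ m)
    (U : Set (ℝ × (Fin n → ℝ))) (hU : IsOpen U)
    (F : ℕ → ℝ → (Fin n → ℝ) → ℝ → (Fin n → ℝ) → ℝ)
    (hF : ∀ l ≤ m + 1, HomogPoly l U (F l))
    (ψ : (Fin n → ℝ) → ℝ) (hψ : AnalyticOnNhd ℝ ψ {x | (ψ x, x) ∈ U})
    (a : ℝ) (ha : a ≠ 0)
    (hcond1 : ∀ x, (ψ x, x) ∈ U →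
      1 - ∑ i, gradp ψ x i ^ 2 ≠ 0 ∧
      1 - ∑ i, gradp ψ x i ^ 2 =
        ((-(m : ℝ) + 1) ^ m * a ^ m / (m : ℝ) ^ (m - 1)) *
          F (m + 1) (ψ x) x (-1) (gradp ψ x))
    (hcond2 : ∀ x, (ψ x, x) ∈ U → F m (ψ x) x (-1) (gradp ψ x) = 0) :
    ∃ Ω : Set (ℝ × (Fin n → ℝ)), IsOpen Ω ∧ {p ∈ U | p.1 = ψ p.2} ⊆ Ω ∧ Ω ⊆ U ∧
    ∃ W : Set (ℝ × (Fin n → ℝ)), IsOpen W ∧ (∀ x, (ψ x, x) ∈ U → (0, x) ∈ W) ∧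
    ∃ w : ℝ → (Fin n → ℝ) → ℝ,
      AnalyticOnNhd ℝ (fun p : ℝ × (Fin n → ℝ) => w p.1 p.2) W ∧
      AnalyticOnNhd ℝ
        (fun p : ℝ × (Fin n → ℝ) =>
          a * (p.1 - ψ p.2) ^ (((m : ℝ) - 1) / m)
            + (p.1 - ψ p.2) * w ((p.1 - ψ p.2) ^ ((1 : ℝ) / m)) p.2)
        (Ω ∩ {p | ψ p.2 < p.1}) ∧
      SolvesWaveSum m F
        (fun t x => a * (t - ψ x) ^ (((m : ℝ) - 1) / m)
          + (t - ψ x) * w ((t - ψ x) ^ ((1 : ℝ) / m)) x)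
        (Ω ∩ {p | ψ p.2 < p.1}) ∧
      (∀ x, (ψ x, x) ∈ U →
        Tendsto (fun t =>
            (a * (t - ψ x) ^ (((m : ℝ) - 1) / m)
              + (t - ψ x) * w ((t - ψ x) ^ ((1 : ℝ) / m)) x)
              / (a * (t - ψ x) ^ (((m : ℝ) - 1) / m)))
          (nhdsWithin (ψ x) (Set.Ioi (ψ x))) (nhds 1)) ∧
      (∀ x, (ψ x, x) ∈ U →
        Tendsto (fun t =>
            ptd (fun t x => a * (t - ψ x) ^ (((m : ℝ) - 1) / m)
              + (t - ψ x) * w ((t - ψ x) ^ ((1 : ℝ) / m)) x) t x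
              / (a * (((m : ℝ) - 1) / m) * (t - ψ x) ^ (-(1 : ℝ) / m)))
          (nhdsWithin (ψ x) (Set.Ioi (ψ x))) (nhds 1)) := by
  have hm0 : m ≠ 0 := by lia
  have hA : a * (((m : ℝ) - 1) / m) ≠ 0 :=
    mul_ne_zero ha (div_ne_zero (sub_ne_zero.2 (by exact_mod_cast (by lia : m ≠ 1)))
      (by exact_mod_cast hm0))
  obtain ⟨c, hc, hFc⟩ := exists_coeff_of_homogPoly hF
  obtain ⟨W, hW, hgraph, hWU, w, hw, heq⟩ := exists_analyticOnNhd_solvesAnsatzEquation hm hA hU hc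
    hψ (fun x hx => (hcond1 x hx).1)
    (fun x hx => by rw [homogForm_conormal, ← hFc m m.le_succ, hcond2 x hx, mul_zero])
    (fun x hx => by
      rw [homogForm_conormal, ← hFc _ le_rfl, neg_one_pow_mul_ansatz_coeff hm0, ← (hcond1 x hx).2])
  have hψW (p : ℝ × (Fin n → ℝ)) (hp : rootCoord m ψ p.1 p.2 ∈ W) : AnalyticAt ℝ ψ p.2 :=
    hψ _ (hWU _ hp)
  refine ⟨{p ∈ U | rootCoord m ψ p.1 p.2 ∈ W},
    isOpen_setOf_rootCoord_mem hU hW fun p _ hp => (hψW p hp).continuousAt, ?_, fun p hp => hp.1,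
    {p | Matrix.vecCons p.1 p.2 ∈ W}, hW.preimage (by fun_prop), hgraph,
    fun s x => w (Matrix.vecCons s x),
    fun p hp => (hw _ hp).comp_of_eq (analyticAt_vecCons analyticAt_fst analyticAt_snd) rfl,
    fun p hp => analyticAt_ansatzSolution m a (hψW p hp.1.2) hp.2 (hw _ hp.1.2),
    solvesWaveSum_ansatzSolution hm0 hFc (fun p hp => hψW p hp.1.2) (fun p hp => hp.2)
      (fun p hp => hw _ hp.1.2) (fun p hp => heq _ hp.1.2),
    fun x hx => tendsto_ansatzSolution_div hm0 ha (hw _ (hgraph x hx)).continuousAt,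
    fun x hx => tendsto_ptd_ansatzSolution_div hm0 hA (hψ x hx).continuousAt (hw _ (hgraph x hx))⟩
  rintro ⟨t, x⟩ ⟨hp, ht : t = ψ x⟩
  subst ht
  exact ⟨hp, by simpa only [Set.mem_ofPred_eq, rootCoord_graph hm0] using hgraph x hp⟩
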